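/- Let n ≥ 2 be a natural number such that n is not a power of a prime and not twice a power of a prime (i.e., for every prime p and every k ≥ 1, n ≠ p^k and n ≠ 2·p^k). Then the Schwartz genus of the quotient covering map q_n : F(ℂ,n) → F(ℂ,n)/Σ_n is strictly less than n; that is, there exist n−1 open subsets U_1, …, U_{n−1} covering F(ℂ,n)/Σ_n such that for each i the restriction of q_n over U_i is a trivial covering: there is a discrete topological space D_i and a homeomorphism h_i : q_n^{-1}(U_i) → U_i × D_i with pr₁ ∘ h_i = q_n on q_n^{-1}(U_i). -/

import Mathlib

noncomputable section

/-- The ordered configuration space of `n` distinct points in the plane `ℂ`. -/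
abbrev ConfigSpace (n : ℕ) : Type := { f : Fin n → ℂ // Function.Injective f }

/-- The action of a permutation `σ` on the configuration space, `σ • f = f ∘ σ⁻¹`. -/
def configPermMap (n : ℕ) (σ : Equiv.Perm (Fin n)) : ConfigSpace n → ConfigSpace n :=
  fun f => ⟨f.1 ∘ ⇑σ⁻¹, f.2.comp (Equiv.injective _)⟩

/-- The orbit equivalence relation of the `Σ_n`-action on `F(ℂ,n)`. -/
def configSetoid (n : ℕ) : Setoid (ConfigSpace n) where
  r x y := ∃ σ : Equiv.Perm (Fin n), configPermMap n σ x = y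
  iseqv := by
    constructor
    · intro x
      exact ⟨1, Subtype.ext (by funext i; simp [configPermMap])⟩
    · rintro x y ⟨σ, rfl⟩
      exact ⟨σ⁻¹, Subtype.ext (by funext i; simp [configPermMap])⟩
    · rintro x y z ⟨σ, rfl⟩ ⟨τ, rfl⟩
      exact ⟨τ * σ, Subtype.ext (by funext i; simp [configPermMap, mul_inv_rev])⟩

/-- The quotient `F(ℂ,n)/Σ_n`, with the quotient topology. -/
abbrev ConfigQuotient (n : ℕ) : Type := Quotient (configSetoid n)

/-- The quotient (covering) map `q_n : F(ℂ,n) → F(ℂ,n)/Σ_n`. -/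
def configProj (n : ℕ) : ConfigSpace n → ConfigQuotient n := Quotient.mk _

/-- The assertion that the Schwartz genus of the covering `q_n : F(ℂ,n) → F(ℂ,n)/Σ_n` is
at most `t`: there are `t` open sets covering the base, over each of which `q_n` is a
trivial covering (i.e. the preimage is homeomorphic, over the base, to a product of the
open set with a discrete space). -/
def SchwartzGenusLE (n t : ℕ) : Prop :=
  ∃ U : Fin t → Set (ConfigQuotient n),
    (∀ i, IsOpen (U i)) ∧ (⋃ i, U i) = Set.univ ∧
      ∀ i : Fin t, ∃ (D : Type) (τ : TopologicalSpace D),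
        @DiscreteTopology D τ ∧
          ∃ e : @Homeomorph { x : ConfigSpace n // configProj n x ∈ U i } (↥(U i) × D)
              inferInstance (@instTopologicalSpaceProd _ _ _ τ),
            ∀ x, ((e.toEquiv x).1 : ConfigQuotient n) = configProj n x.1

section
namespace SG

theorem exists_choose_comb (n : ℕ) (hn : 2 ≤ n)
    (h : ∀ p k : ℕ, p.Prime → 1 ≤ k → n ≠ p ^ k) :
    ∃ w : ℕ → ℤ, ∑ k ∈ Finset.Ioo 0 n, w k * (n.choose k : ℤ) = 1 := by
  classical
  let v : Finset.Ioo 0 n → ℤ := fun k => (n.choose k.1 : ℤ)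
  by_cases hT : (1 : ℤ) ∈ Ideal.span (Set.range v)
  · rw [Ideal.mem_span_range_iff_exists_fun] at hT
    obtain ⟨c, hc⟩ := hT
    refine ⟨fun k => if hk : k ∈ Finset.Ioo 0 n then c ⟨k, hk⟩ else 0, ?_⟩
    rw [← hc, ← Finset.sum_coe_sort]
    refine Finset.sum_congr rfl fun k _ => ?_
    simp only [v, k.2, dif_pos]
  · exfalso
    obtain ⟨d, hd⟩ : ∃ d : ℤ, Ideal.span (Set.range v) = Ideal.span {d} :=
      ⟨_, (Ideal.span_singleton_generator _).symm⟩
    rw [hd, Ideal.mem_span_singleton] at hT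
    have hd1 : d.natAbs ≠ 1 := by
      intro h1
      exact hT ((Int.isUnit_iff_natAbs_eq.2 h1).dvd)
    obtain ⟨p, hp, hpd⟩ := Nat.exists_prime_and_dvd hd1
    have := Fact.mk hp
    have hdiv : ∀ k ∈ Finset.Ioo 0 n, p ∣ n.choose k := by
      intro k hk
      have : v ⟨k, hk⟩ ∈ Ideal.span (Set.range v) := Ideal.subset_span ⟨_, rfl⟩
      rw [hd, Ideal.mem_span_singleton] at this
      have h2 : (p : ℤ) ∣ d := Int.natCast_dvd.2 hpd
      have h3 : (p : ℤ) ∣ (n.choose k : ℤ) := h2.trans this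
      exact_mod_cast h3
    obtain ⟨e, r, hr, hner⟩ := Nat.exists_eq_pow_mul_and_not_dvd (n := n) (by omega) p hp.ne_one
    have key : ∀ e r : ℕ, (p ^ e * r).choose (p ^ e) ≡ r [MOD p] := by
      intro e
      induction e with
      | zero => intro r; simp; rfl
      | succ e ih =>
        intro r
        have := Choose.choose_modEq_choose_mod_mul_choose_div_nat (p := p) (n := p ^ (e+1) * r) (k := p ^ (e+1))
        refine this.trans ?_
        have hp0 := hp.pos
        have e1 : p ^ (e+1) * r = p * (p ^ e * r) := by ring
        have e2 : p ^ (e+1) = p * p ^ e := by ring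
        rw [e1, e2, Nat.mul_mod_right, Nat.mul_mod_right, Nat.mul_div_cancel_left _ hp0,
          Nat.mul_div_cancel_left _ hp0]
        simpa using ih r
    by_cases hr1 : r = 1
    · subst hr1
      have : e ≠ 0 := by rintro rfl; simp at hner; omega
      exact h p e hp (by omega) (by simpa using hner)
    · have hr0 : r ≠ 0 := by rintro rfl; simp at hr
      have hpe : 0 < p ^ e := Nat.pow_pos hp.pos
      have : p ∣ n.choose (p ^ e) := hdiv _ (by
        rw [Finset.mem_Ioo]; refine ⟨hpe, ?_⟩; rw [hner]; nlinarith [show 2 ≤ r by omega])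
      have h3 := key e r
      rw [← hner] at h3
      exact hr ((Nat.modEq_zero_iff_dvd.1 (h3.symm.trans (Nat.modEq_zero_iff_dvd.2 this))))

/-- Nonconstant two-colourings. -/
abbrev Col (n : ℕ) : Type := {s : Fin n → Bool // ∃ i j, s i ≠ s j}

def colCard {n : ℕ} (s : Fin n → Bool) : ℕ := (Finset.univ.filter fun i => s i = true).card

theorem colCard_comp {n : ℕ} (s : Fin n → Bool) (g : Equiv.Perm (Fin n)) :
    colCard (s ∘ g) = colCard s := by
  unfold colCard
  refine Finset.card_bij (fun i _ => g i) ?_ ?_ ?_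
  · intro i hi; simpa using hi
  · intro i _ j _ hij; exact g.injective hij
  · intro i hi; exact ⟨g.symm i, by simpa using hi, by simp⟩

theorem exists_weights (n : ℕ) (hn : 2 ≤ n)
    (h : ∀ p k : ℕ, p.Prime → 1 ≤ k → n ≠ p ^ k) :
    ∃ w : ℕ → ℤ, ∑ s : Col n, w (colCard s.1) = 1 := by
  classical
  obtain ⟨w, hw⟩ := exists_choose_comb n hn h
  refine ⟨w, ?_⟩
  rw [← hw]
  have hmaps : ∀ s ∈ (Finset.univ : Finset (Col n)), colCard s.1 ∈ Finset.Ioo 0 n := by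
    rintro ⟨s, i, j, hij⟩ h0
    rw [Finset.mem_Ioo]
    clear h0
    show 0 < colCard s ∧ colCard s < n
    constructor
    · rw [colCard, Finset.card_pos]
      by_cases hi : s i = true
      · exact ⟨i, by simp [hi]⟩
      · exact ⟨j, by simp; revert hij hi; cases s i <;> cases s j <;> decide⟩
    · have : (Finset.univ.filter fun i => s i = true) ⊂ Finset.univ := by
        rw [Finset.filter_ssubset]
        by_cases hi : s i = true
        · exact ⟨j, by simp; revert hij hi; cases s i <;> cases s j <;> decide⟩
        · exact ⟨i, by simp [hi]⟩
      have h5 := Finset.card_lt_card this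
      rw [Finset.card_univ, Fintype.card_fin] at h5
      exact h5
  rw [← Finset.sum_fiberwise_of_maps_to hmaps]
  refine Finset.sum_congr rfl fun k hk => ?_
  rw [Finset.sum_congr rfl (g := fun _ => w k) (by intro s hs; rw [(Finset.mem_filter.1 hs).2])]
  rw [Finset.sum_const, nsmul_eq_mul, mul_comm]
  congr 2
  have : n.choose k = (Finset.powersetCard k (Finset.univ : Finset (Fin n))).card := by simp
  rw [this]
  rw [Finset.mem_Ioo] at hk
  refine Finset.card_bij (fun s _ => Finset.univ.filter fun i => s.1 i = true) ?_ ?_ ?_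
  · intro s hs
    simp only [Finset.mem_filter, Finset.mem_univ, true_and] at hs
    simp only [Finset.mem_powersetCard, Finset.subset_univ, true_and]
    exact hs
  · intro s _ t _ hst
    apply Subtype.ext; funext i
    have := congrArg (fun T => i ∈ T) hst
    simp at this
    cases hsi : s.1 i <;> cases hti : t.1 i <;> simp_all
  · intro T hT
    rw [Finset.mem_powersetCard] at hT
    have h1 : ∃ i, i ∈ T := by
      rw [← Finset.Nonempty, ← Finset.card_pos]; omega
    have h2 : ∃ i, i ∉ T := by
      by_contra hcon
      push Not at hcon
      have : T = Finset.univ := Finset.eq_univ_iff_forall.2 hcon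
      rw [this] at hT; simp at hT; omega
    obtain ⟨i, hi⟩ := h1
    obtain ⟨j, hj⟩ := h2
    refine ⟨⟨fun i => decide (i ∈ T), i, j, by simp [hi, hj]⟩, ?_, ?_⟩
    · simp [colCard, hT.2]
    · ext; simp

end SG

end

section
namespace SG

@[ext] structure Strat (n : ℕ) where
  L : Fin n → Fin n → Prop
  B : Fin n → Fin n → Prop
  tot : ∀ i j, i ≠ j → L i j ∨ L j i ∨ B i j ∨ B j i
  Li : ∀ i, ¬ L i i
  Bi : ∀ i, ¬ B i i
  LB : ∀ i j, L i j → ¬ B i j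
  LB2 : ∀ i j, L i j → ¬ B j i
  LL : ∀ i j k, L i j → L j k → L i k
  BB : ∀ i j k, B i j → B j k → B i k
  LBt : ∀ i j k, L i j → B j k → L i k
  BLt : ∀ i j k, B i j → L j k → L i k

variable {n : ℕ}

instance : Finite (Strat n) := by
  apply Finite.of_injective (β := (Fin n → Fin n → Prop) × (Fin n → Fin n → Prop))
    (fun q => (q.L, q.B))
  intro q q' h
  simp only [Prod.mk.injEq] at h
  exact Strat.ext h.1 h.2

instance : Fintype (Strat n) := Fintype.ofFinite _

namespace Strat

theorem Lasym (q : Strat n) {i j} (h : q.L i j) : ¬ q.L j i := fun h' => q.Li i (q.LL _ _ _ h h')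
theorem Basym (q : Strat n) {i j} (h : q.B i j) : ¬ q.B j i := fun h' => q.Bi i (q.BB _ _ _ h h')

instance : PartialOrder (Strat n) where
  le q q' := (∀ i j, q'.L i j → q.L i j) ∧ (∀ i j, q.B i j → q'.B i j)
  le_refl q := ⟨fun _ _ h => h, fun _ _ h => h⟩
  le_trans q q' q'' h h' := ⟨fun i j x => h.1 _ _ (h'.1 _ _ x), fun i j x => h'.2 _ _ (h.2 _ _ x)⟩
  le_antisymm q q' h h' := by
    ext i j
    · exact ⟨h'.1 _ _, h.1 _ _⟩
    · exact ⟨h.2 _ _, h'.2 _ _⟩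

theorem le_def {q q' : Strat n} : q ≤ q' ↔ (∀ i j, q'.L i j → q.L i j) ∧ (∀ i j, q.B i j → q'.B i j) :=
  Iff.rfl

instance : MulAction (Equiv.Perm (Fin n)) (Strat n) where
  smul g q :=
    { L := fun i j => q.L (g⁻¹ i) (g⁻¹ j)
      B := fun i j => q.B (g⁻¹ i) (g⁻¹ j)
      tot := fun i j h => q.tot _ _ (by simpa using h)
      Li := fun i => q.Li _
      Bi := fun i => q.Bi _
      LB := fun i j => q.LB _ _
      LB2 := fun i j => q.LB2 _ _
      LL := fun i j k => q.LL _ _ _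
      BB := fun i j k => q.BB _ _ _
      LBt := fun i j k => q.LBt _ _ _
      BLt := fun i j k => q.BLt _ _ _ }
  one_smul q := rfl
  mul_smul g h q := by
    apply Strat.ext <;> · funext i j; simp [HSMul.hSMul, mul_inv_rev]

theorem smul_L (g : Equiv.Perm (Fin n)) (q : Strat n) (i j) : (g • q).L i j = q.L (g⁻¹ i) (g⁻¹ j) := rfl
theorem smul_B (g : Equiv.Perm (Fin n)) (q : Strat n) (i j) : (g • q).B i j = q.B (g⁻¹ i) (g⁻¹ j) := rfl

theorem smul_le (g : Equiv.Perm (Fin n)) {q q' : Strat n} (h : q ≤ q') : g • q ≤ g • q' :=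
  ⟨fun _ _ x => h.1 _ _ x, fun _ _ x => h.2 _ _ x⟩

open Classical in
def mset (s : Fin n → Bool) (q : Strat n) : Finset (Fin n) :=
  Finset.univ.filter fun i => ∃ j, s j = s i ∧ q.B j i

theorem mem_mset {s : Fin n → Bool} {q : Strat n} {i} : i ∈ mset s q ↔ ∃ j, s j = s i ∧ q.B j i := by
  simp [mset]

def cc (s : Fin n → Bool) (q : Strat n) : ℕ := (mset s q).card

theorem mset_mono (s : Fin n → Bool) {q q' : Strat n} (h : q ≤ q') : mset s q ⊆ mset s q' := by
  intro i; simp only [mem_mset]; rintro ⟨j, h1, h2⟩; exact ⟨j, h1, h.2 _ _ h2⟩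

theorem cc_mono (s : Fin n → Bool) {q q' : Strat n} (h : q ≤ q') : cc s q ≤ cc s q' :=
  Finset.card_le_card (mset_mono s h)

def zc : Fin n → Bool := fun _ => false

theorem cc_le_rank (s : Fin n → Bool) (q : Strat n) : cc s q ≤ cc zc q :=
  Finset.card_le_card (by
    intro i; simp only [mem_mset]; rintro ⟨j, h1, h2⟩; exact ⟨j, rfl, h2⟩)

theorem exists_min (q : Strat n) (P : Fin n → Prop) (i : Fin n) (hi : P i) :
    ∃ k, P k ∧ ∀ j, P j → ¬ q.B j k := by
  have : IsTrans (Fin n) q.B := ⟨q.BB⟩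
  have : Std.Irrefl q.B := ⟨q.Bi⟩
  obtain ⟨k, hk, hk'⟩ := (Finite.wellFounded_of_trans_of_irrefl q.B).has_min {i | P i} ⟨i, hi⟩
  exact ⟨k, hk, fun j hj => hk' j hj⟩

theorem key (s : Fin n → Bool) {q q' : Strat n} (h : q ≤ q') (hc : cc s q = cc s q')
    {i j} (hs : s i = s j) (hB : q'.B i j) : q.B i j := by
  have hM : mset s q = mset s q' := Finset.eq_of_subset_of_card_le (mset_mono s h) hc.ge
  have hex : ∀ i, ∃ k, s k = s i ∧ (k = i ∨ q.B k i) ∧ k ∉ mset s q' := by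
    intro i
    obtain ⟨k, ⟨h1, h2⟩, h3⟩ := q.exists_min (fun k => s k = s i ∧ (k = i ∨ q.B k i)) i ⟨rfl, Or.inl rfl⟩
    refine ⟨k, h1, h2, ?_⟩
    rw [← hM, mem_mset]
    rintro ⟨k', h4, h5⟩
    refine h3 k' ⟨h4.trans h1, Or.inr ?_⟩ h5
    rcases h2 with rfl | h2
    · exact h5
    · exact q.BB _ _ _ h5 h2
  obtain ⟨k, k1, k2, k3⟩ := hex i
  obtain ⟨l, l1, l2, l3⟩ := hex j
  have hkj : q'.B k j := by
    rcases k2 with rfl | k2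
    · exact hB
    · exact q'.BB _ _ _ (h.2 _ _ k2) hB
  have hlj : l = j ∨ q'.B l j := l2.imp id (h.2 _ _)
  have hkl : k = l := by
    by_contra hne
    rcases q'.tot k l hne with h1 | h1 | h1 | h1
    · rcases hlj with rfl | hlj
      · exact q'.LB _ _ h1 hkj
      · exact q'.LB _ _ (q'.LBt _ _ _ h1 hlj) hkj
    · have := q'.LBt _ _ _ h1 hkj
      rcases hlj with rfl | hlj
      · exact q'.Li _ this
      · exact q'.LB _ _ this hlj
    · exact l3 (mem_mset.2 ⟨k, by rw [k1, l1, hs], h1⟩)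
    · exact k3 (mem_mset.2 ⟨l, by rw [k1, l1, hs], h1⟩)
  subst hkl
  have hij : i ≠ j := by rintro rfl; exact q'.Bi _ hB
  rcases q.tot i j hij with h1 | h1 | h1 | h1
  · rcases k2 with rfl | k2
    · rcases l2 with rfl | l2
      · exact absurd rfl hij
      · exact l2
    · have := q.BLt _ _ _ k2 h1
      rcases l2 with rfl | l2
      · exact absurd this (q.Li _)
      · exact absurd l2 (q.LB _ _ this)
  · rcases l2 with rfl | l2
    · rcases k2 with rfl | k2
      · exact absurd rfl hij
      · exact absurd k2 (q.LB _ _ h1)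
    · have := q.BLt _ _ _ l2 h1
      rcases k2 with rfl | k2
      · exact absurd this (q.Li _)
      · exact absurd k2 (q.LB _ _ this)
  · exact h1
  · exact absurd (h.2 _ _ h1) (q'.Basym hB)

def rk (q : Strat n) : ℕ := cc zc q

theorem rk_lt {q q' : Strat n} (h : q < q') : rk q < rk q' := by
  refine lt_of_le_of_ne (cc_mono _ h.le) fun he => h.ne ?_
  have hB : ∀ i j, q'.B i j → q.B i j := fun i j => key zc h.le he rfl
  refine le_antisymm h.le ⟨fun i j hL => ?_, hB⟩
  have hij : i ≠ j := by rintro rfl; exact q.Li _ hL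
  rcases q'.tot i j hij with h1 | h1 | h1 | h1
  · exact h1
  · exact absurd (h.le.1 _ _ h1) (q.Lasym hL)
  · exact absurd (hB _ _ h1) (q.LB _ _ hL)
  · exact absurd (hB _ _ h1) (q.LB2 _ _ hL)

def O (s : Fin n → Bool) (q : Strat n) (i j : Fin n) : Prop :=
  s i < s j ∨ (s i = s j ∧ (q.L i j ∨ q.B i j))

theorem O_irr (s : Fin n → Bool) (q : Strat n) (i : Fin n) : ¬ O s q i i := by
  rintro (h | ⟨_, h | h⟩)
  · exact lt_irrefl _ h
  · exact q.Li _ h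
  · exact q.Bi _ h

theorem O_trans (s : Fin n → Bool) (q : Strat n) {i j k : Fin n} (h : O s q i j) (h' : O s q j k) :
    O s q i k := by
  rcases h with h | ⟨h, h1⟩ <;> rcases h' with h' | ⟨h', h2⟩
  · exact Or.inl (h.trans h')
  · exact Or.inl (h'  ▸ h)
  · exact Or.inl (h ▸ h')
  · refine Or.inr ⟨h.trans h', ?_⟩
    rcases h1 with h1 | h1 <;> rcases h2 with h2 | h2
    · exact Or.inl (q.LL _ _ _ h1 h2)
    · exact Or.inl (q.LBt _ _ _ h1 h2)
    · exact Or.inl (q.BLt _ _ _ h1 h2)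
    · exact Or.inr (q.BB _ _ _ h1 h2)

theorem O_tot (s : Fin n → Bool) (q : Strat n) {i j : Fin n} (h : i ≠ j) :
    O s q i j ∨ O s q j i := by
  rcases lt_trichotomy (s i) (s j) with h1 | h1 | h1
  · exact Or.inl (Or.inl h1)
  · rcases q.tot i j h with h2 | h2 | h2 | h2
    · exact Or.inl (Or.inr ⟨h1, Or.inl h2⟩)
    · exact Or.inr (Or.inr ⟨h1.symm, Or.inl h2⟩)
    · exact Or.inl (Or.inr ⟨h1, Or.inr h2⟩)
    · exact Or.inr (Or.inr ⟨h1.symm, Or.inr h2⟩)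
  · exact Or.inr (Or.inl h1)

open Classical in
def pos (s : Fin n → Bool) (q : Strat n) (i : Fin n) : Fin n :=
  ⟨(Finset.univ.filter fun j => O s q j i).card, by
    have : (Finset.univ.filter fun j => O s q j i) ⊂ Finset.univ := by
      rw [Finset.filter_ssubset]
      exact ⟨i, by simp, O_irr s q i⟩
    have h5 := Finset.card_lt_card this
    rwa [Finset.card_univ, Fintype.card_fin] at h5⟩

open Classical in
theorem pos_val (s : Fin n → Bool) (q : Strat n) (i : Fin n) :
    (pos s q i).val = (Finset.univ.filter fun j => O s q j i).card := rfl

theorem pos_inj (s : Fin n → Bool) (q : Strat n) : Function.Injective (pos s q) := by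
  classical
  have hlt : ∀ i j, O s q i j → pos s q i < pos s q j := by
    intro i j h
    rw [Fin.lt_def, pos_val, pos_val]
    refine Finset.card_lt_card ?_
    rw [Finset.ssubset_iff_of_subset]
    · exact ⟨i, by simpa using h, by simpa using O_irr s q i⟩
    · intro k; simp only [Finset.mem_filter, Finset.mem_univ, true_and]
      intro hk; exact O_trans s q hk h
  intro i j hij
  by_contra hne
  rcases O_tot s q hne with h | h
  · exact (hlt _ _ h).ne hij
  · exact (hlt _ _ h).ne hij.symm

/-- labels -/
def Lab (n : ℕ) : Type := Equiv.Perm (Fin n)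

instance : Finite (Lab n) := inferInstanceAs (Finite (Equiv.Perm (Fin n)))
instance : Fintype (Lab n) := Fintype.ofFinite _
instance : DecidableEq (Lab n) := Classical.decEq _
instance : MulAction (Equiv.Perm (Fin n)) (Lab n) where
  smul g p := (show Equiv.Perm (Fin n) from p) * g⁻¹
  one_smul p := by
    exact mul_one (M := Equiv.Perm (Fin n)) p
  mul_smul g h p := by
    show (show Equiv.Perm (Fin n) from p) * (g * h)⁻¹ = (show Equiv.Perm (Fin n) from p) * h⁻¹ * g⁻¹
    rw [mul_inv_rev, mul_assoc]

theorem Lab.free (g : Equiv.Perm (Fin n)) (p : Lab n) (h : g • p = p) : g = 1 := by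
  have : (show Equiv.Perm (Fin n) from p) * g⁻¹ = p := h
  have h2 := mul_eq_left (M := Equiv.Perm (Fin n)) |>.1 this
  exact inv_eq_one.1 h2

theorem Lab.transitive (p p' : Lab n) : ∃ g : Equiv.Perm (Fin n), g • p = p' := by
  refine ⟨((show Equiv.Perm (Fin n) from p)⁻¹ * (show Equiv.Perm (Fin n) from p'))⁻¹, ?_⟩
  show (show Equiv.Perm (Fin n) from p) * (((show Equiv.Perm (Fin n) from p)⁻¹ * (show Equiv.Perm (Fin n) from p'))⁻¹)⁻¹ = p'
  rw [inv_inv]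
  exact mul_inv_cancel_left (G := Equiv.Perm (Fin n)) p p'

def slab (s : Fin n → Bool) (q : Strat n) : Lab n :=
  Equiv.ofBijective (pos s q) (Finite.injective_iff_bijective.1 (pos_inj s q))

theorem slab_eq (s : Fin n → Bool) {q q' : Strat n} (h : q ≤ q') (hc : cc s q = cc s q') :
    slab s q = slab s q' := by
  have h1 : ∀ i j, O s q' i j → O s q i j := by
    rintro i j (h1 | ⟨h1, h2 | h2⟩)
    · exact Or.inl h1
    · exact Or.inr ⟨h1, Or.inl (h.1 _ _ h2)⟩
    · exact Or.inr ⟨h1, Or.inr (key s h hc h1 h2)⟩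
  have h2 : O s q = O s q' := by
    funext i j
    refine propext ⟨fun h3 => ?_, h1 i j⟩
    have hij : i ≠ j := by rintro rfl; exact O_irr s q _ h3
    rcases O_tot s q' hij with h4 | h4
    · exact h4
    · exact absurd (O_trans s q h3 (h1 _ _ h4)) (O_irr s q _)
  apply Equiv.ext
  intro i
  show pos s q i = pos s q' i
  apply Fin.ext
  rw [pos_val, pos_val, h2]

theorem cc_smul (g : Equiv.Perm (Fin n)) (s : Fin n → Bool) (q : Strat n) :
    cc (s ∘ ⇑g⁻¹) (g • q) = cc s q := by
  unfold cc
  symm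
  refine Finset.card_bij (fun i _ => g i) ?_ ?_ ?_
  · intro i hi
    rw [mem_mset] at hi ⊢
    obtain ⟨j, h1, h2⟩ := hi
    exact ⟨g j, by simpa using h1, by simpa [smul_B] using h2⟩
  · intro i _ j _ hij; exact g.injective hij
  · intro i hi
    rw [mem_mset] at hi
    obtain ⟨j, h1, h2⟩ := hi
    exact ⟨g⁻¹ i, mem_mset.2 ⟨g⁻¹ j, h1, h2⟩, by simp⟩

theorem slab_smul (g : Equiv.Perm (Fin n)) (s : Fin n → Bool) (q : Strat n) :
    slab (s ∘ ⇑g⁻¹) (g • q) = g • slab s q := by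
  apply Equiv.ext
  intro i
  show pos _ _ i = pos s q (g⁻¹ i)
  classical
  apply Fin.ext
  rw [pos_val, pos_val]
  refine Finset.card_bij (fun i _ => g⁻¹ i) ?_ ?_ ?_
  · intro j hj; simp only [Finset.mem_filter, Finset.mem_univ, true_and] at hj ⊢; exact hj
  · intro i _ j _ hij; exact (g⁻¹).injective hij
  · intro j hj
    simp only [Finset.mem_filter, Finset.mem_univ, true_and] at hj
    refine ⟨g j, ?_, by simp⟩
    simp only [Finset.mem_filter, Finset.mem_univ, true_and]
    have : O s q (g⁻¹ (g j)) (g⁻¹ i) := by simpa using hj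
    exact this

theorem rk_le (hn : 1 ≤ n) (q : Strat n) : rk q ≤ n - 1 := by
  obtain ⟨k, -, hk⟩ := q.exists_min (fun _ => True) ⟨0, hn⟩ trivial
  have h1 : mset zc q ⊆ Finset.univ.erase k := by
    intro i hi
    simp only [Finset.mem_erase, Finset.mem_univ, and_true]
    rintro rfl
    obtain ⟨j, -, hj⟩ := mem_mset.1 hi
    exact hk j trivial hj
  have := Finset.card_le_card h1
  simpa [rk, cc] using this

theorem cc_le (s : Fin n → Bool) (hs : ∃ i j, s i ≠ s j) (q : Strat n) : cc s q ≤ n - 2 := by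
  obtain ⟨i, j, hij⟩ := hs
  obtain ⟨k, hk1, hk⟩ := q.exists_min (fun k => s k = s i) i rfl
  obtain ⟨l, hl1, hl⟩ := q.exists_min (fun k => s k = s j) j rfl
  have hkl : k ≠ l := by rintro rfl; exact hij (hk1.symm.trans hl1)
  have h1 : mset s q ⊆ (Finset.univ.erase k).erase l := by
    intro x hx
    obtain ⟨y, hy1, hy⟩ := mem_mset.1 hx
    simp only [Finset.mem_erase, Finset.mem_univ, and_true]
    constructor
    · rintro rfl
      exact hl y (hy1.trans hl1) hy
    · rintro rfl
      exact hk y (hy1.trans hk1) hy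
  have := Finset.card_le_card h1
  rw [Finset.card_erase_of_mem (by simp [hkl.symm]), Finset.card_erase_of_mem (by simp)] at this
  simp at this
  exact this

theorem exists_lower (q : Strat n) (hq : 1 ≤ rk q) : ∃ q' : Strat n, q' < q ∧ rk q' = 0 := by
  let q0 : Strat n :=
    { L := fun i j => q.L i j ∨ q.B i j
      B := fun _ _ => False
      tot := fun i j h => by rcases q.tot i j h with h | h | h | h <;> simp [h]
      Li := fun i => by simp [q.Li, q.Bi]
      Bi := fun i => by simp
      LB := fun i j => by simp
      LB2 := fun i j => by simp
      LL := by
        rintro i j k (h1 | h1) (h2 | h2)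
        · exact Or.inl (q.LL _ _ _ h1 h2)
        · exact Or.inl (q.LBt _ _ _ h1 h2)
        · exact Or.inl (q.BLt _ _ _ h1 h2)
        · exact Or.inr (q.BB _ _ _ h1 h2)
      BB := fun i j k h => h.elim
      LBt := fun i j k _ h => h.elim
      BLt := fun i j k h => h.elim }
  have h0 : rk q0 = 0 := by
    rw [rk, cc, Finset.card_eq_zero, Finset.eq_empty_iff_forall_notMem]
    intro i hi
    obtain ⟨j, _, hj⟩ := mem_mset.1 hi
    exact hj
  refine ⟨q0, lt_of_le_of_ne ⟨fun i j h => Or.inl h, fun i j h => h.elim⟩ ?_, h0⟩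
  intro he
  rw [← he, h0] at hq
  omega

end Strat
end SG

end

section
namespace SG

/-- Points of the (geometric realisation of the) order complex, supported where `p` holds. -/
def RR {Q : Type} [Fintype Q] [PartialOrder Q] (p : Q → Prop) : Set (Q → ℝ) :=
  {x | (∀ q, 0 ≤ x q) ∧ ∑ q, x q = 1 ∧ (∀ q, ¬ p q → x q = 0) ∧
    ∀ q q', ¬ (q ≤ q' ∨ q' ≤ q) → x q * x q' = 0}

namespace Strat
variable {n : ℕ}

def same (q : Strat n) (k l : Fin n) : Prop := k = l ∨ q.B k l ∨ q.B l k

open Classical in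
def val (q : Strat n) (f : Fin n → ℂ) (i j : Fin n) : ℝ :=
  if q.L i j then (f j).re - (f i).re else (f j).im - (f i).im

open Classical in
def mu (q : Strat n) (f : Fin n → ℂ) : ℝ :=
  ∏ i, ∏ j, ∏ k, ∏ l, if (q.L i j ∨ q.B i j) ∧ q.same k l then
    max 0 (q.val f i j - |(f k).re - (f l).re|) else 1

theorem mu_cont (q : Strat n) : Continuous (mu q) := by
  classical
  unfold mu
  refine continuous_finsetProd _ fun i _ => continuous_finsetProd _ fun j _ =>
    continuous_finsetProd _ fun k _ => continuous_finsetProd _ fun l _ => ?_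
  split_ifs
  · unfold val
    split_ifs <;> fun_prop
  · fun_prop

theorem mu_nonneg (q : Strat n) (f : Fin n → ℂ) : 0 ≤ mu q f := by
  classical
  unfold mu
  refine Finset.prod_nonneg fun i _ => Finset.prod_nonneg fun j _ =>
    Finset.prod_nonneg fun k _ => Finset.prod_nonneg fun l _ => ?_
  split_ifs <;> simp

theorem mu_pos_iff (q : Strat n) (f : Fin n → ℂ) : mu q f ≠ 0 ↔
    ∀ i j k l, (q.L i j ∨ q.B i j) → q.same k l → |(f k).re - (f l).re| < q.val f i j := by
  classical
  unfold mu
  simp only [Finset.prod_ne_zero_iff, Finset.mem_univ, forall_true_left]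
  refine forall_congr' fun i => forall_congr' fun j => forall_congr' fun k => forall_congr' fun l => ?_
  by_cases h : (q.L i j ∨ q.B i j) ∧ q.same k l
  · rw [if_pos h]
    simp only [h.1, h.2, forall_true_left]
    constructor
    · intro h1
      by_contra h2
      exact h1 (max_eq_left (by linarith))
    · intro h1 h2
      have := le_max_right 0 (q.val f i j - |(f k).re - (f l).re|)
      linarith
  · rw [if_neg h]
    simp only [ne_eq, one_ne_zero, not_false_eq_true, true_iff]
    intro h1 h2
    exact absurd ⟨h1, h2⟩ h

theorem val_L {q : Strat n} {f : Fin n → ℂ} {i j} (h : q.L i j) : q.val f i j = (f j).re - (f i).re := by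
  simp [val, h]
theorem val_B {q : Strat n} {f : Fin n → ℂ} {i j} (h : q.B i j) : q.val f i j = (f j).im - (f i).im := by
  have : ¬ q.L i j := fun h' => q.LB _ _ h' h
  simp [val, this]

theorem le_of_spread {q q' : Strat n} {f : Fin n → ℂ} (h : mu q f ≠ 0) (h' : mu q' f ≠ 0)
    (hs : ∀ k l, q.same k l → ∃ k' l', q'.same k' l' ∧ |(f k).re - (f l).re| ≤ |(f k').re - (f l').re|) :
    q ≤ q' := by
  rw [mu_pos_iff] at h h'
  have hL : ∀ i j, q'.L i j → q.L i j := by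
    intro i j hij
    have hne : i ≠ j := by rintro rfl; exact q'.Li _ hij
    have h1 : ∀ k l, q.same k l → |(f k).re - (f l).re| < (f j).re - (f i).re := by
      intro k l hkl
      obtain ⟨k', l', h1, h2⟩ := hs k l hkl
      have := h' i j k' l' (Or.inl hij) h1
      rw [val_L hij] at this
      linarith
    rcases q.tot i j hne with h2 | h2 | h2 | h2
    · exact h2
    · have h3 := h j i i i (Or.inl h2) (Or.inl rfl)
      rw [val_L h2] at h3
      have h4 := h1 i i (Or.inl rfl)
      simp at h3 h4
      linarith
    · have := h1 j i (Or.inr (Or.inr h2))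
      have := le_abs_self ((f j).re - (f i).re)
      linarith
    · have := h1 j i (Or.inr (Or.inl h2))
      have := le_abs_self ((f j).re - (f i).re)
      linarith
  refine ⟨hL, fun i j hij => ?_⟩
  have hne : i ≠ j := by rintro rfl; exact q.Bi _ hij
  rcases q'.tot i j hne with h2 | h2 | h2 | h2
  · exact absurd hij (q.LB _ _ (hL _ _ h2))
  · exact absurd hij (q.LB2 _ _ (hL _ _ h2))
  · exact h2
  · have h3 := h i j i i (Or.inr hij) (Or.inl rfl)
    have h4 := h' j i i i (Or.inr h2) (Or.inl rfl)
    rw [val_B hij] at h3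
    rw [val_B h2] at h4
    simp at h3 h4
    linarith

theorem mu_comparable {q q' : Strat n} {f : Fin n → ℂ} (h : mu q f ≠ 0) (h' : mu q' f ≠ 0) :
    q ≤ q' ∨ q' ≤ q := by
  by_cases hs : ∀ k l, q.same k l → ∃ k' l', q'.same k' l' ∧ |(f k).re - (f l).re| ≤ |(f k').re - (f l').re|
  · exact Or.inl (le_of_spread h h' hs)
  · push Not at hs
    obtain ⟨k, l, h1, h2⟩ := hs
    exact Or.inr (le_of_spread h' h fun k' l' h3 => ⟨k, l, h1, (h2 k' l' h3).le⟩)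

def strOf (f : ConfigSpace n) : Strat n where
  L i j := (f.1 i).re < (f.1 j).re
  B i j := (f.1 i).re = (f.1 j).re ∧ (f.1 i).im < (f.1 j).im
  tot i j h := by
    rcases lt_trichotomy (f.1 i).re (f.1 j).re with h1 | h1 | h1
    · exact Or.inl h1
    · rcases lt_trichotomy (f.1 i).im (f.1 j).im with h2 | h2 | h2
      · exact Or.inr (Or.inr (Or.inl ⟨h1, h2⟩))
      · exact absurd (f.2 (Complex.ext h1 h2)) h
      · exact Or.inr (Or.inr (Or.inr ⟨h1.symm, h2⟩))
    · exact Or.inr (Or.inl h1)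
  Li i := lt_irrefl _
  Bi i h := lt_irrefl _ h.2
  LB i j h h' := h.ne h'.1
  LB2 i j h h' := h.ne h'.1.symm
  LL i j k h h' := h.trans h'
  BB i j k h h' := ⟨h.1.trans h'.1, h.2.trans h'.2⟩
  LBt i j k h h' := h'.1 ▸ h
  BLt i j k h h' := by rw [h.1]; exact h'

theorem mu_strOf (f : ConfigSpace n) : mu (strOf f) f.1 ≠ 0 := by
  rw [mu_pos_iff]
  intro i j k l h hkl
  have h1 : |(f.1 k).re - (f.1 l).re| = 0 := by
    rcases hkl with rfl | h | h
    · simp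
    · rw [h.1]; simp
    · rw [h.1]; simp
  rw [h1]
  rcases h with h | h
  · rw [val_L h]; exact sub_pos.2 h
  · rw [val_B h]; exact sub_pos.2 h.2

theorem mu_smul (g : Equiv.Perm (Fin n)) (q : Strat n) (f : Fin n → ℂ) :
    mu (g • q) (f ∘ ⇑g⁻¹) = mu q f := by
  classical
  unfold mu
  rw [← Equiv.prod_comp g]
  refine Finset.prod_congr rfl fun i _ => ?_
  rw [← Equiv.prod_comp g]
  refine Finset.prod_congr rfl fun j _ => ?_
  rw [← Equiv.prod_comp g]
  refine Finset.prod_congr rfl fun k _ => ?_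
  rw [← Equiv.prod_comp g]
  refine Finset.prod_congr rfl fun l _ => ?_
  have h1 : (g • q).same (g k) (g l) = q.same k l := by
    simp [same, smul_B]
  have h2 : (g • q).val (f ∘ ⇑g⁻¹) (g i) (g j) = q.val f i j := by
    simp [val, smul_L, Function.comp]
  rw [h2]
  simp [h1, smul_L, smul_B, Function.comp]

def lam (f : ConfigSpace n) : Strat n → ℝ := fun q => mu q f.1 / ∑ q', mu q' f.1

theorem sum_mu_pos (f : ConfigSpace n) : 0 < ∑ q', mu q' f.1 :=
  Finset.sum_pos' (fun _ _ => mu_nonneg _ _) ⟨strOf f, Finset.mem_univ _,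
    lt_of_le_of_ne (mu_nonneg _ _) (mu_strOf f).symm⟩

theorem lam_mem (f : ConfigSpace n) : lam f ∈ RR (fun _ : Strat n => True) := by
  refine ⟨fun q => div_nonneg (mu_nonneg _ _) (sum_mu_pos f).le, ?_, by simp, ?_⟩
  · unfold lam
    rw [← Finset.sum_div, div_self (sum_mu_pos f).ne']
  · intro q q' h
    by_contra h1
    have := mul_ne_zero_iff.1 h1
    refine h (mu_comparable (f := f.1) ?_ ?_)
    · intro h2; exact this.1 (by simp [lam, h2])
    · intro h2; exact this.2 (by simp [lam, h2])

theorem lam_cont : Continuous (lam (n := n)) := by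
  refine continuous_pi fun q => ?_
  refine Continuous.div ((mu_cont q).comp continuous_subtype_val)
    (continuous_finsetSum _ fun q _ => (mu_cont q).comp continuous_subtype_val) fun f => (sum_mu_pos f).ne'

theorem lam_smul (g : Equiv.Perm (Fin n)) (f : ConfigSpace n) (q : Strat n) :
    lam (configPermMap n g f) (g • q) = lam f q := by
  unfold lam
  have h : ∀ q, mu (g • q) (configPermMap n g f).1 = mu q f.1 := fun q => mu_smul g q f.1
  rw [h, ← Equiv.sum_comp (MulAction.toPerm g) (fun q' => mu q' (configPermMap n g f).1)]
  simp only [MulAction.toPerm_apply, h]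

end Strat
end SG

end

section
namespace SG

/-- The join of `C` copies of the discrete set `Λ`. -/
def YY (C Λ : Type) [Fintype C] [Fintype Λ] : Set (C × Λ → ℝ) :=
  {y | (∀ v, 0 ≤ y v) ∧ ∑ v, y v = 1 ∧ ∀ c g g', g ≠ g' → y (c, g) * y (c, g') = 0}

section ret
variable {C Λ : Type} [Fintype C] [Fintype Λ]

def ret (G : C × Λ → ℝ) : C × Λ → ℝ := fun v => max 0 (2 * G v - ∑ g', G (v.1, g'))

theorem ret_cont : Continuous (ret (C := C) (Λ := Λ)) := by
  unfold ret
  fun_prop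

theorem ret_nonneg (G : C × Λ → ℝ) (v) : 0 ≤ ret G v := le_max_left _ _

theorem ret_excl (G : C × Λ → ℝ) (hG : ∀ v, 0 ≤ G v) (c g g') (h : g ≠ g') :
    ret G (c, g) * ret G (c, g') = 0 := by
  classical
  by_contra h1
  obtain ⟨h2, h3⟩ := mul_ne_zero_iff.1 h1
  have hs : G (c, g) + G (c, g') ≤ ∑ x, G (c, x) := by
    rw [← Finset.sum_pair h (f := fun x => G (c, x))]
    exact Finset.sum_le_sum_of_subset_of_nonneg (Finset.subset_univ _) fun _ _ _ => hG _
  have h4 : 0 < 2 * G (c, g) - ∑ x, G (c, x) := by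
    by_contra h5; exact h2 (max_eq_left (not_lt.1 h5))
  have h6 : 0 < 2 * G (c, g') - ∑ x, G (c, x) := by
    by_contra h5; exact h3 (max_eq_left (not_lt.1 h5))
  linarith

theorem ret_eq (G : C × Λ → ℝ) (hG : ∀ v, 0 ≤ G v)
    (h : ∀ c g g', g ≠ g' → G (c, g) * G (c, g') = 0) : ret G = G := by
  funext ⟨c, g⟩
  unfold ret
  by_cases h0 : G (c, g) = 0
  · rw [h0]
    have : 0 ≤ ∑ x, G (c, x) := Finset.sum_nonneg fun _ _ => hG _
    exact max_eq_left (by simpa using this)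
  · have : ∑ x, G (c, x) = G (c, g) := by
      refine Finset.sum_eq_single g (fun x _ hx => ?_) (by simp)
      have := h c g x hx.symm
      exact (mul_eq_zero.1 this).resolve_left h0
    simp only [this]
    rw [max_eq_right] <;> linarith [hG (c, g)]

def nrm (z : C × Λ → ℝ) : C × Λ → ℝ := fun v => z v / ∑ w, z w

theorem nrm_mem {z : C × Λ → ℝ} (h0 : ∀ v, 0 ≤ z v) (hs : 0 < ∑ w, z w)
    (h : ∀ c g g', g ≠ g' → z (c, g) * z (c, g') = 0) : nrm z ∈ YY C Λ := by
  refine ⟨fun v => div_nonneg (h0 v) hs.le, ?_, fun c g g' hg => ?_⟩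
  · unfold nrm; rw [← Finset.sum_div, div_self hs.ne']
  · unfold nrm; rw [div_mul_div_comm, h c g g' hg, zero_div]

end ret

section grid
variable {m : ℕ}

def dd (x : ℝ) (k : ℤ) : ℝ := min (x - k) (k + 1 - x)

theorem dd_le {x : ℝ} {k : ℤ} (h : 0 < dd x k) (l : ℤ) : dd x k ≤ |x - l| := by
  unfold dd at *
  have h1 := lt_min_iff.1 h
  rcases le_or_gt l k with hl | hl
  · have : (l : ℝ) ≤ k := by exact_mod_cast hl
    calc _ ≤ x - k := min_le_left _ _
      _ ≤ x - l := by linarith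
      _ ≤ _ := le_abs_self _
  · have : (k : ℝ) + 1 ≤ l := by exact_mod_cast hl
    calc _ ≤ k + 1 - x := min_le_right _ _
      _ ≤ -(x - l) := by linarith
      _ ≤ _ := neg_le_abs _

open Classical in
def bet (S : Finset (Fin m)) (k : Fin m → ℤ) (x : Fin m → ℝ) : ℝ :=
  ∏ i, if i ∈ S then max 0 (1 / 2 - |x i - k i|) else
    max 0 (dd (x i) (k i)) * ∏ j ∈ S, max 0 (dd (x i) (k i) - |x j - k j|)

theorem bet_cont (S : Finset (Fin m)) (k : Fin m → ℤ) : Continuous (bet S k) := by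
  unfold bet
  refine continuous_finsetProd _ fun i _ => ?_
  split_ifs
  · fun_prop
  · unfold dd; fun_prop

theorem bet_nonneg (S : Finset (Fin m)) (k : Fin m → ℤ) (x) : 0 ≤ bet S k x := by
  unfold bet
  refine Finset.prod_nonneg fun i _ => ?_
  split_ifs
  · simp
  · exact mul_nonneg (by simp) (Finset.prod_nonneg fun j _ => by simp)

theorem max0_ne {a : ℝ} : max 0 a ≠ 0 ↔ 0 < a := by
  constructor
  · intro h; by_contra h1; exact h (max_eq_left (not_lt.1 h1))
  · intro h; rw [max_eq_right h.le]; exact h.ne'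

theorem bet_ne (S : Finset (Fin m)) (k : Fin m → ℤ) (x) : bet S k x ≠ 0 ↔
    (∀ i ∈ S, |x i - k i| < 1 / 2) ∧ (∀ i ∉ S, 0 < dd (x i) (k i)) ∧
      ∀ i ∉ S, ∀ j ∈ S, |x j - k j| < dd (x i) (k i) := by
  unfold bet
  simp only [Finset.prod_ne_zero_iff, Finset.mem_univ, forall_true_left]
  constructor
  · intro h
    refine ⟨fun i hi => ?_, fun i hi => ?_, fun i hi => ?_⟩
    · have := h i
      rw [if_pos hi, max0_ne] at this
      linarith
    · have := h i
      rw [if_neg hi, mul_ne_zero_iff, max0_ne] at this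
      exact this.1
    · have := h i
      rw [if_neg hi, mul_ne_zero_iff, Finset.prod_ne_zero_iff] at this
      intro j hj
      have := this.2 j hj
      rw [max0_ne] at this
      linarith
  · rintro ⟨h1, h2, h3⟩ i
    split_ifs with hi
    · rw [max0_ne]; linarith [h1 i hi]
    · rw [mul_ne_zero_iff, max0_ne, Finset.prod_ne_zero_iff]
      refine ⟨h2 i hi, fun j hj => ?_⟩
      rw [max0_ne]; linarith [h3 i hi j hj]

theorem bet_uniq {S S' : Finset (Fin m)} {k k' : Fin m → ℤ} {x} (hc : S.card = S'.card)
    (h : bet S k x ≠ 0) (h' : bet S' k' x ≠ 0) : S = S' ∧ k = k' := by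
  rw [bet_ne] at h h'
  obtain ⟨a1, a2, a3⟩ := h
  obtain ⟨b1, b2, b3⟩ := h'
  have hS : S = S' := by
    by_contra hne
    have h1 : ¬ S ⊆ S' := fun hs => hne (Finset.eq_of_subset_of_card_le hs hc.ge)
    have h2 : ¬ S' ⊆ S := fun hs => hne (Finset.eq_of_subset_of_card_le hs hc.le).symm
    obtain ⟨i, hi, hi'⟩ := Finset.not_subset.1 h1
    obtain ⟨j, hj, hj'⟩ := Finset.not_subset.1 h2
    have e1 := a3 j hj' i hi
    have e2 := dd_le (a2 j hj') (k' j)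
    have e3 := b3 i hi' j hj
    have e4 := dd_le (b2 i hi') (k i)
    linarith
  subst hS
  refine ⟨rfl, funext fun i => ?_⟩
  by_cases hi : i ∈ S
  · have e1 := abs_lt.1 (a1 i hi)
    have e2 := abs_lt.1 (b1 i hi)
    have e3 : ((k i : ℤ) : ℝ) < k' i + 1 := by linarith
    have e4 : ((k' i : ℤ) : ℝ) < k i + 1 := by linarith
    have e5 : k i < k' i + 1 := by exact_mod_cast e3
    have e6 : k' i < k i + 1 := by exact_mod_cast e4
    omega
  · have e1 := lt_min_iff.1 (a2 i hi)
    have e2 := lt_min_iff.1 (b2 i hi)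
    have e3 : ((k i : ℤ) : ℝ) < k' i + 1 := by linarith
    have e4 : ((k' i : ℤ) : ℝ) < k i + 1 := by linarith
    have e5 : k i < k' i + 1 := by exact_mod_cast e3
    have e6 : k' i < k i + 1 := by exact_mod_cast e4
    omega

theorem bet_close {S : Finset (Fin m)} {k : Fin m → ℤ} {x y} (h : bet S k x ≠ 0)
    (h' : bet S k y ≠ 0) (i : Fin m) : |x i - y i| ≤ 1 := by
  rw [bet_ne] at h h'
  obtain ⟨a1, a2, a3⟩ := h
  obtain ⟨b1, b2, b3⟩ := h'
  by_cases hi : i ∈ S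
  · have e1 := abs_lt.1 (a1 i hi)
    have e2 := abs_lt.1 (b1 i hi)
    rw [abs_le]; constructor <;> linarith
  · have e1 := lt_min_iff.1 (a2 i hi)
    have e2 := lt_min_iff.1 (b2 i hi)
    rw [abs_le]; constructor <;> linarith

theorem bet_exists (x : Fin m → ℝ) : ∃ S : Finset (Fin m), bet S (fun i => ⌊x i⌋) x ≠ 0 := by
  classical
  refine ⟨Finset.univ.filter fun i => x i = ⌊x i⌋, ?_⟩
  rw [bet_ne]
  have h2 : ∀ i, x i ≠ ⌊x i⌋ → 0 < dd (x i) ⌊x i⌋ := by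
    intro i hi
    refine lt_min ?_ ?_
    · have := Int.floor_le (x i)
      exact sub_pos.2 (lt_of_le_of_ne this hi.symm)
    · have := Int.lt_floor_add_one (x i); linarith
  simp only [Finset.mem_filter, Finset.mem_univ, true_and]
  refine ⟨fun i hi => ?_, h2, fun i hi j hj => ?_⟩
  · rw [← hi]; simp
  · rw [← hj]; simpa using h2 i hi

end grid
end SG

end

section
namespace SG

theorem ret_pos_aux {C Λ : Type} [Fintype Λ] (z b : C × Λ → ℝ) (t ε : ℝ) (hε : 0 ≤ ε)
    (ht : ∀ v, 0 ≤ t * b v) (hz : ∀ v, 0 ≤ z v) (hze : ∀ c g g', g ≠ g' → z (c, g) * z (c, g') = 0)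
    (c : C) (hb : (∀ g, b (c, g) = 0) ∨ ∃ gv, (∀ g, g ≠ gv → b (c, g) = 0) ∧
      ∀ g, ε < z (c, g) → g = gv)
    (h0 : ∀ g, ret (fun v => z v + t * b v) (c, g) = 0) :
    ∑ g, z (c, g) ≤ ε ∧ t * ∑ g, b (c, g) ≤ ε := by
  have h1 : ∀ g, 2 * (z (c, g) + t * b (c, g)) ≤ ∑ g, z (c, g) + t * ∑ g, b (c, g) := by
    intro g
    have := h0 g
    unfold ret at this
    have h2 := max_eq_left_iff.1 this
    simp only [Finset.sum_add_distrib, ← Finset.mul_sum] at h2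
    linarith
  have ha : ∑ g, z (c, g) = 0 ∨ ∃ g0, 0 < z (c, g0) ∧ (∀ g, g ≠ g0 → z (c, g) = 0) ∧
      ∑ g, z (c, g) = z (c, g0) := by
    by_cases hall : ∀ g, z (c, g) = 0
    · left; simp [hall]
    · right
      push Not at hall
      obtain ⟨g0, hg0⟩ := hall
      have h3 : ∀ g, g ≠ g0 → z (c, g) = 0 := fun g hg =>
        (mul_eq_zero.1 (hze c g g0 hg)).resolve_right hg0
      exact ⟨g0, lt_of_le_of_ne (hz _) hg0.symm, h3, Finset.sum_eq_single g0 (fun g _ hg => h3 g hg) (by simp)⟩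
  rcases hb with hb | ⟨gv, hv1, hv2⟩
  · have hb0 : ∑ g, b (c, g) = 0 := by simp [hb]
    rw [hb0] at h1 ⊢
    rcases ha with ha | ⟨g0, k1, k2, k3⟩
    · rw [ha]; simpa using hε
    · have := h1 g0; rw [k3, hb] at this; linarith
  · have hb0 : ∑ g, b (c, g) = b (c, gv) := Finset.sum_eq_single gv (fun g _ hg => hv1 g hg) (by simp)
    rw [hb0] at h1 ⊢
    rcases ha with ha | ⟨g0, k1, k2, k3⟩
    · rw [ha] at h1 ⊢
      have := h1 gv
      have := hz (c, gv)
      exact ⟨hε, by linarith⟩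
    · by_cases hg : g0 = gv
      · subst hg
        have := h1 g0; rw [k3] at this; linarith [ht (c, g0)]
      · have hle : z (c, g0) ≤ ε := by
          by_contra hlt; exact hg (hv2 g0 (not_le.1 hlt))
        have := h1 gv
        rw [k2 gv (Ne.symm hg)] at this
        rw [k3] at this ⊢
        exact ⟨hle, by linarith⟩

theorem ext0 {m : ℕ} {Λ : Type} [Fintype Λ] [Nonempty Λ] {A K : Set (Fin m → ℝ)}
    (hK : IsCompact K) (hA : IsClosed A) (hAK : A ⊆ K) {f : (Fin m → ℝ) → (Fin (m+1) × Λ → ℝ)}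
    (hf : ContinuousOn f A) (hfY : Set.MapsTo f A (YY (Fin (m+1)) Λ)) :
    ∃ F : (Fin m → ℝ) → (Fin (m+1) × Λ → ℝ), ContinuousOn F K ∧
      Set.MapsTo F K (YY (Fin (m+1)) Λ) ∧ Set.EqOn F f A := by
  classical
  rcases K.eq_empty_or_nonempty with rfl | hne
  · exact ⟨f, by simp, by intro x hx; exact hx.elim, fun x _ => rfl⟩
  obtain ⟨F0, hF0⟩ := ContinuousMap.exists_restrict_eq hA ⟨A.domRestrict f, hf.domRestrict⟩
  have hF0' : ∀ a ∈ A, F0 a = f a := fun a ha => congrArg (fun φ : C(A, _) => φ ⟨a, ha⟩) hF0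
  let z0 : (Fin m → ℝ) → (Fin (m+1) × Λ → ℝ) := fun p => ret (fun v => max 0 (F0 p v))
  have z0c : Continuous z0 := by
    refine ret_cont.comp ?_
    refine continuous_pi fun v => continuous_const.max ((continuous_apply v).comp F0.continuous)
  have z0n : ∀ p v, 0 ≤ z0 p v := fun p v => ret_nonneg _ _
  have z0e : ∀ p c g g', g ≠ g' → z0 p (c, g) * z0 p (c, g') = 0 := fun p c g g' h =>
    ret_excl _ (fun v => le_max_left _ _) c g g' h
  have z0A : ∀ a ∈ A, z0 a = f a := by
    intro a ha
    obtain ⟨y1, y2, y3⟩ := hfY ha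
    have : (fun v => max 0 (F0 a v)) = f a := by
      funext v; rw [hF0' a ha]; exact max_eq_right (y1 v)
    simp only [z0, this]
    exact ret_eq _ y1 y3
  obtain ⟨ε, hε, hεm⟩ : ∃ ε : ℝ, 0 < ε ∧ (m + 1) * ε < 1 / 2 := by
    refine ⟨1 / (2 * (m + 2)), by positivity, ?_⟩
    rw [mul_one_div, div_lt_div_iff₀ (by positivity) (by norm_num)]
    linarith
  obtain ⟨δ, hδ, hδz⟩ := Metric.uniformContinuousOn_iff.1
    (hK.uniformContinuousOn_of_continuous z0c.continuousOn) ε hε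
  obtain ⟨M, hM⟩ := exists_nat_gt (1 / δ)
  have hM0 : (0 : ℝ) < M := lt_trans (by positivity) hM
  have hMd : 1 / (M : ℝ) < δ := by rw [div_lt_comm₀ hM0 hδ]; exact hM
  let xx : (Fin m → ℝ) → (Fin m → ℝ) := fun p i => M * p i
  have xxc : Continuous xx := by fun_prop
  obtain ⟨R, hR⟩ := (hK.image xxc).isBounded.exists_norm_le
  have hR' : ∀ p ∈ K, ∀ i, |xx p i| ≤ R := fun p hp i =>
    (norm_le_pi_norm (xx p) i).trans (hR _ ⟨p, hp, rfl⟩)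
  obtain ⟨N, hN⟩ := exists_nat_gt (R + 1)
  let V : Finset (Finset (Fin m) × (Fin m → ℤ)) :=
    Finset.univ ×ˢ Fintype.piFinset (fun _ => Finset.Icc (-(N:ℤ)) N)
  have hlb : ∀ v : Finset (Fin m) × (Fin m → ℤ), ∃ l : Λ, ∀ p ∈ K, bet v.1 v.2 (xx p) ≠ 0 →
      ∀ c : Fin (m+1), c.val = v.1.card → ∀ g, ε < z0 p (c, g) → g = l := by
    intro v
    by_cases h : ∃ p ∈ K, bet v.1 v.2 (xx p) ≠ 0 ∧ ∃ c : Fin (m+1), c.val = v.1.card ∧ ∃ g, ε < z0 p (c, g)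
    · obtain ⟨p, hp, hb, c, hc, g, hg⟩ := h
      refine ⟨g, fun p' hp' hb' c' hc' g' hg' => ?_⟩
      have hcc : c' = c := Fin.ext (hc'.trans hc.symm)
      subst hcc
      by_contra hne
      have hd : dist p p' < δ := by
        refine lt_of_le_of_lt ?_ hMd
        rw [dist_pi_le_iff (by positivity)]
        intro i
        have := bet_close hb hb' i
        simp only [xx] at this
        rw [← mul_sub, abs_mul, abs_of_pos hM0] at this
        rw [Real.dist_eq, le_div_iff₀ hM0]; linarith
      have h1 := hδz p hp p' hp' hd
      have h2 := (dist_le_pi_dist (z0 p) (z0 p') (c', g')).trans_lt h1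
      have h3 : z0 p (c', g') = 0 :=
        (mul_eq_zero.1 (z0e p c' g g' (Ne.symm hne))).resolve_left (by linarith)
      rw [h3, Real.dist_eq] at h2
      have := abs_lt.1 h2
      linarith
    · push Not at h
      exact ⟨Classical.arbitrary Λ, fun p hp hb c hc g hg => absurd hg (not_lt.2 (h p hp hb c hc g))⟩
  choose lbl hlbl using hlb
  let b : (Fin m → ℝ) → (Fin (m+1) × Λ → ℝ) := fun p w =>
    ∑ v ∈ V, if w.1.val = v.1.card ∧ lbl v = w.2 then bet v.1 v.2 (xx p) else 0
  have bc : Continuous b := by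
    refine continuous_pi fun w => continuous_finsetSum _ fun v _ => ?_
    split_ifs
    · exact (bet_cont _ _).comp xxc
    · exact continuous_const
  have bn : ∀ p w, 0 ≤ b p w := fun p w => Finset.sum_nonneg fun v _ => by
    split_ifs
    · exact bet_nonneg _ _ _
    · exact le_rfl
  have bpos : ∀ p ∈ K, 0 < ∑ w, b p w := by
    intro p hp
    obtain ⟨S, hS⟩ := bet_exists (xx p)
    have hcard : S.card < m + 1 := by
      have := Finset.card_le_univ S; simp at this; omega
    refine Finset.sum_pos' (fun w _ => bn p w) ⟨(⟨S.card, hcard⟩, lbl (S, fun i => ⌊xx p i⌋)), Finset.mem_univ _, ?_⟩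
    refine Finset.sum_pos' (fun v _ => ?_) ⟨(S, fun i => ⌊xx p i⌋), ?_, ?_⟩
    · split_ifs
      · exact bet_nonneg _ _ _
      · exact le_rfl
    · simp only [V, Finset.mem_product, Finset.mem_univ, true_and, Fintype.mem_piFinset, Finset.mem_Icc]
      intro i
      have h1 := abs_le.1 (hR' p hp i)
      constructor
      · rw [Int.le_floor]; push_cast; linarith
      · have h2 := Int.floor_le (xx p i)
        have h3 : ((⌊xx p i⌋ : ℤ) : ℝ) ≤ N := by linarith
        exact_mod_cast h3
    · simp only [and_self, if_true]
      exact lt_of_le_of_ne (bet_nonneg _ _ _) hS.symm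
  obtain ⟨p0, hp0, hmin⟩ := hK.exists_isMinOn hne
    (show Continuous (fun p => ∑ w, b p w) by fun_prop).continuousOn
  set κ := ∑ w, b p0 w with hκ
  have hκ0 : 0 < κ := bpos p0 hp0
  have hκm : ∀ p ∈ K, κ ≤ ∑ w, b p w := fun p hp => hmin hp
  let η : (Fin m → ℝ) → ℝ := fun p => min 1 (max 0 (2 - 2 * ∑ w, z0 p w))
  have ηc : Continuous η := by fun_prop
  have η0 : ∀ p, 0 ≤ η p := fun p => le_min zero_le_one (le_max_left _ _)
  let G : (Fin m → ℝ) → (Fin (m+1) × Λ → ℝ) := fun p w => z0 p w + (1 / κ * η p) * b p w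
  have Gc : Continuous G := by fun_prop
  have Gn : ∀ p w, 0 ≤ G p w := fun p w =>
    add_nonneg (z0n p w) (mul_nonneg (mul_nonneg (by positivity) (η0 p)) (bn p w))
  have hpos : ∀ p ∈ K, 0 < ∑ w, ret (G p) w := by
    intro p hp
    by_contra hcon
    have h0 : ∀ w, ret (G p) w = 0 := by
      have h1 : ∑ w, ret (G p) w = 0 := le_antisymm (not_lt.1 hcon) (Finset.sum_nonneg fun _ _ => ret_nonneg _ _)
      intro w
      exact (Finset.sum_eq_zero_iff_of_nonneg (fun _ _ => ret_nonneg _ _)).1 h1 w (Finset.mem_univ _)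
    have hcol : ∀ c, ∑ g, z0 p (c, g) ≤ ε ∧ (1 / κ * η p) * ∑ g, b p (c, g) ≤ ε := by
      intro c
      refine ret_pos_aux (z0 p) (b p) _ ε hε.le (fun v => mul_nonneg (mul_nonneg (by positivity) (η0 p)) (bn p v)) (z0n p) (z0e p) c ?_ (fun g => h0 (c, g))
      by_cases hv : ∃ v ∈ V, c.val = v.1.card ∧ bet v.1 v.2 (xx p) ≠ 0
      · right
        obtain ⟨v, hvV, hvc, hvb⟩ := hv
        refine ⟨lbl v, fun g hg => ?_, fun g hg => hlbl v p hp hvb c hvc g hg⟩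
        refine Finset.sum_eq_zero fun v' _ => ?_
        split_ifs with h1
        · by_contra h2
          have := bet_uniq (hvc.symm.trans h1.1) hvb h2
          have hvv : v = v' := Prod.ext this.1 this.2
          exact hg (by rw [hvv]; exact h1.2.symm)
        · rfl
      · left
        intro g
        push Not at hv
        refine Finset.sum_eq_zero fun v' hv' => ?_
        split_ifs with h1
        · exact hv v' hv' h1.1
        · rfl
    have hσ : ∑ w, z0 p w ≤ (m + 1) * ε := by
      rw [Fintype.sum_prod_type]
      refine (Finset.sum_le_sum fun c _ => (hcol c).1).trans ?_
      simp
    have hη : η p = 1 := by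
      simp only [η]
      rw [min_eq_left]
      refine le_trans ?_ (le_max_right _ _)
      linarith
    have hb : 1 / κ * ∑ w, b p w ≤ (m + 1) * ε := by
      rw [Fintype.sum_prod_type, Finset.mul_sum]
      refine (Finset.sum_le_sum fun c _ => (?_ : _ ≤ ε)).trans ?_
      · have := (hcol c).2; rwa [hη, mul_one] at this
      · simp
    have h1 : 1 ≤ 1 / κ * ∑ w, b p w := by
      rw [one_div, ← div_eq_inv_mul, one_le_div hκ0]; exact hκm p hp
    linarith
  refine ⟨fun p => nrm (ret (G p)), ?_, fun p hp => nrm_mem (ret_nonneg _) (hpos p hp) (ret_excl _ (Gn p)), ?_⟩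
  · refine continuousOn_pi.2 fun v => ?_
    have hrc := ret_cont.comp Gc
    refine ContinuousOn.div ((continuous_apply v).comp hrc).continuousOn ?_ (fun p hp => (hpos p hp).ne')
    exact (continuous_finsetSum _ fun w _ => (continuous_apply w).comp hrc).continuousOn
  · intro a ha
    obtain ⟨y1, y2, y3⟩ := hfY ha
    have hη : η a = 0 := by
      simp only [η, z0A a ha, y2]; norm_num
    have hG : G a = f a := by
      funext w; simp only [G, hη, z0A a ha]; ring
    show nrm (ret (G a)) = f a
    rw [hG, ret_eq _ y1 y3]
    funext v; simp [nrm, y2]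

end SG

end

section
namespace SG

theorem contOn_image {Z W V : Type*} [TopologicalSpace Z] [TopologicalSpace W] [T2Space W]
    [TopologicalSpace V] {T : Set Z} (hT : IsCompact T) {e : Z → W} (he : ContinuousOn e T)
    {f : Z → V} (hf : ContinuousOn f T) {h : W → V} (hh : ∀ z ∈ T, h (e z) = f z) :
    ContinuousOn h (e '' T) := by
  rw [continuousOn_iff_isClosed]
  intro t ht
  refine ⟨e '' (T ∩ f ⁻¹' t), ?_, ?_⟩
  · refine IsCompact.isClosed ?_
    refine IsCompact.image_of_continuousOn ?_ (he.mono Set.inter_subset_left)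
    rw [continuousOn_iff_isClosed] at hf
    obtain ⟨u, hu, hu'⟩ := hf t ht
    rw [Set.inter_comm T, hu', Set.inter_comm]
    exact hT.inter_right hu
  · ext w
    constructor
    · rintro ⟨h1, z, hz, rfl⟩
      exact ⟨⟨z, ⟨hz, by rw [Set.mem_preimage, ← hh z hz]; exact h1⟩, rfl⟩, ⟨z, hz, rfl⟩⟩
    · rintro ⟨⟨z, ⟨hz, hz'⟩, rfl⟩, h2⟩
      exact ⟨by rw [Set.mem_preimage, hh z hz]; exact hz', h2⟩

theorem contOn_union_closed {Z V : Type*} [TopologicalSpace Z] [TopologicalSpace V] {A B : Set Z}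
    (hA : IsClosed A) (hB : IsClosed B) {f : Z → V} (h1 : ContinuousOn f A) (h2 : ContinuousOn f B) :
    ContinuousOn f (A ∪ B) := h1.union_of_isClosed h2 hA hB

theorem ext1 {Z : Type} [TopologicalSpace Z] {m : ℕ} {Λ : Type} [Fintype Λ] [Nonempty Λ] [CompactSpace Z]
    {A K : Set Z} (hA : IsClosed A) (hK : IsClosed K) {e : Z → Fin m → ℝ} (he : Continuous e)
    (hi : Set.InjOn e K) {f : Z → (Fin (m+1) × Λ → ℝ)}
    (hf : ContinuousOn f A) (hfY : Set.MapsTo f A (YY (Fin (m+1)) Λ)) :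
    ∃ F : Z → (Fin (m+1) × Λ → ℝ), ContinuousOn F (A ∪ K) ∧
      Set.MapsTo F (A ∪ K) (YY (Fin (m+1)) Λ) ∧ Set.EqOn F f A := by
  classical
  rcases isEmpty_or_nonempty Z with hZ | hZ
  · exact ⟨f, by rw [Set.eq_empty_of_isEmpty (A ∪ K)]; exact continuousOn_empty _, fun z => hZ.elim z, fun z _ => rfl⟩
  have hAK : IsCompact (A ∩ K) := (hA.inter hK).isCompact
  have hinv : ∀ z ∈ A ∩ K, Function.invFunOn e (A ∩ K) (e z) = z := fun z hz =>
    (hi.mono Set.inter_subset_right).leftInvOn_invFunOn hz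
  obtain ⟨F, hF1, hF2, hF3⟩ := ext0 (A := e '' (A ∩ K)) (K := e '' K) (Λ := Λ) (hK.isCompact.image he)
    (hAK.image he).isClosed (Set.image_mono Set.inter_subset_right)
    (f := fun x => f (Function.invFunOn e (A ∩ K) x))
    (contOn_image hAK he.continuousOn (hf.mono Set.inter_subset_left) (fun z hz => by simp only [hinv z hz]))
    (by rintro _ ⟨z, hz, rfl⟩; simp only [hinv z hz]; exact hfY hz.1)
  have hKe : ∀ z ∈ A ∩ K, F (e z) = f z := by
    intro z hz
    rw [hF3 ⟨z, hz, rfl⟩]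
    simp only [hinv z hz]
  refine ⟨fun z => if z ∈ A then f z else F (e z), ?_, ?_, ?_⟩
  · refine contOn_union_closed hA hK ?_ ?_
    · exact hf.congr fun z hz => by simp [hz]
    · refine (hF1.comp he.continuousOn (Set.mapsTo_image e K)).congr fun z hz => ?_
      by_cases hzA : z ∈ A
      · simp [hzA, hKe z ⟨hzA, hz⟩]
      · simp [hzA]
  · rintro z hz
    by_cases hzA : z ∈ A
    · simp only [hzA, if_true]; exact hfY hzA
    · simp only [hzA, if_false]; exact hF2 ⟨z, hz.resolve_left hzA, rfl⟩
  · intro z hz; simp [hz]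

theorem ext_cover {Z : Type} [TopologicalSpace Z] {m : ℕ} {Λ : Type} [Fintype Λ] [Nonempty Λ] [CompactSpace Z]
    {ι : Type} [Finite ι] {A : Set Z} {K : ι → Set Z} (hA : IsClosed A) (hK : ∀ i, IsClosed (K i))
    (hcov : ∀ z, ∃ i, z ∈ K i)
    {e : Z → Fin m → ℝ} (he : Continuous e)
    (hi : ∀ i, Set.InjOn e (K i)) {f : Z → (Fin (m+1) × Λ → ℝ)}
    (hf : ContinuousOn f A) (hfY : Set.MapsTo f A (YY (Fin (m+1)) Λ)) :
    ∃ F : Z → (Fin (m+1) × Λ → ℝ), Continuous F ∧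
      (∀ z, F z ∈ (YY (Fin (m+1)) Λ)) ∧ Set.EqOn F f A := by
  classical
  have := Fintype.ofFinite ι
  have key : ∀ s : Finset ι, ∃ F : Z → (Fin (m+1) × Λ → ℝ), ContinuousOn F (A ∪ ⋃ i ∈ s, K i) ∧
      Set.MapsTo F (A ∪ ⋃ i ∈ s, K i) (YY (Fin (m+1)) Λ) ∧ Set.EqOn F f A := by
    intro s
    induction s using Finset.induction_on with
    | empty => exact ⟨f, by simpa using hf, by simpa using hfY, fun _ _ => rfl⟩
    | insert a s ha ih =>
      obtain ⟨F, h1, h2, h3⟩ := ih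
      obtain ⟨F', h1', h2', h3'⟩ := ext1 (A := A ∪ ⋃ i ∈ s, K i) (K := K a)
        (hA.union (isClosed_biUnion_finset fun i _ => hK i)) (hK a) he (hi a) h1 h2
      have hset : (A ∪ ⋃ i ∈ insert a s, K i) = (A ∪ ⋃ i ∈ s, K i) ∪ K a := by
        rw [Finset.set_biUnion_insert]
        ext; simp only [Set.mem_union]; tauto
      rw [hset]
      exact ⟨F', h1', h2', fun z hz => (h3' (Or.inl hz)).trans (h3 hz)⟩
  obtain ⟨F, h1, h2, h3⟩ := key Finset.univ
  have hu : (A ∪ ⋃ i ∈ (Finset.univ : Finset ι), K i) = Set.univ := by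
    ext z; simp only [Set.mem_union, Set.mem_iUnion, Set.mem_univ, iff_true]
    obtain ⟨i, hi⟩ := hcov z
    exact Or.inr ⟨i, Finset.mem_univ _, hi⟩
  rw [hu] at h1 h2
  exact ⟨F, continuousOn_univ.1 h1, fun z => h2 (Set.mem_univ z), h3⟩

end SG

end

section
namespace SG
open CategoryTheory

section grp
universe v u
variable {𝒢 : Type u} [Groupoid.{v} 𝒢] {X Y : 𝒢} {S : Type} [Fintype S]

def qd (γ α : X ⟶ Y) : Abelianization (End X) :=
  Abelianization.of (show End X from γ ≫ Groupoid.inv α)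

theorem qd_mul (γ β α : X ⟶ Y) : qd γ β * qd β α = qd γ α := by
  unfold qd
  rw [mul_comm, ← map_mul]
  congr 1
  show (γ ≫ Groupoid.inv β) ≫ (β ≫ Groupoid.inv α) = _
  simp

def Comb (a : S → ℤ) (α : S → (X ⟶ Y)) (γ : X ⟶ Y) : Prop :=
  ∀ s0, qd γ (α s0) = ∏ s, qd (α s) (α s0) ^ a s

theorem Comb.exists (a : S → ℤ) (ha : ∑ s, a s = 1) (α : S → (X ⟶ Y)) : ∃ γ, Comb a α γ := by
  have hS : Nonempty S := by
    by_contra h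
    rw [not_nonempty_iff] at h
    simp at ha
  obtain ⟨s1⟩ := hS
  obtain ⟨w, hw⟩ : ∃ w : End X, Abelianization.of w = ∏ s, qd (α s) (α s1) ^ a s :=
    QuotientGroup.mk'_surjective _ _
  refine ⟨(show X ⟶ X from w) ≫ α s1, fun s0 => ?_⟩
  have h1 : qd ((show X ⟶ X from w) ≫ α s1) (α s1) = ∏ s, qd (α s) (α s1) ^ a s := by
    rw [← hw, qd]; congr 1; simp
  rw [← qd_mul _ (α s1), h1]
  have h2 : qd (α s1) (α s0) = ∏ s, qd (α s1) (α s0) ^ a s := by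
    have h3 : ∀ (x : Abelianization (End X)) (t : Finset S), ∏ s ∈ t, x ^ a s = x ^ (∑ s ∈ t, a s) := by
      intro x t
      classical
      induction t using Finset.induction_on with
      | empty => simp
      | insert i t hi ih => rw [Finset.prod_insert hi, Finset.sum_insert hi, zpow_add, ih]
    rw [h3, ha, zpow_one]
  rw [h2, ← Finset.prod_mul_distrib]
  refine Finset.prod_congr rfl fun s _ => ?_
  rw [← mul_zpow, qd_mul]

theorem Comb.map_hom {𝒢' : Type*} [Groupoid 𝒢'] {X' Y' : 𝒢'} (a : S → ℤ)
    {α : S → (X ⟶ Y)} {γ : X ⟶ Y} (h : Comb a α γ) (φ : End X →* End X') (ψ : (X ⟶ Y) → (X' ⟶ Y'))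
    (hφ : ∀ p q : X ⟶ Y, φ (show End X from p ≫ Groupoid.inv q) = ψ p ≫ Groupoid.inv (ψ q)) :
    Comb a (fun s => ψ (α s)) (ψ γ) := by
  have hq : ∀ p q : X ⟶ Y, Abelianization.map φ (qd p q) = qd (ψ p) (ψ q) := by
    intro p q
    unfold qd
    rw [Abelianization.map_of, hφ]
  intro s0
  rw [← hq, h s0, map_prod]
  refine Finset.prod_congr rfl fun s _ => ?_
  rw [map_zpow, hq]

theorem Comb.unique (a : S → ℤ) [Nonempty S] {α : S → (X ⟶ Y)} {γ γ' : X ⟶ Y} (h : Comb a α γ) (h' : Comb a α γ')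
    (hc : ∀ p q : X ⟶ X, p ≫ q = q ≫ p) : γ = γ' := by
  obtain ⟨s0⟩ := ‹Nonempty S›
  have h1 := (h s0).trans (h' s0).symm
  unfold qd at h1
  let _ : CommGroup (End X) := { (inferInstance : Group (End X)) with mul_comm := fun p q => hc q p }
  have h2 : (show End X from γ ≫ Groupoid.inv (α s0)) = (show End X from γ' ≫ Groupoid.inv (α s0)) := by
    have h3 := congrArg (Abelianization.lift (MonoidHom.id (End X))) h1
    simpa using h3
  have h3 : γ ≫ Groupoid.inv (α s0) = γ' ≫ Groupoid.inv (α s0) := h2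
  have h4 := congrArg (fun z => z ≫ α s0) h3
  simpa using h4

theorem Comb.reindex (a : S → ℤ) (σ : S ≃ S) (hσ : ∀ s, a (σ s) = a s) {α : S → (X ⟶ Y)} {γ : X ⟶ Y}
    (h : Comb a α γ) : Comb a (fun s => α (σ s)) γ := by
  intro s0
  rw [h (σ s0), ← Equiv.prod_comp σ]
  simp only [hσ]

end grp

section path
variable {T : Type*} [TopologicalSpace T] {S : Type} [Fintype S]

def hm {x y : T} (p : Path x y) : FundamentalGroupoid.mk x ⟶ FundamentalGroupoid.mk y :=
  FundamentalGroupoid.fromPath (Path.Homotopic.Quotient.mk p)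

theorem hm_eq {x y : T} {p q : Path x y} : hm p = hm q ↔ p.Homotopic q :=
  FundamentalGroupoid.fromPath_eq_iff_homotopic p q

theorem hm_surj {x y : T} (z : FundamentalGroupoid.mk x ⟶ FundamentalGroupoid.mk y) : ∃ p : Path x y, hm p = z :=
  Quotient.exists_rep z

theorem hm_trans {x y z : T} (p : Path x y) (q : Path y z) : hm (p.trans q) = hm p ≫ hm q := rfl

def PComb (a : S → ℤ) {x y : T} (α : S → Path x y) (γ : Path x y) : Prop :=
  Comb a (fun s => hm (α s)) (hm γ)

theorem PComb.exists (a : S → ℤ) (ha : ∑ s, a s = 1) {x y : T} (α : S → Path x y) : ∃ γ, PComb a α γ := by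
  obtain ⟨z, hz⟩ := Comb.exists a ha (fun s => hm (α s))
  obtain ⟨p, rfl⟩ := hm_surj z
  exact ⟨p, hz⟩

theorem PComb.map {T' : Type*} [TopologicalSpace T'] (a : S → ℤ) {x y : T} {α : S → Path x y} {γ : Path x y}
    (h : PComb a α γ) (f : T → T') (hf : Continuous f) {x' y' : T'} {α' : S → Path x' y'} {γ' : Path x' y'}
    (h1 : ∀ s t, α' s t = f (α s t)) (h2 : ∀ t, γ' t = f (γ t)) : PComb a α' γ' := by
  have hx : x' = f x := by have := h2 0; simpa using this
  have hy : y' = f y := by have := h2 1; simpa using this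
  subst hx hy
  have e1 : α' = fun s => (α s).map hf := by
    funext s; ext t; exact h1 s t
  have e2 : γ' = γ.map hf := by ext t; exact h2 t
  subst e1 e2
  let F := FundamentalGroupoid.map (⟨f, hf⟩ : C(T, T'))
  have hF : ∀ p : Path x y, hm (p.map hf) = F.map (hm p) := fun p => rfl
  exact Comb.map_hom (Y := FundamentalGroupoid.mk y) a h (F.mapEnd _)
    (fun p => F.map p) (by
      intro p q
      show F.map (p ≫ Groupoid.inv q) = _
      rw [F.map_comp]
      congr 1
      rw [Groupoid.inv_eq_inv, Groupoid.inv_eq_inv, Functor.map_inv])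

theorem PComb.congr (a : S → ℤ) {x y : T} {α α' : S → Path x y} {γ γ' : Path x y}
    (h : PComb a α γ) (h1 : ∀ s, (α s).Homotopic (α' s)) (h2 : γ.Homotopic γ') : PComb a α' γ' := by
  unfold PComb at *
  have e1 : (fun s => hm (α s)) = fun s => hm (α' s) := by
    funext s; exact hm_eq.2 (h1 s)
  rwa [e1, hm_eq.2 h2] at h

theorem PComb.reindex (a : S → ℤ) (σ : S ≃ S) (hσ : ∀ s, a (σ s) = a s) {x y : T} {α : S → Path x y}
    {γ : Path x y} (h : PComb a α γ) : PComb a (fun s => α (σ s)) γ :=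
  Comb.reindex a σ hσ h

theorem PComb.precomp (a : S → ℤ) {x' x y : T} (δ : Path x' x) {α : S → Path x y}
    {γ : Path x y} (h : PComb a α γ) : PComb a (fun s => δ.trans (α s)) (δ.trans γ) := by
  unfold PComb at *
  simp only [hm_trans]
  refine Comb.map_hom (Y := FundamentalGroupoid.mk y) a h
    { toFun := fun w => (show FundamentalGroupoid.mk x' ⟶ FundamentalGroupoid.mk x' from
        hm δ ≫ (show FundamentalGroupoid.mk x ⟶ FundamentalGroupoid.mk x from w) ≫ Groupoid.inv (hm δ))
      map_one' := by
        show hm δ ≫ 𝟙 _ ≫ Groupoid.inv (hm δ) = 𝟙 _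
        simp
      map_mul' := by
        intro w z
        show hm δ ≫ (_ ≫ _) ≫ Groupoid.inv (hm δ) = (hm δ ≫ _ ≫ Groupoid.inv (hm δ)) ≫ (hm δ ≫ _ ≫ Groupoid.inv (hm δ))
        simp } (fun p => hm δ ≫ p) ?_
  intro p q
  show hm δ ≫ (p ≫ Groupoid.inv q) ≫ Groupoid.inv (hm δ) = (hm δ ≫ p) ≫ Groupoid.inv (hm δ ≫ q)
  simp

theorem PComb.unique (a : S → ℤ) [Nonempty S] {x y : T} {α : S → Path x y} {γ γ' : Path x y}
    (h : PComb a α γ) (h' : PComb a α γ')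
    (hc : ∀ p q : Path x x, (p.trans q).Homotopic (q.trans p)) : γ.Homotopic γ' := by
  rw [← hm_eq]
  refine Comb.unique a h h' fun p q => ?_
  obtain ⟨p, rfl⟩ := hm_surj p
  obtain ⟨q, rfl⟩ := hm_surj q
  rw [← hm_trans, ← hm_trans, hm_eq]
  exact hc p q

end path
end SG

end

section
namespace SG
open unitInterval

structure Dat (G Q Λ S : Type) [Group G] [Fintype Q] [PartialOrder Q] [MulAction G Q] [Fintype Λ]
    [MulAction G Λ] [Fintype S] [MulAction G S] (m : ℕ) where
  two_le : 2 ≤ m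
  ne : Nonempty Λ
  rank : Q → ℕ
  rank_lt : ∀ q q', q < q' → rank q < rank q'
  rank_le : ∀ q, rank q ≤ m + 1
  lab : Q → Λ
  c : S → Q → ℕ
  c_le : ∀ s q, c s q ≤ m
  c_le_rank : ∀ s q, c s q ≤ rank q
  sl : S → Q → Λ
  sl_eq : ∀ s q q', q ≤ q' → c s q = c s q' → sl s q = sl s q'
  free : ∀ (g : G) (l : Λ), g • l = l → g = 1
  smul_le : ∀ (g : G) (q q' : Q), q ≤ q' → g • q ≤ g • q'
  rank_smul : ∀ (g : G) q, rank (g • q) = rank q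
  lab_smul : ∀ (g : G) q, lab (g • q) = g • lab q
  c_smul : ∀ (g : G) s q, c (g • s) (g • q) = c s q
  sl_smul : ∀ (g : G) s q, sl (g • s) (g • q) = g • sl s q
  a : S → ℤ
  a_smul : ∀ (g : G) s, a (g • s) = a s
  a_sum : ∑ s, a s = 1
  lower : ∀ q, m ≤ rank q → ∃ q', q' < q ∧ rank q' < m

section push
variable {J C Λ : Type} [Fintype J] [Fintype C] [Fintype Λ]

open Classical in
def push (v : J → C × Λ) (x : J → ℝ) : C × Λ → ℝ := fun w => ∑ j, if v j = w then x j else 0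

theorem push_cont (v : J → C × Λ) : Continuous (push v) := by
  classical
  refine continuous_pi fun w => continuous_finsetSum _ fun j _ => ?_
  split_ifs <;> fun_prop

theorem push_lin (v : J → C × Λ) (a b : ℝ) (x y : J → ℝ) :
    push v (fun j => a * x j + b * y j) = fun w => a * push v x w + b * push v y w := by
  classical
  funext w
  simp only [push, Finset.mul_sum, ← Finset.sum_add_distrib]
  refine Finset.sum_congr rfl fun j _ => ?_
  split_ifs <;> simp

theorem push_zero (v : J → C × Λ) : push v (fun _ => 0) = fun _ => 0 := by
  funext w; simp [push]

theorem push_sum {J' : Type} [Fintype J'] (v : J → C × Λ) (v' : J' → C × Λ) (x : J → ℝ) (x' : J' → ℝ) :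
    push (Sum.elim v v') (Sum.elim x x') = fun w => push v x w + push v' x' w := by
  funext w
  unfold push
  rw [Fintype.sum_sum_type]
  rfl

theorem push_mem (v : J → C × Λ) (x : J → ℝ) (h0 : ∀ j, 0 ≤ x j) (h1 : ∑ j, x j = 1)
    (h : ∀ j j', x j ≠ 0 → x j' ≠ 0 → (v j).1 = (v j').1 → v j = v j') : push v x ∈ YY C Λ := by
  classical
  refine ⟨fun w => Finset.sum_nonneg fun j _ => ?_, ?_, fun c g g' hg => ?_⟩
  · split_ifs
    · exact h0 j
    · exact le_rfl
  · unfold push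
    rw [Finset.sum_comm, ← h1]
    refine Finset.sum_congr rfl fun j _ => ?_
    simp
  · by_contra hne
    obtain ⟨h2, h3⟩ := mul_ne_zero_iff.1 hne
    obtain ⟨j, -, hj⟩ := Finset.exists_ne_zero_of_sum_ne_zero h2
    obtain ⟨j', -, hj'⟩ := Finset.exists_ne_zero_of_sum_ne_zero h3
    rw [ne_eq, ite_eq_right_iff, Classical.not_imp] at hj hj'
    have := h j j' hj.2 hj'.2 (by rw [hj.1, hj'.1])
    rw [hj.1, hj'.1] at this
    exact hg (Prod.ext_iff.1 this).2

variable {G : Type} [Group G] [MulAction G Λ] [MulAction G J]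

def gY (g : G) (y : C × Λ → ℝ) : C × Λ → ℝ := fun w => y (w.1, g⁻¹ • w.2)
def gX (g : G) (x : J → ℝ) : J → ℝ := fun q => x (g⁻¹ • q)

theorem gX_mul (g h : G) (x : J → ℝ) : gX (g * h) x = gX g (gX h x) := by
  funext q; simp [gX, mul_smul]
theorem gY_mul (g h : G) (x : C × Λ → ℝ) : gY (g * h) x = gY g (gY h x) := by
  funext q; simp [gY, mul_smul]
theorem gX_one (x : J → ℝ) : gX (1 : G) x = x := by
  funext q; simp [gX]
theorem gY_one (x : C × Λ → ℝ) : gY (1 : G) x = x := by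
  funext q; simp [gY]
theorem gX_inv_gX (g : G) (x : J → ℝ) : gX g⁻¹ (gX g x) = x := by
  rw [← gX_mul, inv_mul_cancel, gX_one]
theorem gX_gX_inv (g : G) (x : J → ℝ) : gX g (gX g⁻¹ x) = x := by
  rw [← gX_mul, mul_inv_cancel, gX_one]
theorem gX_cont (g : G) : Continuous (gX g : (J → ℝ) → (J → ℝ)) := by unfold gX; fun_prop
theorem gY_cont (g : G) : Continuous (gY g : (C × Λ → ℝ) → (C × Λ → ℝ)) := by unfold gY; fun_prop

theorem gY_mem (g : G) {y : C × Λ → ℝ} (h : y ∈ YY C Λ) : gY g y ∈ YY C Λ := by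
  obtain ⟨h1, h2, h3⟩ := h
  refine ⟨fun w => h1 _, ?_, fun c l l' hl => h3 _ _ _ (by simpa using hl)⟩
  rw [← h2]
  exact Equiv.sum_comp (Equiv.prodCongr (Equiv.refl C) (MulAction.toPerm g⁻¹)) y

theorem push_gY (g : G) (v v' : J → C × Λ) (x x' : J → ℝ)
    (hv : ∀ j, v' (g • j) = ((v j).1, g • (v j).2)) (hx : ∀ j, x' (g • j) = x j) :
    push v' x' = gY g (push v x) := by
  classical
  funext w
  simp only [push, gY]
  rw [← Equiv.sum_comp (MulAction.toPerm g)]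
  refine Finset.sum_congr rfl fun j _ => ?_
  simp only [MulAction.toPerm_apply, hv, hx]
  congr 1
  refine propext ⟨?_, ?_⟩
  · rintro rfl; simp
  · intro h; rw [h]; simp

end push

section rr
variable {Q : Type} [Fintype Q] [PartialOrder Q]

theorem RR_comparable {p : Q → Prop} {x : Q → ℝ} (hx : x ∈ RR p) {q q' : Q} (h : x q ≠ 0) (h' : x q' ≠ 0) :
    q ≤ q' ∨ q' ≤ q := by
  by_contra hne
  exact mul_ne_zero h h' (hx.2.2.2 q q' hne)

theorem RR_p {p : Q → Prop} {x : Q → ℝ} (hx : x ∈ RR p) {q : Q} (h : x q ≠ 0) : p q := by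
  by_contra hne
  exact h (hx.2.2.1 q hne)

theorem RR_mono {p p' : Q → Prop} (h : ∀ q, p q → p' q) : RR p ⊆ RR p' :=
  fun x hx => ⟨hx.1, hx.2.1, fun q hq => hx.2.2.1 q fun hp => hq (h q hp), hx.2.2.2⟩

theorem RR_closed (p : Q → Prop) : IsClosed (RR p) := by
  have : RR p = (⋂ q, {x : Q → ℝ | 0 ≤ x q}) ∩ {x | ∑ q, x q = 1} ∩ (⋂ q, ⋂ _ : ¬ p q, {x | x q = 0}) ∩
      ⋂ q, ⋂ q', ⋂ _ : ¬ (q ≤ q' ∨ q' ≤ q), {x | x q * x q' = 0} := by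
    ext x
    simp only [RR, Set.mem_ofPred_eq, Set.mem_inter_iff, Set.mem_iInter, and_assoc]
  rw [this]
  refine ((IsClosed.inter ?_ ?_).inter ?_).inter ?_
  · exact isClosed_iInter fun q => isClosed_le continuous_const (continuous_apply q)
  · exact isClosed_eq (by fun_prop) continuous_const
  · exact isClosed_iInter fun q => isClosed_iInter fun _ => isClosed_eq (continuous_apply q) continuous_const
  · exact isClosed_iInter fun q => isClosed_iInter fun q' => isClosed_iInter fun _ =>
      isClosed_eq (by fun_prop) continuous_const

theorem RR_le_one {p : Q → Prop} {x : Q → ℝ} (hx : x ∈ RR p) (q : Q) : x q ≤ 1 := by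
  rw [← hx.2.1]
  exact Finset.single_le_sum (fun q _ => hx.1 q) (Finset.mem_univ q)

theorem RR_compact (p : Q → Prop) : IsCompact (RR p) := by
  refine (isCompact_univ_pi (fun _ : Q => isCompact_Icc (a := (0:ℝ)) (b := 1))).of_isClosed_subset (RR_closed p) ?_
  intro x hx q _
  exact ⟨hx.1 q, RR_le_one hx q⟩

instance (p : Q → Prop) : CompactSpace (RR p) := isCompact_iff_compactSpace.1 (RR_compact p)

variable {G : Type} [Group G] [MulAction G Q]

theorem gX_mem {p p' : Q → Prop} (g : G) (hG : ∀ (g : G) (q q' : Q), q ≤ q' → g • q ≤ g • q')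
    (hp : ∀ q, p q → p' (g • q)) {x : Q → ℝ} (hx : x ∈ RR p) : gX g x ∈ RR p' := by
  refine ⟨fun q => hx.1 _, ?_, fun q hq => hx.2.2.1 _ fun h => hq ?_, fun q q' h => hx.2.2.2 _ _ fun h' => h ?_⟩
  · rw [← hx.2.1]; exact Equiv.sum_comp (MulAction.toPerm g⁻¹) x
  · have := hp _ h; rwa [smul_inv_smul] at this
  · refine h'.imp (fun h1 => ?_) (fun h1 => ?_)
    · have := hG g _ _ h1; rwa [smul_inv_smul, smul_inv_smul] at this
    · have := hG g _ _ h1; rwa [smul_inv_smul, smul_inv_smul] at this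

end rr

section maps
variable {G Q Λ S : Type} [Group G] [Fintype Q] [PartialOrder Q] [MulAction G Q] [Fintype Λ]
    [MulAction G Λ] [Fintype S] [MulAction G S] {m : ℕ} (D : Dat G Q Λ S m)
namespace Dat

abbrev Yt (_ : Dat G Q Λ S m) : Type := YY (Fin (m+1)) Λ

def vt (s : S) (q : Q) : Fin (m+1) × Λ := (⟨D.c s q, Nat.lt_succ_of_le (D.c_le s q)⟩, D.sl s q)
def vu (q : Q) : Fin (m+1) × Λ := (⟨min (D.rank q + 1) m, by omega⟩, D.lab q)

def tt (s : S) : (Q → ℝ) → (Fin (m+1) × Λ → ℝ) := push (D.vt s)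
def uu : (Q → ℝ) → (Fin (m+1) × Λ → ℝ) := push D.vu

theorem rank_inj {p : Q → Prop} {x : Q → ℝ} (hx : x ∈ RR p) {q q' : Q} (h : x q ≠ 0) (h' : x q' ≠ 0)
    (hr : D.rank q = D.rank q') : q = q' := by
  rcases RR_comparable hx h h' with h1 | h1
  · rcases h1.eq_or_lt with h2 | h2
    · exact h2
    · exact absurd hr (D.rank_lt _ _ h2).ne
  · rcases h1.eq_or_lt with h2 | h2
    · exact h2.symm
    · exact absurd hr.symm (D.rank_lt _ _ h2).ne

theorem vt_inj (s : S) {p : Q → Prop} {x : Q → ℝ} (hx : x ∈ RR p) {q q' : Q} (h : x q ≠ 0) (h' : x q' ≠ 0)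
    (hc : (D.vt s q).1 = (D.vt s q').1) : D.vt s q = D.vt s q' := by
  have hc' : D.c s q = D.c s q' := congrArg Fin.val hc
  refine Prod.ext hc ?_
  rcases RR_comparable hx h h' with h1 | h1
  · exact D.sl_eq s _ _ h1 hc'
  · exact (D.sl_eq s _ _ h1 hc'.symm).symm

theorem tt_mem (s : S) {p : Q → Prop} {x : Q → ℝ} (hx : x ∈ RR p) : D.tt s x ∈ YY (Fin (m+1)) Λ :=
  push_mem _ _ hx.1 hx.2.1 fun _ _ h h' hc => D.vt_inj s hx h h' hc

theorem vu_inj {p : Q → Prop} (hp : ∀ q, p q → D.rank q < m) {x : Q → ℝ} (hx : x ∈ RR p) {q q' : Q}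
    (h : x q ≠ 0) (h' : x q' ≠ 0) (hc : (D.vu q).1 = (D.vu q').1) : D.vu q = D.vu q' := by
  have hc' : min (D.rank q + 1) m = min (D.rank q' + 1) m := congrArg Fin.val hc
  have h1 := hp _ (RR_p hx h)
  have h2 := hp _ (RR_p hx h')
  rw [D.rank_inj hx h h' (by omega)]

theorem uu_mem {p : Q → Prop} (hp : ∀ q, p q → D.rank q < m) {x : Q → ℝ} (hx : x ∈ RR p) :
    D.uu x ∈ YY (Fin (m+1)) Λ :=
  push_mem _ _ hx.1 hx.2.1 fun _ _ h h' hc => D.vu_inj hp hx h h' hc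

open Classical in
def low (τ : ℝ) (x : Q → ℝ) (q : Q) : ℝ :=
  min (x q) (max 0 ((1 - τ) - ∑ q', if D.rank q' < D.rank q then x q' else 0))

def hh (s : S) (τ : ℝ) (x : Q → ℝ) : Fin (m+1) × Λ → ℝ :=
  fun w => push (D.vt s) (D.low τ x) w + push D.vu (fun q => x q - D.low τ x q) w

theorem low_cont : Continuous (fun p : ℝ × (Q → ℝ) => D.low p.1 p.2) := by
  classical
  refine continuous_pi fun q => ?_
  unfold low
  refine Continuous.min (by fun_prop) (continuous_const.max ?_)
  refine Continuous.sub (by fun_prop) (continuous_finsetSum _ fun q' _ => ?_)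
  split_ifs <;> fun_prop

theorem hh_cont (s : S) : Continuous (fun p : ℝ × (Q → ℝ) => D.hh s p.1 p.2) := by
  have h := D.low_cont
  refine continuous_pi fun w => ?_
  unfold hh
  refine Continuous.add ?_ ?_
  · exact (continuous_apply w).comp ((push_cont _).comp h)
  · refine (continuous_apply w).comp ((push_cont _).comp ?_)
    refine continuous_pi fun q => Continuous.sub (by fun_prop) ((continuous_apply q).comp h)

theorem hh_mem (s : S) {p : Q → Prop} (hp : ∀ q, p q → D.rank q < m) {x : Q → ℝ} (hx : x ∈ RR p) (τ : ℝ) :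
    D.hh s τ x ∈ YY (Fin (m+1)) Λ := by
  classical
  have h0 : ∀ q, 0 ≤ D.low τ x q := fun q => le_min (hx.1 q) (le_max_left _ _)
  have h1 : ∀ q, D.low τ x q ≤ x q := fun q => min_le_left _ _
  have hlx : ∀ q, D.low τ x q ≠ 0 → x q ≠ 0 := by
    intro q h h2; exact h (le_antisymm (h2 ▸ h1 q) (h0 q))
  have hhx : ∀ q, x q - D.low τ x q ≠ 0 → x q ≠ 0 := by
    intro q h h2; apply h; have := h0 q; have := h1 q; linarith
  have hlh : ∀ q q', D.low τ x q ≠ 0 → x q' - D.low τ x q' ≠ 0 → D.rank q ≤ D.rank q' := by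
    intro q q' ha hb
    by_contra hlt
    push Not at hlt
    have e1 : 0 < (1 - τ) - ∑ q', if D.rank q' < D.rank q then x q' else 0 := by
      by_contra hcon
      apply ha
      unfold low
      rw [max_eq_left (not_lt.1 hcon)]
      exact min_eq_right (hx.1 q)
    have e2 : (1 - τ) - (∑ q'', if D.rank q'' < D.rank q' then x q'' else 0) < x q' := by
      by_contra hcon
      apply hb
      unfold low
      rw [min_eq_left ((not_lt.1 hcon).trans (le_max_right _ _)), sub_self]
    have e3 : (∑ q'', if D.rank q'' < D.rank q' then x q'' else 0) + x q' ≤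
        ∑ q', if D.rank q' < D.rank q then x q' else 0 := by
      have : x q' = ∑ q'', if q'' = q' then x q'' else 0 := by simp
      conv_lhs => rw [this]
      rw [← Finset.sum_add_distrib]
      refine Finset.sum_le_sum fun r _ => ?_
      have := hx.1 r
      by_cases hr : r = q'
      · subst hr; simp [hlt]
      · simp only [hr, if_false, add_zero]
        split_ifs with k1 k2
        · exact le_rfl
        · omega
        · exact this
        · exact le_rfl
    linarith
  have : D.hh s τ x = push (Sum.elim (D.vt s) D.vu) (Sum.elim (D.low τ x) (fun q => x q - D.low τ x q)) := by
    rw [push_sum]; rfl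
  rw [this]
  refine push_mem _ _ ?_ ?_ ?_
  · rintro (q | q)
    · exact h0 q
    · exact sub_nonneg.2 (h1 q)
  · simp [← hx.2.1]
  · have key : ∀ q q', D.low τ x q ≠ 0 → x q' - D.low τ x q' ≠ 0 → (D.vt s q).1 ≠ (D.vu q').1 := by
      intro q q' ha hb hc
      have hc' : D.c s q = min (D.rank q' + 1) m := congrArg Fin.val hc
      have := hlh q q' ha hb
      have := D.c_le_rank s q
      have := hp _ (RR_p hx (hhx q' hb))
      omega
    rintro (q | q) (q' | q') ha hb hc
    · exact D.vt_inj s hx (hlx _ ha) (hlx _ hb) hc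
    · exact absurd hc (key q q' ha hb)
    · exact absurd hc.symm (key q' q hb ha)
    · exact D.vu_inj hp hx (hhx _ ha) (hhx _ hb) hc

theorem hh_zero (s : S) {p : Q → Prop} {x : Q → ℝ} (hx : x ∈ RR p) : D.hh s 0 x = D.tt s x := by
  classical
  have hl : D.low 0 x = x := by
    funext q
    unfold low
    refine min_eq_left (le_trans ?_ (le_max_right _ _))
    rw [sub_zero, ← hx.2.1, le_sub_iff_add_le]
    have : x q = ∑ q'', if q'' = q then x q'' else 0 := by simp
    conv_lhs => rw [this]
    rw [← Finset.sum_add_distrib]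
    refine Finset.sum_le_sum fun r _ => ?_
    have := hx.1 r
    by_cases hr : r = q
    · subst hr; simp
    · simp only [hr, if_false, zero_add]
      split_ifs
      · exact le_rfl
      · exact this
  funext w
  simp only [hh, hl, sub_self, push_zero, add_zero, tt]

theorem hh_one (s : S) {p : Q → Prop} {x : Q → ℝ} (hx : x ∈ RR p) : D.hh s 1 x = D.uu x := by
  classical
  have hl : D.low 1 x = fun _ => 0 := by
    funext q
    unfold low
    have : 0 ≤ ∑ q', if D.rank q' < D.rank q then x q' else 0 := Finset.sum_nonneg fun r _ => by
      split_ifs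
      · exact hx.1 r
      · exact le_rfl
    rw [max_eq_left (by linarith)]
    exact min_eq_right (hx.1 q)
  funext w
  simp only [hh, hl, sub_zero, push_zero, zero_add, uu]

theorem vt_smul (g : G) (s : S) (q : Q) : D.vt (g • s) (g • q) = ((D.vt s q).1, g • (D.vt s q).2) := by
  refine Prod.ext (Fin.ext (D.c_smul g s q)) (D.sl_smul g s q)

theorem vu_smul (g : G) (q : Q) : D.vu (g • q) = ((D.vu q).1, g • (D.vu q).2) := by
  refine Prod.ext (Fin.ext ?_) (D.lab_smul g q)
  simp [vu, D.rank_smul]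

theorem gX_smul (g : G) (x : Q → ℝ) (q : Q) : gX g x (g • q) = x q := by simp [gX]

theorem tt_smul (g : G) (s : S) (x : Q → ℝ) : D.tt (g • s) (gX g x) = gY g (D.tt s x) :=
  push_gY g _ _ _ _ (D.vt_smul g s) (gX_smul g x)

theorem uu_smul (g : G) (x : Q → ℝ) : D.uu (gX g x) = gY g (D.uu x) :=
  push_gY g _ _ _ _ (D.vu_smul g) (gX_smul g x)

theorem low_smul (g : G) (τ : ℝ) (x : Q → ℝ) (q : Q) : D.low τ (gX g x) (g • q) = D.low τ x q := by
  classical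
  unfold low
  rw [gX_smul, ← Equiv.sum_comp (MulAction.toPerm g)]
  simp only [MulAction.toPerm_apply, D.rank_smul, gX_smul]

theorem hh_smul (g : G) (s : S) (τ : ℝ) (x : Q → ℝ) : D.hh (g • s) τ (gX g x) = gY g (D.hh s τ x) := by
  funext w
  unfold hh
  rw [push_gY g (D.vt s) _ _ _ (D.vt_smul g s) (D.low_smul g τ x),
    push_gY g D.vu _ (fun q => x q - D.low τ x q) _ (D.vu_smul g) (fun q => by rw [gX_smul, D.low_smul])]
  rfl

end Dat
end maps
end SG

end

section
namespace SG
open unitInterval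

section paths
variable {W V : Type} [TopologicalSpace W] [TopologicalSpace V]

def mkP (F : I × W → V) (hF : Continuous F) (x y : C(W, V)) (h0 : ∀ w, F (0, w) = x w)
    (h1 : ∀ w, F (1, w) = y w) : Path x y where
  toContinuousMap := ContinuousMap.curry ⟨F, hF⟩
  source' := by ext w; exact h0 w
  target' := by ext w; exact h1 w

theorem mkP_apply (F : I × W → V) (hF : Continuous F) (x y : C(W, V)) (h0 : ∀ w, F (0, w) = x w)
    (h1 : ∀ w, F (1, w) = y w) (t : I) (w : W) : mkP F hF x y h0 h1 t w = F (t, w) := rfl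

theorem hom_of {x y : C(W, V)} {p q : Path x y} (F : (I × I) × W → V) (hF : Continuous F)
    (h0 : ∀ t w, F ((0, t), w) = p t w) (h1 : ∀ t w, F ((1, t), w) = q t w)
    (hl : ∀ s w, F ((s, 0), w) = x w) (hr : ∀ s w, F ((s, 1), w) = y w) : p.Homotopic q := by
  refine ⟨{ toContinuousMap := ContinuousMap.curry ⟨F, hF⟩, map_zero_left := ?_, map_one_left := ?_, prop' := ?_ }⟩
  · intro t; ext w; exact h0 t w
  · intro t; ext w; exact h1 t w
  · rintro s t (rfl | rfl)
    · ext w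
      exact (hl s w).trans (by simp)
    · ext w
      exact (hr s w).trans (by simp)

theorem path_cont [LocallyCompactSpace W] {x y : C(W, V)} (p : Path x y) :
    Continuous fun z : I × W => p z.1 z.2 := by fun_prop

theorem trans_map {T T' : Type*} [TopologicalSpace T] [TopologicalSpace T'] (f : T → T') {x y z : T}
    {p : Path x y} {q : Path y z} {x' y' z' : T'} {p' : Path x' y'} {q' : Path y' z'}
    (hp : ∀ t, p' t = f (p t)) (hq : ∀ t, q' t = f (q t)) (t : I) :
    (p'.trans q') t = f ((p.trans q) t) := by
  rw [Path.trans_apply, Path.trans_apply]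
  split_ifs
  · exact hp _
  · exact hq _

theorem homotopic_map {T T' : Type*} [TopologicalSpace T] [TopologicalSpace T'] (f : T → T') (hf : Continuous f)
    {x y : T} {p q : Path x y} {x' y' : T'} {p' q' : Path x' y'}
    (hp : ∀ t, p' t = f (p t)) (hq : ∀ t, q' t = f (q t)) (h : p.Homotopic q) : p'.Homotopic q' := by
  have hx : x' = f x := by have := hp 0; simpa using this
  have hy : y' = f y := by have := hp 1; simpa using this
  subst hx hy
  have e1 : p' = p.map hf := by ext t; exact hp t
  have e2 : q' = q.map hf := by ext t; exact hq t
  subst e1 e2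
  exact h.map ⟨f, hf⟩

/-- the square lemma -/
theorem square {T : Type*} [TopologicalSpace T] {x y z : T} {P0 : Path x z} {c : Path x y} {γ : Path y z}
    (h : P0.Homotopic (c.trans γ)) : ∃ S : I × I → T, Continuous S ∧
      (∀ t : I, S (1, t) = P0 (Set.projIcc 0 1 zero_le_one (2 * t : ℝ))) ∧ (∀ t, S (0, t) = c t) ∧
      (∀ r, S (r, 1) = γ r) ∧ (∀ r, S (r, 0) = x) := by
  obtain ⟨H⟩ := h.symm
  let pr : ℝ → I := Set.projIcc 0 1 zero_le_one
  have hpr : Continuous pr := continuous_projIcc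
  have prv : ∀ u : ℝ, 0 ≤ u → u ≤ 1 → (pr u : ℝ) = u := by
    intro u h0 h1
    show ((Set.projIcc 0 1 zero_le_one u : I) : ℝ) = u
    rw [Set.projIcc_of_mem zero_le_one ⟨h0, h1⟩]
  have pr0 : ∀ u : ℝ, u ≤ 0 → pr u = 0 := fun u hu => Set.projIcc_of_le_left _ hu
  have pr1 : ∀ u : ℝ, 1 ≤ u → pr u = 1 := fun u hu => Set.projIcc_of_right_le _ hu
  let S : ℝ → ℝ → T := fun r t => H (pr (r * min 1 (2 - 2 * t)), pr ((1 - r) * t / 2 + r * min (2 * t) 1))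
  have hS : ∀ (r t u v : ℝ), u = r * min 1 (2 - 2 * t) → v = (1 - r) * t / 2 + r * min (2 * t) 1 →
      S r t = H (pr u, pr v) := by
    rintro r t u v rfl rfl; rfl
  refine ⟨fun a => S a.1 a.2, ?_, fun t => ?_, fun t => ?_, fun r => ?_, fun r => ?_⟩
  · fun_prop
  · by_cases ht : (t : ℝ) ≤ 1/2
    · show S ((1:I):ℝ) t = P0 (pr (2 * t))
      rw [hS _ _ 1 (2 * t) (by rw [min_eq_left (by linarith)]; simp) (by rw [min_eq_left (by linarith)]; simp),
        pr1 1 le_rfl]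
      simp
    · show S ((1:I):ℝ) t = P0 (pr (2 * t))
      rw [hS _ _ (2 - 2 * t) 1 (by rw [min_eq_right (by linarith)]; simp) (by rw [min_eq_right (by linarith)]; simp),
        pr1 1 le_rfl, pr1 (2 * t) (by linarith)]
      simp
  · have ht0 := t.2.1
    have ht1 := t.2.2
    show S ((0:I):ℝ) t = c t
    rw [hS _ _ 0 (t / 2) (by simp) (by simp), pr0 0 le_rfl]
    simp only [ContinuousMap.HomotopyWith.apply_zero, Path.coe_toContinuousMap]
    rw [Path.trans_apply]
    have h2 : (pr (t / 2) : ℝ) = t / 2 := prv _ (by linarith) (by linarith)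
    rw [dif_pos (by rw [h2]; linarith)]
    congr 1
    apply Subtype.ext
    simp only [h2]
    ring
  · have hr0 := r.2.1
    have hr1 := r.2.2
    show S r ((1:I):ℝ) = γ r
    rw [hS _ _ 0 ((1 + r) / 2) (by simp) (by rw [min_eq_right (by norm_num)]; simp; ring), pr0 0 le_rfl]
    simp only [ContinuousMap.HomotopyWith.apply_zero, Path.coe_toContinuousMap]
    rw [Path.trans_apply]
    have h2 : (pr ((1 + r) / 2) : ℝ) = (1 + r) / 2 := prv _ (by linarith) (by linarith)
    split_ifs with h3
    · rw [h2] at h3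
      have hr : r = 0 := Subtype.ext (show (r:ℝ) = 0 by linarith)
      subst hr
      have : ∀ h, (⟨2 * (pr ((1 + (0:I)) / 2) : ℝ), h⟩ : I) = 1 := by
        intro h; apply Subtype.ext; simp only [h2]; simp
      rw [this]; simp
    · congr 1
      apply Subtype.ext
      simp only [h2]
      ring
  · show S r ((0:I):ℝ) = x
    rw [hS _ _ _ 0 rfl (by simp), pr0 0 le_rfl]
    simp

end paths

section seg
variable {W C Λ : Type} [TopologicalSpace W] [LocallyCompactSpace W] [Fintype C] [Fintype Λ]

theorem seg_hom {x y : C(W, YY C Λ)} {p q : Path x y}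
    (h : ∀ (t : I) (w : W) (τ : ℝ), 0 ≤ τ → τ ≤ 1 →
      (fun i => (1 - τ) * (p t w).1 i + τ * (q t w).1 i) ∈ YY C Λ) : p.Homotopic q := by
  have hp := path_cont p
  have hq := path_cont q
  refine hom_of (fun z => ⟨fun i => (1 - (z.1.1 : ℝ)) * (p z.1.2 z.2).1 i + z.1.1 * (q z.1.2 z.2).1 i,
    h _ _ _ z.1.1.2.1 z.1.1.2.2⟩) ?_ ?_ ?_ ?_ ?_
  · refine Continuous.subtype_mk (continuous_pi fun i => ?_) _
    have e1 : Continuous fun z : (I × I) × W => (p z.1.2 z.2).1 i :=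
      (continuous_apply i).comp (continuous_subtype_val.comp (hp.comp (by fun_prop : Continuous fun z : (I × I) × W => (z.1.2, z.2))))
    have e2 : Continuous fun z : (I × I) × W => (q z.1.2 z.2).1 i :=
      (continuous_apply i).comp (continuous_subtype_val.comp (hq.comp (by fun_prop : Continuous fun z : (I × I) × W => (z.1.2, z.2))))
    exact Continuous.add (Continuous.mul (by fun_prop) e1) (Continuous.mul (by fun_prop) e2)
  · intro t w; apply Subtype.ext; funext i; simp
  · intro t w; apply Subtype.ext; funext i; simp
  · intro t w; apply Subtype.ext; funext i; simp; ring
  · intro t w; apply Subtype.ext; funext i; simp; ring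

theorem ext_sq {m : ℕ} {Z : Type} [TopologicalSpace Z] [CompactSpace Z] [LocallyCompactSpace Z] [Nonempty Λ] {ι : Type} [Finite ι]
    {K : ι → Set Z} (hK : ∀ i, IsClosed (K i)) (hcov : ∀ z, ∃ i, z ∈ K i) {e : Z → Fin m → ℝ}
    (he : Continuous e) (k k2 : Fin m) (hk : k ≠ k2)
    (hi : ∀ i, ∀ z ∈ K i, ∀ z' ∈ K i, (∀ j, j ≠ k → j ≠ k2 → e z j = e z' j) → z = z')
    {x y : C(Z, YY (Fin (m+1)) Λ)} (p q : Path x y) : p.Homotopic q := by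
  classical
  let f : (I × I) × Z → (Fin (m+1) × Λ → ℝ) := fun z =>
    if z.1.1 = 0 then (p z.1.2 z.2).1 else if z.1.1 = 1 then (q z.1.2 z.2).1 else
      if z.1.2 = 0 then (x z.2).1 else (y z.2).1
  have f0 : ∀ z, z.1.1 = 0 → f z = (p z.1.2 z.2).1 := fun z h => by simp only [f, h, if_true]
  have f1 : ∀ z, z.1.1 = 1 → f z = (q z.1.2 z.2).1 := fun z h => by simp [f, h]
  have f2 : ∀ z, z.1.2 = 0 → f z = (x z.2).1 := fun z h => by simp [f, h]
  have f3 : ∀ z, z.1.2 = 1 → f z = (y z.2).1 := fun z h => by simp [f, h]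
  have hp := path_cont p
  have hq := path_cont q
  have c0 : IsClosed {z : (I × I) × Z | z.1.1 = 0} := isClosed_eq (by fun_prop) continuous_const
  have c1 : IsClosed {z : (I × I) × Z | z.1.1 = 1} := isClosed_eq (by fun_prop) continuous_const
  have c2 : IsClosed {z : (I × I) × Z | z.1.2 = 0} := isClosed_eq (by fun_prop) continuous_const
  have c3 : IsClosed {z : (I × I) × Z | z.1.2 = 1} := isClosed_eq (by fun_prop) continuous_const
  let A : Set ((I × I) × Z) := (({z | z.1.1 = 0} ∪ {z | z.1.1 = 1}) ∪ {z | z.1.2 = 0}) ∪ {z | z.1.2 = 1}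
  have hA : IsClosed A := ((c0.union c1).union c2).union c3
  have hf : ContinuousOn f A := by
    refine contOn_union_closed ((c0.union c1).union c2) c3 (contOn_union_closed (c0.union c1) c2
      (contOn_union_closed c0 c1 ?_ ?_) ?_) ?_
    · refine ContinuousOn.congr (Continuous.continuousOn ?_) (fun z hz => f0 z hz)
      exact continuous_subtype_val.comp (hp.comp (by fun_prop : Continuous fun z : (I × I) × Z => (z.1.2, z.2)))
    · refine ContinuousOn.congr (Continuous.continuousOn ?_) (fun z hz => f1 z hz)
      exact continuous_subtype_val.comp (hq.comp (by fun_prop : Continuous fun z : (I × I) × Z => (z.1.2, z.2)))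
    · refine ContinuousOn.congr (Continuous.continuousOn ?_) (fun z hz => f2 z hz)
      fun_prop
    · refine ContinuousOn.congr (Continuous.continuousOn ?_) (fun z hz => f3 z hz)
      fun_prop
  have hfY : Set.MapsTo f A (YY (Fin (m+1)) Λ) := by
    rintro z (((hz | hz) | hz) | hz)
    · rw [f0 z hz]; exact (p z.1.2 z.2).2
    · rw [f1 z hz]; exact (q z.1.2 z.2).2
    · rw [f2 z hz]; exact (x z.2).2
    · rw [f3 z hz]; exact (y z.2).2
  obtain ⟨F, hF, hFY, hFA⟩ := ext_cover (Z := (I × I) × Z) (m := m) (Λ := Λ) hA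
    (K := fun i => Prod.snd ⁻¹' K i) (fun i => (hK i).preimage continuous_snd) (fun z => hcov z.2)
    (e := fun z j => if j = k then (z.1.1 : ℝ) else if j = k2 then (z.1.2 : ℝ) else e z.2 j)
    (by
      refine continuous_pi fun j => ?_
      split_ifs
      · fun_prop
      · fun_prop
      · exact (continuous_apply j).comp (he.comp continuous_snd)) (by
      intro i z hz z' hz' h
      have h1 := congrFun h k
      have h2 := congrFun h k2
      simp only [if_true, hk.symm, if_false] at h1 h2
      refine Prod.ext (Prod.ext (Subtype.ext h1) (Subtype.ext h2)) (hi i _ hz _ hz' fun j j1 j2 => ?_)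
      have h3 := congrFun h j
      simpa only [j1, j2, if_false] using h3) hf hfY
  refine hom_of (fun z => ⟨F z, hFY z⟩) (hF.subtype_mk _) ?_ ?_ ?_ ?_
  · intro t w; apply Subtype.ext
    exact (hFA (show _ from Or.inl (Or.inl (Or.inl rfl)))).trans (f0 _ rfl)
  · intro t w; apply Subtype.ext
    exact (hFA (show _ from Or.inl (Or.inl (Or.inr rfl)))).trans (f1 _ rfl)
  · intro t w; apply Subtype.ext
    exact (hFA (show _ from Or.inl (Or.inr rfl))).trans (f2 _ rfl)
  · intro t w; apply Subtype.ext
    exact (hFA (show _ from Or.inr rfl)).trans (f3 _ rfl)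

end seg

section yconn
variable {m : ℕ} {Λ : Type} [Fintype Λ] [Nonempty Λ]

theorem Y_conn (hm : 1 ≤ m) (a b : YY (Fin (m+1)) Λ) : Nonempty (Path a b) := by
  classical
  obtain ⟨F, hF, hFY, hFA⟩ := ext_cover (Z := I) (m := m) (Λ := Λ) (ι := Unit) (A := {0, 1})
    (K := fun _ => Set.univ) (Set.toFinite _).isClosed (fun _ => isClosed_univ) (fun z => ⟨(), trivial⟩)
    (e := fun t _ => (t : ℝ)) (by fun_prop) (by
      intro i z _ z' _ h
      exact Subtype.ext (congrFun h ⟨0, hm⟩)) (f := fun t => if t = 0 then a.1 else b.1)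
    ((Set.toFinite _).continuousOn _) (by
      intro t _
      simp only
      split_ifs
      · exact a.2
      · exact b.2)
  refine ⟨{ toFun := fun t => ⟨F t, hFY t⟩, continuous_toFun := hF.subtype_mk _, source' := ?_, target' := ?_ }⟩
  · apply Subtype.ext; exact (hFA (by simp)).trans (by simp)
  · apply Subtype.ext; exact (hFA (by simp)).trans (by simp)

theorem Y_uniq (hm : 2 ≤ m) {a b : YY (Fin (m+1)) Λ} (p q : Path a b) : p.Homotopic q := by
  have h := ext_sq (m := m) (Z := Unit) (Λ := Λ) (ι := Unit) (K := fun _ => Set.univ) (fun _ => isClosed_univ)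
    (fun z => ⟨(), trivial⟩) (e := fun _ _ => 0) (by fun_prop) ⟨0, by omega⟩ ⟨1, by omega⟩ (by simp)
    (by intros; rfl)
    (mkP (fun z => p z.1) (by fun_prop) (.const _ a) (.const _ b) (by simp) (by simp))
    (mkP (fun z => q z.1) (by fun_prop) (.const _ a) (.const _ b) (by simp) (by simp))
  exact homotopic_map (fun f : C(Unit, YY (Fin (m+1)) Λ) => f ()) (by fun_prop) (fun t => rfl) (fun t => rfl) h

end yconn
end SG

end

section
namespace SG
open unitInterval

theorem ecks {T : Type*} [TopologicalSpace T] {x : T} {a b : Path x x} (V : I × I → T) (hV : Continuous V)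
    (h1 : ∀ t, V (t, 0) = a t) (h2 : ∀ t, V (t, 1) = a t) (h3 : ∀ t, V (0, t) = b t) (h4 : ∀ t, V (1, t) = b t) :
    (a.trans b).Homotopic (b.trans a) := by
  let pr : ℝ → I := Set.projIcc 0 1 zero_le_one
  have hpr : Continuous pr := continuous_projIcc
  have pr0 : ∀ u : ℝ, u ≤ 0 → pr u = 0 := fun u hu => Set.projIcc_of_le_left _ hu
  have pr1 : ∀ u : ℝ, 1 ≤ u → pr u = 1 := fun u hu => Set.projIcc_of_right_le _ hu
  have prv : ∀ (u : ℝ) (h : u ∈ Set.Icc (0:ℝ) 1), pr u = ⟨u, h⟩ := fun u h => Set.projIcc_of_mem zero_le_one h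
  let F : ℝ → ℝ → T := fun s t => V (pr ((1 - s) * min 1 (2 * t) + s * max 0 (2 * t - 1)),
    pr ((1 - s) * max 0 (2 * t - 1) + s * min 1 (2 * t)))
  have hF : ∀ s t u v, u = (1 - s) * min 1 (2 * t) + s * max 0 (2 * t - 1) →
    v = (1 - s) * max 0 (2 * t - 1) + s * min 1 (2 * t) → F s t = V (pr u, pr v) := by
    rintro s t u v rfl rfl; rfl
  have hFc : Continuous fun z : I × I => F z.1 z.2 := by fun_prop
  refine ⟨{ toContinuousMap := ⟨fun z => F z.1 z.2, hFc⟩, map_zero_left := ?_, map_one_left := ?_, prop' := ?_ }⟩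
  · intro t
    show F ((0:I):ℝ) t = (a.trans b) t
    rw [Path.trans_apply]
    have ht0 := t.2.1
    have ht1 := t.2.2
    split_ifs with h
    · rw [hF _ _ (2 * t) 0 (by rw [min_eq_right (by linarith), max_eq_left (by linarith)]; simp)
        (by rw [min_eq_right (by linarith), max_eq_left (by linarith)]; simp), pr0 0 le_rfl, h1,
        prv _ ⟨by linarith, by linarith⟩]
    · rw [hF _ _ 1 (2 * t - 1) (by rw [min_eq_left (by linarith), max_eq_right (by linarith)]; simp)
        (by rw [min_eq_left (by linarith), max_eq_right (by linarith)]; simp), pr1 1 le_rfl, h4,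
        prv _ ⟨by linarith, by linarith⟩]
  · intro t
    show F ((1:I):ℝ) t = (b.trans a) t
    rw [Path.trans_apply]
    have ht0 := t.2.1
    have ht1 := t.2.2
    split_ifs with h
    · rw [hF _ _ 0 (2 * t) (by rw [min_eq_right (by linarith), max_eq_left (by linarith)]; simp)
        (by rw [min_eq_right (by linarith), max_eq_left (by linarith)]; simp), pr0 0 le_rfl, h3,
        prv _ ⟨by linarith, by linarith⟩]
    · rw [hF _ _ (2 * t - 1) 1 (by rw [min_eq_left (by linarith), max_eq_right (by linarith)]; simp)
        (by rw [min_eq_left (by linarith), max_eq_right (by linarith)]; simp), pr1 1 le_rfl, h2,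
        prv _ ⟨by linarith, by linarith⟩]
  · rintro s t (rfl | rfl)
    · show F s ((0:I):ℝ) = _
      rw [hF _ _ 0 0 (by simp) (by simp), pr0 0 le_rfl, h1]
      simp
    · show F s ((1:I):ℝ) = _
      rw [hF _ _ 1 1 (by norm_num) (by norm_num), pr1 1 le_rfl, h2]
      simp

theorem RR_of_supp {Q : Type} [Fintype Q] [PartialOrder Q] {p p' : Q → Prop} {x y : Q → ℝ} (hx : x ∈ RR p)
    (h0 : ∀ q, 0 ≤ y q) (h1 : ∑ q, y q = 1) (h : ∀ q, y q ≠ 0 → x q ≠ 0) (hp : ∀ q, y q ≠ 0 → p q → p' q) :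
    y ∈ RR p' := by
  refine ⟨h0, h1, fun q hq => ?_, fun q q' hqq => ?_⟩
  · by_contra hne
    exact hq (hp q hne (RR_p hx (h q hne)))
  · by_contra hne
    obtain ⟨e1, e2⟩ := mul_ne_zero_iff.1 hne
    exact hqq (RR_comparable hx (h _ e1) (h _ e2))

namespace Dat
variable {G Q Λ S : Type} [Group G] [Fintype Q] [PartialOrder Q] [MulAction G Q] [Fintype Λ]
    [MulAction G Λ] [Fintype S] [MulAction G S] {m : ℕ} (D : Dat G Q Λ S m)

open Classical in
def wt (j : ℕ) (x : Q → ℝ) : ℝ := ∑ q, if D.rank q = j then x q else 0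

theorem wt_cont (j : ℕ) : Continuous (D.wt j) := by
  classical
  refine continuous_finsetSum _ fun q _ => ?_
  split_ifs <;> fun_prop

theorem wt_nonneg {p : Q → Prop} (j : ℕ) {x : Q → ℝ} (hx : x ∈ RR p) : 0 ≤ D.wt j x :=
  Finset.sum_nonneg fun q _ => by
    split_ifs
    · exact hx.1 q
    · exact le_rfl

theorem wt_two {p : Q → Prop} {j j' : ℕ} (hj : j ≠ j') {x : Q → ℝ} (hx : x ∈ RR p) : D.wt j x + D.wt j' x ≤ 1 := by
  classical
  rw [← hx.2.1, wt, wt, ← Finset.sum_add_distrib]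
  refine Finset.sum_le_sum fun q _ => ?_
  have := hx.1 q
  split_ifs with h1 h2
  · omega
  · simp
  · simp
  · simpa

theorem wt_le_one {p : Q → Prop} (j : ℕ) {x : Q → ℝ} (hx : x ∈ RR p) : D.wt j x ≤ 1 := by
  have := D.wt_two (j := j) (j' := j + 1) (by omega) hx
  have := D.wt_nonneg (j + 1) hx
  linarith

theorem wt_sum {p : Q → Prop} (hp : ∀ q, p q → D.rank q < m) {x : Q → ℝ} (hx : x ∈ RR p) :
    ∑ j : Fin m, D.wt j x = 1 := by
  classical
  rw [← hx.2.1]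
  simp only [wt]
  rw [Finset.sum_comm]
  refine Finset.sum_congr rfl fun q _ => ?_
  by_cases hq : x q = 0
  · simp [hq]
  · have h := hp q (RR_p hx hq)
    rw [Finset.sum_eq_single (⟨D.rank q, h⟩ : Fin m)]
    · simp
    · intro j _ hj
      rw [if_neg]
      intro hh; exact hj (Fin.ext hh.symm)
    · simp

theorem wt_single {p : Q → Prop} {x : Q → ℝ} (hx : x ∈ RR p) {c : Set Q} (hc : IsChain (· ≤ ·) c)
    (hs : ∀ q, q ∉ c → x q = 0) {q : Q} (hq : q ∈ c) : D.wt (D.rank q) x = x q := by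
  classical
  unfold wt
  rw [Finset.sum_eq_single q]
  · simp
  · intro q' _ hne
    split_ifs with h
    · by_contra h0
      have hq' : q' ∈ c := by
        by_contra h1; exact h0 (hs _ h1)
      rcases hc hq hq' hne.symm with h1 | h1
      · exact absurd h (D.rank_lt _ _ (lt_of_le_of_ne h1 hne.symm)).ne'
      · exact absurd h (D.rank_lt _ _ (lt_of_le_of_ne h1 hne)).ne
    · rfl
  · simp

theorem RR_uniq {p : Q → Prop} (hp : ∀ q, p q → D.rank q < m) (k k2 : Fin m) (hk : k ≠ k2)
    (hpk : ∀ q, p q → D.rank q ≠ k) {x y : C(RR p, D.Yt)} (a b : Path x y) : a.Homotopic b := by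
  classical
  have := D.ne
  refine ext_sq (ι := {c : Set Q // IsChain (· ≤ ·) c}) (K := fun c => {x : RR p | ∀ q, q ∉ c.1 → x.1 q = 0})
    (e := fun x j => D.wt j x.1) ?_ ?_ ?_ k k2 hk ?_ a b
  · intro c
    have : {x : RR p | ∀ q, q ∉ c.1 → x.1 q = 0} = ⋂ q, ⋂ _ : q ∉ c.1, {x : RR p | x.1 q = 0} := by
      ext x; simp
    rw [this]
    exact isClosed_iInter fun q => isClosed_iInter fun _ =>
      isClosed_eq ((continuous_apply q).comp continuous_subtype_val) continuous_const
  · intro x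
    refine ⟨⟨{q | x.1 q ≠ 0}, ?_⟩, ?_⟩
    · intro q hq q' hq' _
      exact RR_comparable x.2 hq hq'
    · intro q hq
      simpa using hq
  · exact continuous_pi fun j => (D.wt_cont j).comp continuous_subtype_val
  · intro c x hx y hy h
    have hk0 : ∀ z : RR p, D.wt k z.1 = 0 := by
      intro z
      refine Finset.sum_eq_zero fun q _ => ?_
      split_ifs with h1
      · exact z.2.2.2.1 q fun h2 => hpk q h2 h1
      · rfl
    have hw : ∀ j : Fin m, D.wt j x.1 = D.wt j y.1 := by
      have h1 : ∀ j : Fin m, j ≠ k2 → D.wt j x.1 = D.wt j y.1 := by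
        intro j hj
        by_cases hjk : j = k
        · rw [hjk, hk0, hk0]
        · exact h j hjk hj
      intro j
      by_cases hj : j = k2
      · subst hj
        have s1 := D.wt_sum hp x.2
        have s2 := D.wt_sum hp y.2
        rw [← Finset.add_sum_erase _ _ (Finset.mem_univ j)] at s1 s2
        have s3 : ∑ i ∈ Finset.univ.erase j, D.wt i x.1 = ∑ i ∈ Finset.univ.erase j, D.wt i y.1 :=
          Finset.sum_congr rfl fun i hi => h1 i (Finset.ne_of_mem_erase hi)
        linarith
      · exact h1 j hj
    apply Subtype.ext
    funext q
    by_cases hq : q ∈ c.1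
    · by_cases hqp : p q
      · rw [← D.wt_single x.2 c.2 hx hq, ← D.wt_single y.2 c.2 hy hq]
        exact hw ⟨D.rank q, hp q hqp⟩
      · rw [x.2.2.2.1 q hqp, y.2.2.2.1 q hqp]
    · rw [hx q hq, hy q hq]

open Classical in
def rho (k : ℕ) (x : Q → ℝ) (q : Q) : ℝ :=
  if D.rank q = k then x q * (max 0 (4 * D.wt k x - 3) / max (D.wt k x) (1/2)) else x q / max (1 - D.wt k x) (1/4)

theorem rho_cont (k : ℕ) : Continuous (D.rho k) := by
  classical
  have h := D.wt_cont k
  refine continuous_pi fun q => ?_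
  unfold rho
  split_ifs
  · refine Continuous.mul (by fun_prop) (Continuous.div (by fun_prop) (by fun_prop) fun x => ?_)
    exact (lt_of_lt_of_le (by norm_num) (le_max_right _ _)).ne'
  · refine Continuous.div (by fun_prop) (by fun_prop) fun x => ?_
    exact (lt_of_lt_of_le (by norm_num) (le_max_right _ _)).ne'

theorem rho_nonneg {p : Q → Prop} (k : ℕ) {x : Q → ℝ} (hx : x ∈ RR p) (q : Q) : 0 ≤ D.rho k x q := by
  have := hx.1 q
  unfold rho
  split_ifs <;> positivity

theorem rho_supp (k : ℕ) {x : Q → ℝ} (q : Q) (h : D.rho k x q ≠ 0) : x q ≠ 0 := by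
  intro h0
  apply h
  unfold rho
  split_ifs <;> simp [h0]

theorem rho_sum {p : Q → Prop} (k : ℕ) {x : Q → ℝ} (hx : x ∈ RR p) : ∑ q, D.rho k x q = 1 := by
  classical
  have e : ∀ q, D.rho k x q = (if D.rank q = k then x q else 0) * (max 0 (4 * D.wt k x - 3) / max (D.wt k x) (1/2))
      + (x q - (if D.rank q = k then x q else 0)) * (1 / max (1 - D.wt k x) (1/4)) := by
    intro q
    unfold rho
    split_ifs
    · simp
    · simp; rfl
  simp only [e]
  rw [Finset.sum_add_distrib, ← Finset.sum_mul, ← Finset.sum_mul, Finset.sum_sub_distrib, hx.2.1]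
  change D.wt k x * _ + (1 - D.wt k x) * _ = 1
  generalize D.wt k x = l
  by_cases h : l ≤ 3/4
  · rw [max_eq_left (by linarith : 4 * l - 3 ≤ 0), max_eq_left (by linarith : (1/4:ℝ) ≤ 1 - l)]
    have : 1 - l ≠ 0 := by intro h; linarith
    field_simp
    ring
  · rw [max_eq_right (by linarith : 0 ≤ 4 * l - 3), max_eq_right (by linarith : 1 - l ≤ (1/4:ℝ)), max_eq_left (by linarith)]
    have : l ≠ 0 := by intro h; linarith
    field_simp
    ring

theorem rho_mem {p : Q → Prop} (k : ℕ) {x : Q → ℝ} (hx : x ∈ RR p) : D.rho k x ∈ RR p :=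
  RR_of_supp hx (D.rho_nonneg k hx) (D.rho_sum k hx) (fun q h => D.rho_supp k q h) (fun _ _ h => h)

theorem rho_mem1 {p : Q → Prop} (k : ℕ) {x : Q → ℝ} (hx : x ∈ RR p) (h : D.wt k x ≤ 3/4) :
    D.rho k x ∈ RR (fun q => p q ∧ D.rank q ≠ k) :=
  RR_of_supp hx (D.rho_nonneg k hx) (D.rho_sum k hx) (fun q h => D.rho_supp k q h) (fun q hq hp => ⟨hp, fun hr => by
    apply hq
    unfold rho
    rw [if_pos hr, max_eq_left (by linarith : 4 * D.wt k x - 3 ≤ 0)]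
    simp⟩)

theorem supp {p : Q → Prop} (hp : ∀ q, p q → D.rank q < m) (k k2 : Fin m) (hk : k ≠ k2) (b : D.Yt)
    (a : Path (ContinuousMap.const (RR p) b) (ContinuousMap.const (RR p) b)) :
    ∃ a' : Path (ContinuousMap.const (RR p) b) (ContinuousMap.const (RR p) b), a.Homotopic a' ∧
      ∀ t x, D.wt k x.1 ≤ 1/2 → a' t x = b := by
  classical
  have ha := path_cont a
  have hrho := D.rho_cont k
  have hwt := D.wt_cont k
  let r : RR p → RR p := fun x => ⟨D.rho k x.1, D.rho_mem k x.2⟩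
  have hr : Continuous r := (hrho.comp continuous_subtype_val).subtype_mk _
  let a1 : Path (ContinuousMap.const (RR p) b) (ContinuousMap.const (RR p) b) :=
    mkP (fun z => a z.1 (r z.2)) (by fun_prop) _ _ (by simp) (by simp)
  have h1 : a.Homotopic a1 := by
    have hmem : ∀ (s : I) (x : RR p), (fun q => (1 - (s:ℝ)) * x.1 q + s * D.rho k x.1 q) ∈ RR p := by
      intro s x
      have hs0 := s.2.1
      have hs1 := s.2.2
      refine RR_of_supp x.2 (fun q => ?_) ?_ (fun q h h0 => h ?_) (fun _ _ h => h)
      · have := x.2.1 q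
        have := D.rho_nonneg k x.2 q
        have : 0 ≤ 1 - (s:ℝ) := by linarith
        positivity
      · rw [Finset.sum_add_distrib, ← Finset.mul_sum, ← Finset.mul_sum, x.2.2.1, D.rho_sum k x.2]; ring
      · simp only [h0]
        have : D.rho k x.1 q = 0 := by
          by_contra h1; exact D.rho_supp k q h1 h0
        simp [this]
    have hrq : ∀ q, Continuous fun x : Q → ℝ => D.rho k x q := fun q => (continuous_apply q).comp hrho
    let R : I × RR p → RR p := fun z => ⟨_, hmem z.1 z.2⟩
    have hR : Continuous R := by
      refine Continuous.subtype_mk (continuous_pi fun q => ?_) _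
      have e1 : Continuous fun a : I × RR p => D.rho k a.2.1 q := (hrq q).comp (by fun_prop)
      have e2 : Continuous fun a : I × RR p => a.2.1 q := (continuous_apply q).comp (by fun_prop)
      exact Continuous.add (Continuous.mul (by fun_prop) e2) (Continuous.mul (by fun_prop) e1)
    refine hom_of (fun z => a z.1.2 (R (z.1.1, z.2))) (by fun_prop) ?_ ?_ ?_ ?_
    · intro t w
      congr 1
      apply Subtype.ext; funext q; simp [R]
    · intro t w
      show _ = a t (r w)
      congr 1
      apply Subtype.ext; funext q; simp [R, r]
    · intro s w; simp
    · intro s w; simp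
  let p1 : Q → Prop := fun q => p q ∧ D.rank q ≠ k
  let inc : RR p1 → RR p := fun x => ⟨x.1, RR_mono (fun q h => h.1) x.2⟩
  have hinc : Continuous inc := continuous_subtype_val.subtype_mk _
  obtain ⟨N⟩ : (mkP (fun z => a z.1 (inc z.2)) (by fun_prop) (ContinuousMap.const (RR p1) b)
      (ContinuousMap.const (RR p1) b) (by simp) (by simp)).Homotopic (Path.refl _) :=
    D.RR_uniq (fun q h => hp q h.1) k k2 hk (fun q h => h.2) _ _
  have hN : Continuous fun z : (I × I) × RR p1 => N z.1 z.2 := by fun_prop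
  let pr : ℝ → I := Set.projIcc 0 1 zero_le_one
  have hpr : Continuous pr := continuous_projIcc
  have pr0 : ∀ u : ℝ, u ≤ 0 → pr u = 0 := fun u hu => Set.projIcc_of_le_left _ hu
  have pr1 : ∀ u : ℝ, 1 ≤ u → pr u = 1 := fun u hu => Set.projIcc_of_right_le _ hu
  let F : (I × I) × RR p → D.Yt := fun z =>
    if h : D.wt k z.2.1 ≤ 3/4 then N (z.1.1 * pr (3 - 4 * D.wt k z.2.1), z.1.2) ⟨_, D.rho_mem1 k z.2.2 h⟩
    else a z.1.2 (r z.2)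
  have hF : Continuous F := by
    rw [← continuousOn_univ]
    have hu : (Set.univ : Set ((I × I) × RR p)) = {z | D.wt k z.2.1 ≤ 3/4} ∪ {z | 3/4 ≤ D.wt k z.2.1} := by
      ext z; simpa using le_total _ _
    rw [hu]
    refine contOn_union_closed (isClosed_le (by fun_prop) continuous_const) (isClosed_le continuous_const (by fun_prop)) ?_ ?_
    · rw [continuousOn_iff_continuous_domRestrict]
      have : Set.domRestrict {z : (I × I) × RR p | D.wt k z.2.1 ≤ 3/4} F = fun z =>
          N (z.1.1.1 * pr (3 - 4 * D.wt k z.1.2.1), z.1.1.2) ⟨_, D.rho_mem1 k z.1.2.2 z.2⟩ := by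
        funext z
        exact dif_pos z.2
      rw [this]
      have e : Continuous fun z : {z : (I × I) × RR p | D.wt k z.2.1 ≤ 3/4} =>
          (((z.1.1.1 * pr (3 - 4 * D.wt k z.1.2.1), z.1.1.2), ⟨_, D.rho_mem1 k z.1.2.2 z.2⟩) : (I × I) × RR p1) := by
        refine Continuous.prodMk (by fun_prop) (Continuous.subtype_mk (hrho.comp (by fun_prop)) _)
      exact hN.comp e
    · have : ContinuousOn (fun z : (I × I) × RR p => a z.1.2 (r z.2)) {z | 3/4 ≤ D.wt k z.2.1} := by
        apply Continuous.continuousOn; fun_prop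
      refine this.congr fun z hz => ?_
      simp only [F]
      split_ifs with h
      · rw [pr0 _ (by have : 3/4 ≤ D.wt k z.2.1 := hz; linarith), mul_zero]
        simp only [ContinuousMap.HomotopyWith.apply_zero]
        rfl
      · rfl
  have hF0 : ∀ t x, F ((0, t), x) = a t (r x) := by
    intro t x
    simp only [F]
    split_ifs with h
    · rw [zero_mul]
      simp only [ContinuousMap.HomotopyWith.apply_zero]
      rfl
    · rfl
  have hFl : ∀ s x, F ((s, 0), x) = b := by
    intro t x
    simp only [F]
    split_ifs with h
    · simp
    · simp
  have hFr : ∀ s x, F ((s, 1), x) = b := by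
    intro t x
    simp only [F]
    split_ifs with h
    · simp
    · simp
  refine ⟨mkP (fun z => F ((1, z.1), z.2)) (by fun_prop) _ _ (fun w => hFl _ _) (fun w => hFr _ _), h1.trans ?_, ?_⟩
  · exact hom_of F hF hF0 (fun t w => rfl) (fun s w => hFl s w) (fun s w => hFr s w)
  · intro t x hx
    show F ((1, t), x) = b
    simp only [F]
    rw [dif_pos (by linarith), pr1 _ (by linarith)]
    simp

theorem comm {p : Q → Prop} (hp : ∀ q, p q → D.rank q < m) (b : D.Yt)
    (a a' : Path (ContinuousMap.const (RR p) b) (ContinuousMap.const (RR p) b)) :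
    (a.trans a').Homotopic (a'.trans a) := by
  classical
  have h2m := D.two_le
  let k : Fin m := ⟨0, by omega⟩
  let k2 : Fin m := ⟨1, by omega⟩
  have hk : k ≠ k2 := by simp [k, k2]
  obtain ⟨α, h1, hα⟩ := D.supp hp k k2 hk b a
  obtain ⟨β, h2, hβ⟩ := D.supp hp k2 k hk.symm b a'
  have hw := D.wt_cont k
  have key : (α.trans β).Homotopic (β.trans α) := by
    have c1 := path_cont α
    have c2 := path_cont β
    have hor : ∀ x : RR p, 1/2 ≤ D.wt k x.1 → D.wt k2 x.1 ≤ 1/2 := by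
      intro x hx
      have := D.wt_two (j := k) (j' := k2) (by simp [k, k2]) x.2
      linarith
    let V : (I × I) × RR p → D.Yt := fun z => if D.wt k z.2.1 ≤ 1/2 then β z.1.2 z.2 else α z.1.1 z.2
    have hV : Continuous V := by
      refine Continuous.if_le (by fun_prop) (by fun_prop) (by fun_prop) continuous_const ?_
      intro z hz
      rw [hα _ _ hz.le, hβ _ _ (hor _ hz.ge)]
    refine ecks (fun z => ContinuousMap.curry ⟨V, hV⟩ z) (by fun_prop) ?_ ?_ ?_ ?_
    · intro t; ext1 x
      show (if D.wt k x.1 ≤ 1/2 then β 0 x else α t x) = _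
      split_ifs with h
      · rw [hα _ _ h]; simp
      · rfl
    · intro t; ext1 x
      show (if D.wt k x.1 ≤ 1/2 then β 1 x else α t x) = _
      split_ifs with h
      · rw [hα _ _ h]; simp
      · rfl
    · intro t; ext1 x
      show (if D.wt k x.1 ≤ 1/2 then β t x else α 0 x) = _
      split_ifs with h
      · rfl
      · rw [hβ _ _ (hor _ (not_le.1 h).le)]; simp
    · intro t; ext1 x
      show (if D.wt k x.1 ≤ 1/2 then β t x else α 1 x) = _
      split_ifs with h
      · rfl
      · rw [hβ _ _ (hor _ (not_le.1 h).le)]; simp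
  exact ((h1.hcomp h2).trans key).trans (h2.hcomp h1).symm

end Dat
end SG

end

section
namespace SG
open unitInterval

section cn
variable {Q : Type} [Fintype Q] [PartialOrder Q]

open Classical in
def dl (q : Q) : Q → ℝ := fun r => if r = q then 1 else 0

def cn (q : Q) (t : ℝ) (x : Q → ℝ) : Q → ℝ := fun r => (1 - t) * dl q r + t * x r

theorem dl_self (q : Q) : dl q q = 1 := by simp [dl]
theorem dl_ne {q r : Q} (h : r ≠ q) : dl q r = 0 := by simp [dl, h]
theorem dl_nonneg (q r : Q) : 0 ≤ dl q r := by unfold dl; split_ifs <;> norm_num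
theorem dl_sum (q : Q) : ∑ r, dl q r = 1 := by
  classical
  simp only [dl]
  rw [Finset.sum_eq_single q] <;> simp +contextual

theorem cn_cont (q : Q) : Continuous (fun z : ℝ × (Q → ℝ) => cn q z.1 z.2) := by unfold cn; fun_prop
theorem cn_zero (q : Q) (x : Q → ℝ) : cn q 0 x = dl q := by funext r; simp [cn]
theorem cn_one (q : Q) (x : Q → ℝ) : cn q 1 x = x := by funext r; simp [cn]
theorem cn_self (q : Q) (t : ℝ) {x : Q → ℝ} (h : x q = 0) : cn q t x q = 1 - t := by simp [cn, h, dl_self]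
theorem cn_other {q r : Q} (hr : r ≠ q) (t : ℝ) (x : Q → ℝ) : cn q t x r = t * x r := by simp [cn, dl_ne hr]

theorem cn_inj {q : Q} {t t' : ℝ} {x x' : Q → ℝ} (h : x q = 0) (h' : x' q = 0) (he : cn q t x = cn q t' x') :
    t = t' ∧ (t = 0 ∨ x = x') := by
  have h1 := congrFun he q
  rw [cn_self _ _ h, cn_self _ _ h'] at h1
  have ht : t = t' := by linarith
  subst ht
  refine ⟨rfl, or_iff_not_imp_left.2 fun ht => funext fun r => ?_⟩
  by_cases hr : r = q
  · rw [hr, h, h']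
  · have := congrFun he r
    rw [cn_other hr, cn_other hr] at this
    exact mul_left_cancel₀ ht this

theorem dl_mem (q : Q) {p : Q → Prop} (hp : p q) : dl q ∈ RR p := by
  refine ⟨dl_nonneg q, dl_sum q, fun r hr => dl_ne (by rintro rfl; exact hr hp), fun r r' h => ?_⟩
  by_cases h1 : r = q
  · by_cases h2 : r' = q
    · subst h1 h2; exact absurd (Or.inl le_rfl) h
    · rw [dl_ne h2, mul_zero]
  · rw [dl_ne h1, zero_mul]

theorem mix_mem {p : Q → Prop} {x y : Q → ℝ} (hx : x ∈ RR p) (hy : y ∈ RR p)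
    (hc : ∀ q q', x q ≠ 0 → y q' ≠ 0 → q ≤ q' ∨ q' ≤ q) {t : ℝ} (h0 : 0 ≤ t) (h1 : t ≤ 1) :
    (fun r => (1 - t) * x r + t * y r) ∈ RR p := by
  have ht : 0 ≤ 1 - t := by linarith
  have sp : ∀ r, (1 - t) * x r + t * y r ≠ 0 → x r ≠ 0 ∨ y r ≠ 0 := by
    intro r h
    by_contra hn
    push Not at hn
    simp [hn.1, hn.2] at h
  refine ⟨fun r => ?_, ?_, fun r hr => ?_, fun r r' h => ?_⟩
  · have := hx.1 r
    have := hy.1 r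
    positivity
  · rw [Finset.sum_add_distrib, ← Finset.mul_sum, ← Finset.mul_sum, hx.2.1, hy.2.1]; ring
  · simp only [hx.2.2.1 r hr, hy.2.2.1 r hr]; ring
  · by_contra hne
    obtain ⟨e1, e2⟩ := mul_ne_zero_iff.1 hne
    rcases sp _ e1 with e1 | e1 <;> rcases sp _ e2 with e2 | e2
    · exact h (RR_comparable hx e1 e2)
    · exact h (hc _ _ e1 e2)
    · exact h (hc _ _ e2 e1).symm
    · exact h (RR_comparable hy e1 e2)

theorem dl_supp {q r : Q} (h : dl q r ≠ 0) : r = q := by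
  by_contra h1; exact h (dl_ne h1)

theorem cn_mem {q : Q} {p p' : Q → Prop} {x : Q → ℝ} (hx : x ∈ RR p) (hp : ∀ r, p r → r ≤ q) (hp' : ∀ r, p r → p' r)
    (hq : p' q) {t : ℝ} (h0 : 0 ≤ t) (h1 : t ≤ 1) : cn q t x ∈ RR p' := by
  refine mix_mem (dl_mem q hq) (RR_mono hp' hx) (fun r r' hr hr' => ?_) h0 h1
  rw [dl_supp hr]
  exact Or.inr (hp _ (RR_p hx hr'))

variable {G : Type} [Group G] [MulAction G Q]
theorem gX_dl (g : G) (q : Q) : gX g (dl q) = dl (g • q) := by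
  funext r
  by_cases h : r = g • q
  · rw [h, dl_self]; simp [gX, dl_self]
  · rw [dl_ne h]; simp only [gX]; exact dl_ne fun h' => h (inv_smul_eq_iff.1 h')

theorem gX_cn (g : G) (q : Q) (t : ℝ) (x : Q → ℝ) : gX g (cn q t x) = cn (g • q) t (gX g x) := by
  funext r
  have := congrFun (gX_dl g q) r
  simp only [gX, cn] at *
  rw [this]
end cn

namespace Dat
variable {G Q Λ S : Type} [Group G] [Fintype Q] [PartialOrder Q] [MulAction G Q] [Fintype Λ]
    [MulAction G Λ] [Fintype S] [MulAction G S] {m : ℕ} (D : Dat G Q Λ S m)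

/-- predicate: below `q` and of small rank -/
def Lo (q : Q) (x : Q) : Prop := x < q ∧ D.rank x < m

def IsLo (p : Q → Prop) (q : Q) : Prop := ∀ x, p x → x < q ∧ D.rank x < m

theorem isLo_Lo (q : Q) : D.IsLo (D.Lo q) q := fun _ h => h
theorem isLo_trans {p : Q → Prop} {q q' : Q} (h : D.IsLo p q') (hq : q' < q) : D.IsLo p q :=
  fun x hx => ⟨(h x hx).1.trans hq, (h x hx).2⟩

def td (s : S) (q : Q) : D.Yt := ⟨D.tt s (dl q), D.tt_mem s (dl_mem q (p := fun _ => True) trivial)⟩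

variable {p : Q → Prop} {q : Q}

def uW (h : ∀ r, p r → D.rank r < m) : C(RR p, D.Yt) :=
  ⟨fun x => ⟨D.uu x.1, D.uu_mem h x.2⟩,
    ((push_cont _).comp continuous_subtype_val).subtype_mk _⟩

def tW (s : S) (p : Q → Prop) : C(RR p, D.Yt) :=
  ⟨fun x => ⟨D.tt s x.1, D.tt_mem s x.2⟩, ((push_cont _).comp continuous_subtype_val).subtype_mk _⟩

def constP (p : Q → Prop) {b b' : D.Yt} (c : Path b b') :
    Path (ContinuousMap.const (RR p) b) (ContinuousMap.const (RR p) b') :=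
  mkP (fun z => c z.1) (by fun_prop) _ _ (by simp) (by simp)

def coneP (s : S) (h : D.IsLo p q) : Path (ContinuousMap.const (RR p) (D.td s q)) (D.tW s p) :=
  mkP (fun z => ⟨D.tt s (cn q z.1 z.2.1), D.tt_mem s (cn_mem z.2.2 (fun r hr => (h r hr).1.le)
    (p' := fun _ => True) (fun _ _ => trivial) trivial z.1.2.1 z.1.2.2)⟩)
    (((push_cont _).comp ((cn_cont q).comp (by fun_prop : Continuous fun z : I × RR p => ((z.1 : ℝ), z.2.1)))).subtype_mk _) _ _
    (fun w => Subtype.ext (by simp [cn_zero, td])) (fun w => Subtype.ext (congrArg (D.tt s) (cn_one q w.1)))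

def hP (s : S) (h : D.IsLo p q) : Path (D.tW s p) (D.uW fun r hr => (h r hr).2) :=
  mkP (fun z => ⟨D.hh s z.1 z.2.1, D.hh_mem s (fun r hr => (h r hr).2) z.2.2 _⟩)
    (((D.hh_cont s).comp (by fun_prop : Continuous fun z : I × RR p => ((z.1 : ℝ), z.2.1))).subtype_mk _) _ _
    (fun w => Subtype.ext (D.hh_zero s w.2)) (fun w => Subtype.ext (D.hh_one s w.2))

def bet (h : D.IsLo p q) {b : D.Yt} (c : ∀ s, Path b (D.td s q)) (s : S) :
    Path (ContinuousMap.const (RR p) b) (D.uW fun r hr => (h r hr).2) :=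
  (D.constP p (c s)).trans ((D.coneP s h).trans (D.hP s h))

theorem constP_trans {b b' b'' : D.Yt} (c : Path b b') (c' : Path b' b'') :
    D.constP p (c.trans c') = (D.constP p c).trans (D.constP p c') := by
  refine Path.ext (funext fun t => ContinuousMap.ext fun x => ?_)
  show (c.trans c') t = ((D.constP p c).trans (D.constP p c')) t x
  rw [Path.trans_apply, Path.trans_apply]
  split_ifs <;> rfl

theorem constP_hom {b b' : D.Yt} (c c' : Path b b') : (D.constP p c).Homotopic (D.constP p c') := by
  have := D.ne
  refine homotopic_map (fun y : D.Yt => ContinuousMap.const (RR p) y) (by fun_prop) (fun t => rfl) (fun t => rfl)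
    (Y_uniq D.two_le c c')

theorem cone_move {q' : Q} (s : S) (h : D.IsLo p q) (h' : D.IsLo p q') (hq : q' < q) :
    ∃ d : Path (D.td s q) (D.td s q'), (D.coneP s h).Homotopic ((D.constP p d).trans (D.coneP s h')) := by
  have hmem : ∀ t : I, cn q t (dl q') ∈ RR (fun r => r ≤ q) := fun t =>
    cn_mem (dl_mem q' (p := fun r => r ≤ q) hq.le) (fun r hr => hr) (fun r hr => hr) le_rfl t.2.1 t.2.2
  let d : Path (D.td s q) (D.td s q') :=
    { toFun := fun t => ⟨D.tt s (cn q t (dl q')), D.tt_mem s (hmem t)⟩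
      continuous_toFun := ((push_cont _).comp ((cn_cont q).comp
        (by fun_prop : Continuous fun t : I => ((t : ℝ), dl q')))).subtype_mk _
      source' := Subtype.ext (by simp [cn_zero, td])
      target' := Subtype.ext (by simp [cn_one, td]) }
  refine ⟨d, seg_hom fun t w τ h0 h1 => ?_⟩
  have hx1 : cn q t w.1 ∈ RR (fun r => r ≤ q) :=
    cn_mem w.2 (fun r hr => (h r hr).1.le) (fun r hr => (h r hr).1.le) le_rfl t.2.1 t.2.2
  have key : ∀ y : Q → ℝ, y ∈ RR (fun r => r ≤ q) → (∀ r, y r ≠ 0 → r = q ∨ r = q' ∨ w.1 r ≠ 0) →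
      (fun i => (1 - τ) * D.tt s (cn q t w.1) i + τ * D.tt s y i) ∈ YY (Fin (m+1)) Λ := by
    intro y hy hys
    unfold tt
    rw [← push_lin]
    refine D.tt_mem s (mix_mem hx1 hy (fun r r' hr hr' => ?_) h0 h1)
    have hw : r = q ∨ w.1 r ≠ 0 := by
      by_contra hn
      push Not at hn
      exact hr (by rw [cn_other hn.1, hn.2, mul_zero])
    have hrq := RR_p hx1 hr
    have hrq' := RR_p hy hr'
    rcases hw with rfl | hw
    · exact Or.inr hrq'
    · rcases hys r' hr' with rfl | rfl | hw'
      · exact Or.inl hrq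
      · exact Or.inl (h' _ (RR_p w.2 hw)).1.le
      · exact RR_comparable w.2 hw hw'
  rw [Path.trans_apply]
  split_ifs with ht
  · refine key _ (hmem _) fun r hr => ?_
    by_contra hn
    push Not at hn
    exact hr (by rw [cn_other hn.1, dl_ne hn.2.1, mul_zero])
  · have hm : cn q' (2 * t - 1) w.1 ∈ RR (fun r => r ≤ q) := by
      have := t.2.2
      exact cn_mem w.2 (fun r hr => (h' r hr).1.le) (fun r hr => (h r hr).1.le) hq.le (by linarith) (by linarith)
    refine key _ hm fun r hr => ?_
    by_contra hn
    push Not at hn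
    exact hr (by rw [cn_other hn.2.1, hn.2.2, mul_zero])

theorem bet_move {q' : Q} (h : D.IsLo p q) (h' : D.IsLo p q') (hq : q' < q) {b : D.Yt}
    (c : ∀ s, Path b (D.td s q)) (c' : ∀ s, Path b (D.td s q')) (s : S) :
    (D.bet h c s).Homotopic (D.bet h' c' s) := by
  obtain ⟨d, hd⟩ := D.cone_move s h h' hq
  rw [← hm_eq] at hd ⊢
  have hc := hm_eq.2 (D.constP_hom (p := p) ((c s).trans d) (c' s))
  rw [constP_trans, hm_trans] at hc
  rw [hm_trans] at hd
  unfold bet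
  rw [hm_trans, hm_trans, hm_trans, hm_trans, hd, ← hc]
  simp only [CategoryTheory.Category.assoc]
  rfl

theorem bet_pre (h : D.IsLo p q) {b b' : D.Yt} (d : Path b b')
    (c : ∀ s, Path b' (D.td s q)) (s : S) :
    ((D.constP p d).trans (D.bet h c s)).Homotopic (D.bet h (fun s => d.trans (c s)) s) := by
  rw [← hm_eq]
  unfold bet
  rw [constP_trans, hm_trans, hm_trans, hm_trans, hm_trans, hm_trans, hm_trans]
  rw [CategoryTheory.Category.assoc]

theorem bet_apply (h : D.IsLo p q) {b : D.Yt} (c : ∀ s, Path b (D.td s q)) (s : S)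
    {p' : Q → Prop} {q' : Q} (h' : D.IsLo p' q') {b' : D.Yt} (c' : ∀ s, Path b' (D.td s q')) (s' : S)
    (f : C(RR p, D.Yt) → C(RR p', D.Yt))
    (h1 : ∀ t, D.constP p' (c' s') t = f (D.constP p (c s) t))
    (h2 : ∀ t, D.coneP s' h' t = f (D.coneP s h t)) (h3 : ∀ t, D.hP s' h' t = f (D.hP s h t)) (t : I) :
    D.bet h' c' s' t = f (D.bet h c s t) :=
  trans_map f h1 (trans_map f h2 h3) t

end Dat
end SG

end

section
namespace SG
open unitInterval

theorem decomp {Q : Type} [Fintype Q] [PartialOrder Q] {p' pp : Q → Prop} {x : Q → ℝ} (hx : x ∈ RR p') (q : Q)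
    (hpp : ∀ r, x r ≠ 0 → r ≠ q → pp r) (hne : ∃ y, y ∈ RR pp) : ∃ t : I, ∃ ξ : RR pp, x = cn q t ξ.1 := by
  classical
  by_cases h1 : x q = 1
  · obtain ⟨y, hy⟩ := hne
    refine ⟨0, ⟨y, hy⟩, ?_⟩
    rw [show ((0:I):ℝ) = 0 from rfl, cn_zero]
    have hs := hx.2.1
    rw [← Finset.add_sum_erase _ _ (Finset.mem_univ q), h1] at hs
    have hz : ∑ r ∈ Finset.univ.erase q, x r = 0 := by linarith
    rw [Finset.sum_eq_zero_iff_of_nonneg (fun r _ => hx.1 r)] at hz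
    funext r
    by_cases hr : r = q
    · rw [hr, h1, dl_self]
    · rw [dl_ne hr, hz r (by simp [hr])]
  · have hlt : x q < 1 := lt_of_le_of_ne (RR_le_one hx q) h1
    have h0 := hx.1 q
    have ht : 1 - x q ≠ 0 := by intro h; linarith
    refine ⟨⟨1 - x q, by linarith, by linarith⟩, ⟨fun r => if r = q then 0 else x r / (1 - x q), ?_⟩, ?_⟩
    · refine RR_of_supp hx (fun r => ?_) ?_ (fun r hr => ?_) (fun r hr _ => ?_)
      · have := hx.1 r
        have : 0 < 1 - x q := by linarith
        split_ifs <;> positivity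
      · rw [← Finset.add_sum_erase _ _ (Finset.mem_univ q)]
        simp only [if_true, zero_add]
        have hs := hx.2.1
        rw [← Finset.add_sum_erase _ _ (Finset.mem_univ q)] at hs
        rw [Finset.sum_congr rfl (g := fun r => x r / (1 - x q)), ← Finset.sum_div]
        · rw [div_eq_one_iff_eq ht]; linarith
        · intro r hr
          rw [if_neg (Finset.ne_of_mem_erase hr)]
      · intro h; apply hr; simp [h]
      · by_cases h : r = q
        · simp [h] at hr
        · refine hpp r ?_ h
          intro h'; apply hr; simp [h']
    · funext r
      by_cases hr : r = q
      · rw [hr, cn_self _ _ (by simp)]; simp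
      · rw [cn_other hr]
        simp only [hr, if_false]
        field_simp

theorem glue_ext {Q C Λ Z : Type} [Fintype C] [Fintype Λ] [TopologicalSpace Z] [CompactSpace Z]
    (e : Z → (Q → ℝ)) (he : Continuous e) (f : Z → YY C Λ) (hf : Continuous f)
    (h : ∀ z z', e z = e z' → f z = f z') : ∃ E : (Q → ℝ) → (C × Λ → ℝ), ContinuousOn E (Set.range e) ∧
      Set.MapsTo E (Set.range e) (YY C Λ) ∧ ∀ z, E (e z) = (f z).1 := by
  have hfac : Function.FactorsThrough (fun z => (f z).1) e := fun z z' hz => congrArg Subtype.val (h z z' hz)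
  have h1 : ∀ z, Function.extend e (fun z => (f z).1) (fun _ => 0) (e z) = (f z).1 := fun z =>
    hfac.extend_apply _ z
  refine ⟨Function.extend e (fun z => (f z).1) (fun _ => 0), ?_, ?_, h1⟩
  · rw [← Set.image_univ]
    exact contOn_image isCompact_univ he.continuousOn (continuous_subtype_val.comp hf).continuousOn (fun z _ => h1 z)
  · rintro _ ⟨z, rfl⟩
    rw [h1]
    exact (f z).2

namespace Dat
variable {G Q Λ S : Type} [Group G] [Fintype Q] [PartialOrder Q] [MulAction G Q] [Fintype Λ]
    [MulAction G Λ] [Fintype S] [MulAction G S] {m : ℕ} (D : Dat G Q Λ S m)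

theorem neS (D : Dat G Q Λ S m) : Nonempty S := by
  by_contra h
  rw [not_nonempty_iff] at h
  have := D.a_sum
  simp at this

theorem smul_lt (D : Dat G Q Λ S m) (g : G) {q q' : Q} (h : q < q') : g • q < g • q' :=
  lt_of_le_of_ne (D.smul_le g _ _ h.le) fun he => h.ne (smul_left_cancel g he)

theorem Lo_smul {g : G} {q r : Q} (h : D.Lo q r) : D.Lo (g • q) (g • r) :=
  ⟨D.smul_lt g h.1, by rw [D.rank_smul]; exact h.2⟩

theorem Lo_smul_inv {g : G} {q r : Q} (h : D.Lo (g • q) r) : D.Lo q (g⁻¹ • r) := by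
  have := D.Lo_smul (g := g⁻¹) h
  rwa [inv_smul_smul] at this

theorem freeQ (D : Dat G Q Λ S m) (g : G) (q : Q) (h : g • q = q) : g = 1 :=
  D.free g (D.lab q) (by rw [← D.lab_smul, h])

theorem Lo_ne (q : Q) (h : m ≤ D.rank q) : ∃ y, y ∈ RR (D.Lo q) := by
  obtain ⟨q', h1, h2⟩ := D.lower q h
  exact ⟨dl q', dl_mem q' ⟨h1, h2⟩⟩

theorem Lo_zero {q : Q} (x : RR (D.Lo q)) : x.1 q = 0 := x.2.2.2.1 q fun h => lt_irrefl _ h.1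

def act (_ : Dat G Q Λ S m) (g : G) (E : (Q → ℝ) → (Fin (m+1) × Λ → ℝ)) : (Q → ℝ) → (Fin (m+1) × Λ → ℝ) :=
  fun x => gY g (E (gX g⁻¹ x))

theorem act_mul (g h : G) (E : (Q → ℝ) → (Fin (m+1) × Λ → ℝ)) : D.act (g * h) E = D.act g (D.act h E) := by
  funext x
  simp only [act, mul_inv_rev, gX_mul, gY_mul]

theorem act_one (E : (Q → ℝ) → (Fin (m+1) × Λ → ℝ)) : D.act 1 E = E := by
  funext x
  simp only [act, inv_one, gX_one, gY_one]

theorem equi_choice (Φ : Q → ((Q → ℝ) → (Fin (m+1) × Λ → ℝ)) → Prop) (P : Q → Prop)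
    (hP : ∀ (g : G) q, P q → P (g • q)) (hex : ∀ q, P q → ∃ E, Φ q E)
    (hΦ : ∀ (g : G) q E, P q → Φ q E → Φ (g • q) (D.act g E)) :
    ∃ E : Q → ((Q → ℝ) → (Fin (m+1) × Λ → ℝ)), (∀ q, P q → Φ q (E q)) ∧ ∀ (g : G) q, E (g • q) = D.act g (E q) := by
  classical
  let rep : Q → Q := fun q => (Quotient.out (Quotient.mk (MulAction.orbitRel G Q) q))
  have hrep : ∀ q, ∃ g : G, g • rep q = q := by
    intro q
    have : (MulAction.orbitRel G Q).r q (rep q) := (MulAction.orbitRel G Q).symm (Quotient.mk_out (s := MulAction.orbitRel G Q) q)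
    exact this
  choose γ hγ using hrep
  have hrs : ∀ (g : G) q, rep (g • q) = rep q := by
    intro g q
    simp only [rep]
    congr 1
    exact Quotient.sound ⟨g, rfl⟩
  have hex' : ∀ q, ∃ E, P q → Φ q E := by
    intro q
    by_cases h : P q
    · obtain ⟨E, hE⟩ := hex q h; exact ⟨E, fun _ => hE⟩
    · exact ⟨fun _ _ => 0, fun h' => absurd h' h⟩
  choose E0 hE0 using hex'
  refine ⟨fun q => D.act (γ q) (E0 (rep q)), fun q hq => ?_, fun g q => ?_⟩
  · have h1 : P (rep q) := by
      have := hP (γ q)⁻¹ q hq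
      have h3 : (γ q)⁻¹ • q = rep q := inv_smul_eq_iff.2 (hγ q).symm
      rwa [h3] at this
    have := hΦ (γ q) _ _ h1 (hE0 _ h1)
    rwa [hγ q] at this
  · simp only [hrs]
    rw [← act_mul]
    congr 1
    have h1 := hγ (g • q)
    rw [hrs] at h1
    have h2 : ((g * γ q)⁻¹ * γ (g • q)) • rep q = rep q := by
      rw [mul_smul, h1, inv_smul_eq_iff, mul_smul, hγ]
    have := D.freeQ _ _ h2
    exact (inv_mul_eq_one.1 this).symm

def Phi1 (q : Q) (E : (Q → ℝ) → (Fin (m+1) × Λ → ℝ)) : Prop :=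
  ContinuousOn E (RR (fun r => r ≤ q)) ∧ Set.MapsTo E (RR (fun r => r ≤ q)) (YY (Fin (m+1)) Λ) ∧
  (∀ x ∈ RR (D.Lo q), E x = D.uu x) ∧
  ∃ (b : D.Yt) (c : ∀ s, Path b (D.td s q))
    (γ : Path (ContinuousMap.const (RR (D.Lo q)) b) (D.uW fun r hr => (D.isLo_Lo q r hr).2)),
    (∀ t ξ, (γ t ξ).1 = E (cn q t ξ.1)) ∧ PComb D.a (D.bet (D.isLo_Lo q) c) γ

theorem ex_base (q : Q) : ∃ b : D.Yt, Nonempty (∀ s, Path b (D.td s q)) := by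
  obtain ⟨s0⟩ := D.neS
  have := D.ne
  refine ⟨D.td s0 q, ⟨fun s => Classical.choice (Y_conn (by have := D.two_le; omega) _ _)⟩⟩

theorem Phi1_exists (q : Q) (hq : D.rank q = m) : ∃ E, D.Phi1 q E := by
  obtain ⟨b, ⟨c⟩⟩ := D.ex_base q
  obtain ⟨γ, hγ⟩ := PComb.exists D.a D.a_sum (D.bet (D.isLo_Lo q) c)
  have hγc := path_cont γ
  obtain ⟨E, h1, h2, h3⟩ := glue_ext (fun z : I × RR (D.Lo q) => cn q z.1 z.2.1)
    ((cn_cont q).comp (by fun_prop : Continuous fun z : I × RR (D.Lo q) => ((z.1 : ℝ), z.2.1)))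
    (fun z => γ z.1 z.2) hγc (by
      rintro ⟨t, x⟩ ⟨t', x'⟩ h
      obtain ⟨e1, e2⟩ := cn_inj (D.Lo_zero x) (D.Lo_zero x') h
      have e3 : t = t' := Subtype.ext e1
      subst e3
      rcases e2 with e2 | e2
      · have e4 : t = 0 := Subtype.ext e2
        subst e4
        simp
      · have e4 : x = x' := Subtype.ext e2
        rw [e4])
  have hsub : RR (fun r => r ≤ q) ⊆ Set.range (fun z : I × RR (D.Lo q) => cn q z.1 z.2.1) := by
    intro x hx
    obtain ⟨t, ξ, rfl⟩ := decomp hx q (pp := D.Lo q) (fun r hr hne => by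
      have := lt_of_le_of_ne (RR_p hx hr) hne
      exact ⟨this, by have h := D.rank_lt _ _ this; omega⟩) (D.Lo_ne q hq.ge)
    exact ⟨(t, ξ), rfl⟩
  refine ⟨E, h1.mono hsub, fun x hx => h2 (hsub hx), fun x hx => ?_, b, c, γ, fun t ξ => (h3 (t, ξ)).symm, hγ⟩
  have := h3 (1, ⟨x, hx⟩)
  simp only [Set.Icc.coe_one, cn_one] at this
  rw [this]
  simp
  rfl

/-- transport of mapping spaces by a group element -/
def tr (D : Dat G Q Λ S m) (g : G) {p p' : Q → Prop} (h : ∀ r, p' r → p (g⁻¹ • r)) (f : C(RR p, D.Yt)) : C(RR p', D.Yt) :=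
  ContinuousMap.comp ⟨fun y : D.Yt => (⟨gY g y.1, gY_mem g y.2⟩ : D.Yt), ((gY_cont g).comp continuous_subtype_val).subtype_mk _⟩
    (f.comp ⟨fun x => ⟨gX g⁻¹ x.1, gX_mem g⁻¹ D.smul_le h x.2⟩, ((gX_cont g⁻¹).comp continuous_subtype_val).subtype_mk _⟩)

theorem tr_cont (g : G) {p p' : Q → Prop} (h : ∀ r, p' r → p (g⁻¹ • r)) : Continuous (D.tr g h) := by
  unfold tr
  fun_prop

theorem act_contOn (g : G) {q : Q} {E : (Q → ℝ) → (Fin (m+1) × Λ → ℝ)} (h : ContinuousOn E (RR (fun r => r ≤ q))) :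
    ContinuousOn (D.act g E) (RR (fun r => r ≤ g • q)) := by
  refine (gY_cont g).comp_continuousOn (h.comp (gX_cont g⁻¹).continuousOn fun x hx => ?_)
  refine gX_mem g⁻¹ D.smul_le (fun r hr => ?_) hx
  have := D.smul_le g⁻¹ _ _ hr
  rwa [inv_smul_smul] at this

theorem act_mapsTo (g : G) {q : Q} {E : (Q → ℝ) → (Fin (m+1) × Λ → ℝ)}
    (h : Set.MapsTo E (RR (fun r => r ≤ q)) (YY (Fin (m+1)) Λ)) :
    Set.MapsTo (D.act g E) (RR (fun r => r ≤ g • q)) (YY (Fin (m+1)) Λ) := by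
  intro x hx
  refine gY_mem g (h (gX_mem g⁻¹ D.smul_le (fun r hr => ?_) hx))
  have := D.smul_le g⁻¹ _ _ hr
  rwa [inv_smul_smul] at this

theorem act_uu (g : G) : D.act g D.uu = D.uu := by
  funext x
  rw [act, ← D.uu_smul, gX_gX_inv]

theorem act_Lo (g : G) {q : Q} {E : (Q → ℝ) → (Fin (m+1) × Λ → ℝ)} (h : ∀ x ∈ RR (D.Lo q), E x = D.uu x) :
    ∀ x ∈ RR (D.Lo (g • q)), D.act g E x = D.uu x := by
  intro x hx
  rw [act, h _ (gX_mem g⁻¹ D.smul_le (fun r hr => D.Lo_smul_inv hr) hx), ← D.uu_smul, gX_gX_inv]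

theorem Phi1_act (g : G) (q : Q) (E : (Q → ℝ) → (Fin (m+1) × Λ → ℝ)) (h : D.Phi1 q E) :
    D.Phi1 (g • q) (D.act g E) := by
  obtain ⟨h1, h2, h3, b, c, γ, h4, h5⟩ := h
  refine ⟨D.act_contOn g h1, D.act_mapsTo g h2, D.act_Lo g h3, ?_⟩
  let ay : D.Yt → D.Yt := fun y => ⟨gY g y.1, gY_mem g y.2⟩
  have hay : Continuous ay := ((gY_cont g).comp continuous_subtype_val).subtype_mk _
  have hlo : ∀ r, D.Lo (g • q) r → D.Lo q (g⁻¹ • r) := fun r hr => D.Lo_smul_inv hr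
  let c' : ∀ s, Path (ay b) (D.td s (g • q)) := fun s =>
    { toFun := fun t => ay (c (g⁻¹ • s) t)
      continuous_toFun := by fun_prop
      source' := by simp
      target' := by
        simp only [Path.target]
        apply Subtype.ext
        show gY g (D.tt (g⁻¹ • s) (dl q)) = D.tt s (dl (g • q))
        rw [← D.tt_smul, smul_inv_smul, gX_dl] }
  let γ' : Path (ContinuousMap.const (RR (D.Lo (g • q))) (ay b)) (D.uW fun r hr => (D.isLo_Lo (g • q) r hr).2) :=
    { toFun := fun t => D.tr g hlo (γ t)
      continuous_toFun := (D.tr_cont g hlo).comp γ.continuous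
      source' := by rw [γ.source]; rfl
      target' := by
        rw [γ.target]
        refine ContinuousMap.ext fun x => Subtype.ext ?_
        show gY g (D.uu (gX g⁻¹ x.1)) = D.uu x.1
        rw [← D.uu_smul, gX_gX_inv] }
  refine ⟨ay b, c', γ', fun t ξ => ?_, ?_⟩
  · show gY g (γ t _).1 = D.act g E _
    rw [h4, act, gX_cn, inv_smul_smul]
    rfl
  · have h6 := PComb.reindex D.a (MulAction.toPerm g⁻¹) (fun s => D.a_smul g⁻¹ s) h5
    refine PComb.map D.a h6 (D.tr g hlo) (D.tr_cont g hlo) (fun s t => ?_) (fun t => rfl)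
    refine D.bet_apply (D.isLo_Lo q) c (g⁻¹ • s) (D.isLo_Lo (g • q)) c' s (D.tr g hlo) (fun t => rfl) (fun t => ?_)
      (fun t => ?_) t
    · refine ContinuousMap.ext fun x => Subtype.ext ?_
      show D.tt s (cn (g • q) t x.1) = gY g (D.tt (g⁻¹ • s) (cn q t (gX g⁻¹ x.1)))
      rw [← D.tt_smul, smul_inv_smul, gX_cn, gX_gX_inv]
    · refine ContinuousMap.ext fun x => Subtype.ext ?_
      show D.hh s t x.1 = gY g (D.hh (g⁻¹ • s) t (gX g⁻¹ x.1))
      rw [← D.hh_smul, smul_inv_smul, gX_gX_inv]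

end Dat
end SG

end

section
namespace SG
open unitInterval
namespace Dat
variable {G Q Λ S : Type} [Group G] [Fintype Q] [PartialOrder Q] [MulAction G Q] [Fintype Λ]
    [MulAction G Λ] [Fintype S] [MulAction G S] {m : ℕ} (D : Dat G Q Λ S m)

/-- restriction of maps -/
def res (D : Dat G Q Λ S m) {p p' : Q → Prop} (h : ∀ r, p' r → p r) (f : C(RR p, D.Yt)) : C(RR p', D.Yt) :=
  f.comp ⟨fun x => ⟨x.1, RR_mono h x.2⟩, continuous_subtype_val.subtype_mk _⟩

theorem res_cont {p p' : Q → Prop} (h : ∀ r, p' r → p r) : Continuous (D.res h) := by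
  unfold res
  fun_prop

theorem Lo_sub {q q' : Q} (h : q' < q) : ∀ r, D.Lo q' r → D.Lo q r := fun _ hr => ⟨hr.1.trans h, hr.2⟩

def dbl (t : I) : I := Set.projIcc 0 1 zero_le_one (2 * t : ℝ)
theorem dbl_cont : Continuous dbl := by
  unfold dbl
  exact continuous_projIcc.comp (by fun_prop)
theorem dbl_zero : dbl 0 = 0 := Set.projIcc_of_le_left _ (by simp)
theorem dbl_one : dbl 1 = 1 := Set.projIcc_of_right_le _ (by simp)

theorem sq_exists {q q' : Q} (hq : q' < q) {b : D.Yt} (c : ∀ s, Path b (D.td s q))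
    (P0 : Path (ContinuousMap.const (RR (D.Lo q)) b) (D.uW fun r hr => (D.isLo_Lo q r hr).2))
    (hP : PComb D.a (D.bet (D.isLo_Lo q) c) P0) (E : (Q → ℝ) → (Fin (m+1) × Λ → ℝ)) (hE : D.Phi1 q' E) :
    ∃ (F : I × I → C(RR (D.Lo q'), D.Yt)) (d : I → D.Yt), Continuous F ∧
      (∀ t, F (1, t) = D.res (D.Lo_sub hq) (P0 (dbl t))) ∧ (∀ t ξ, F (0, t) ξ = d t) ∧
      (∀ r ξ, (F (r, 1) ξ).1 = E (cn q' r ξ.1)) ∧ (∀ r ξ, F (r, 0) ξ = b) := by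
  obtain ⟨-, -, -, b', c', γ', hγ, hPC⟩ := hE
  have := D.ne
  have hSne := D.neS
  obtain ⟨d⟩ : Nonempty (Path b b') := Y_conn (by have := D.two_le; omega) _ _
  let R0 : Path (ContinuousMap.const (RR (D.Lo q')) b) (D.uW fun r hr => (D.isLo_Lo q' r hr).2) :=
    { toFun := fun t => D.res (D.Lo_sub hq) (P0 t)
      continuous_toFun := (D.res_cont _).comp P0.continuous
      source' := by rw [P0.source]; rfl
      target' := by rw [P0.target]; rfl }
  have e1 : PComb D.a (D.bet (D.isLo_trans (D.isLo_Lo q') hq) c) R0 := by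
    refine PComb.map D.a hP (D.res (D.Lo_sub hq)) (D.res_cont _) (fun s t => ?_) (fun t => rfl)
    exact D.bet_apply (D.isLo_Lo q) c s (D.isLo_trans (D.isLo_Lo q') hq) c s (D.res (D.Lo_sub hq)) (fun t => rfl)
      (fun t => rfl) (fun t => rfl) t
  have e2 : PComb D.a (D.bet (D.isLo_Lo q') (fun s => d.trans (c' s))) R0 :=
    PComb.congr D.a e1 (fun s => D.bet_move _ _ hq _ _ s) (Path.Homotopic.refl _)
  have e3 : PComb D.a (D.bet (D.isLo_Lo q') (fun s => d.trans (c' s))) ((D.constP (D.Lo q') d).trans γ') :=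
    PComb.congr D.a (PComb.precomp D.a (D.constP (D.Lo q') d) hPC) (fun s => D.bet_pre _ d c' s) (Path.Homotopic.refl _)
  have e4 := PComb.unique D.a e2 e3 (D.comm (fun r hr => hr.2) b)
  obtain ⟨F, f1, f2, f3, f4, f5⟩ := square e4
  refine ⟨F, d, f1, fun t => f2 t, fun t ξ => ?_, fun r ξ => ?_, fun r ξ => ?_⟩
  · rw [f3]; rfl
  · rw [f4, hγ]
  · rw [f5]; rfl

def Phi2 (E1 : Q → ((Q → ℝ) → (Fin (m+1) × Λ → ℝ))) (q : Q) (E : (Q → ℝ) → (Fin (m+1) × Λ → ℝ)) : Prop :=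
  ContinuousOn E (RR (fun r => r ≤ q)) ∧ Set.MapsTo E (RR (fun r => r ≤ q)) (YY (Fin (m+1)) Λ) ∧
  (∀ x ∈ RR (D.Lo q), E x = D.uu x) ∧
  ∀ q', q' < q → D.rank q' = m → ∀ x ∈ RR (fun r => r ≤ q'), E x = E1 q' x

theorem decomp1 {q : Q} (hq : D.rank q = m) {x : Q → ℝ} (hx : x ∈ RR (fun r => r ≤ q)) :
    ∃ (t : I) (ξ : RR (D.Lo q)), x = cn q t ξ.1 :=
  decomp hx q (pp := D.Lo q) (fun r hr hne => by
      have := lt_of_le_of_ne (RR_p hx hr) hne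
      exact ⟨this, by have h := D.rank_lt _ _ this; omega⟩) (D.Lo_ne q hq.ge)

theorem Phi2_exists (E1 : Q → ((Q → ℝ) → (Fin (m+1) × Λ → ℝ))) (hE1 : ∀ q, D.rank q = m → D.Phi1 q (E1 q))
    (q : Q) (hq : D.rank q = m + 1) : ∃ E, D.Phi2 E1 q E := by
  obtain ⟨b, ⟨c⟩⟩ := D.ex_base q
  obtain ⟨P0, hP0⟩ := PComb.exists D.a D.a_sum (D.bet (D.isLo_Lo q) c)
  have hsq := fun q' : {q' : Q // q' < q ∧ D.rank q' = m} => D.sq_exists q'.2.1 c P0 hP0 (E1 q'.1) (hE1 _ q'.2.2)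
  choose F d f1 f2 f3 f4 f5 using hsq
  let W := {q' : Q // q' < q ∧ D.rank q' = m}
  let Z := (I × RR (D.Lo q)) ⊕ (Σ q' : W, (I × I) × RR (D.Lo q'.1))
  let e : Z → (Q → ℝ) := Sum.elim (fun z => cn q z.1 z.2.1) (fun z => cn q z.2.1.2 (cn z.1.1 z.2.1.1 z.2.2.1))
  let f : Z → D.Yt := Sum.elim (fun z => P0 (dbl z.1) z.2) (fun z => F z.1 z.2.1 z.2.2)
  have he : Continuous e := by
    refine Continuous.sumElim ?_ ?_
    · exact (cn_cont q).comp (by fun_prop : Continuous fun z : I × RR (D.Lo q) => ((z.1 : ℝ), z.2.1))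
    · refine continuous_sigma fun q' => ?_
      have h1 := (cn_cont q'.1).comp (by fun_prop : Continuous fun z : (I × I) × RR (D.Lo q'.1) => ((z.1.1 : ℝ), z.2.1))
      exact (cn_cont q).comp ((by fun_prop : Continuous fun z : (I × I) × RR (D.Lo q'.1) => (z.1.2 : ℝ)).prodMk h1)
  have hf : Continuous f := by
    refine Continuous.sumElim ?_ ?_
    · have := path_cont P0
      exact this.comp ((dbl_cont.comp continuous_fst).prodMk continuous_snd)
    · refine continuous_sigma fun q' => ?_
      have := f1 q'
      show Continuous fun z : (I × I) × RR (D.Lo q'.1) => F q' z.1 z.2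
      exact ContinuousEval.continuous_eval.comp ((this.comp continuous_fst).prodMk continuous_snd)
  have hneq : ∀ q' : W, q ≠ q'.1 := fun q' h => q'.2.1.ne h.symm
  have z1 : ∀ (q' : W) (r : I) (ξ : RR (D.Lo q'.1)), cn q'.1 r ξ.1 q = 0 := by
    intro q' r ξ
    rw [cn_other (hneq q'), ξ.2.2.2.1 q (fun h => lt_asymm h.1 q'.2.1), mul_zero]
  have z2 : ∀ (q' : W) (q'' : Q) (ξ : RR (D.Lo q'')), ξ.1 q'.1 = 0 := by
    intro q' q'' ξ
    exact ξ.2.2.2.1 _ (fun h => by have := h.2; have := q'.2.2; omega)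
  -- base point values
  have v0 : ∀ (ξ : RR (D.Lo q)), P0 (dbl 0) ξ = b := by intro ξ; rw [dbl_zero, P0.source]; rfl
  have k1 : ∀ (t t' : I) (ξ ξ' : RR (D.Lo q)), cn q t ξ.1 = cn q t' ξ'.1 → P0 (dbl t) ξ = P0 (dbl t') ξ' := by
    intro t t' ξ ξ' h
    obtain ⟨a1, a2⟩ := cn_inj (D.Lo_zero ξ) (D.Lo_zero ξ') h
    have a3 : t = t' := Subtype.ext a1
    subst a3
    rcases a2 with a2 | a2
    · have a4 : t = 0 := Subtype.ext a2
      subst a4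
      rw [v0, v0]
    · rw [Subtype.ext a2]
  have k2 : ∀ (q' : W) (t : I) (r : I) (ξ : RR (D.Lo q'.1)), (t = 0 ∨ r = 1) → ∃ ξ' : RR (D.Lo q),
      cn q t (cn q'.1 r ξ.1) = cn q t ξ'.1 ∧ F q' (r, t) ξ = P0 (dbl t) ξ' := by
    intro q' t r ξ h
    refine ⟨⟨ξ.1, RR_mono (D.Lo_sub q'.2.1) ξ.2⟩, ?_, ?_⟩
    · rcases h with h | h
      · subst h; simp [cn_zero]
      · subst h; simp [cn_one]
    · rcases h with h | h
      · subst h; rw [f5, v0]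
      · subst h; rw [f2]; rfl
  have k3 : ∀ (q' : W) (t t' : I) (r : I) (ξ : RR (D.Lo q'.1)) (ξ' : RR (D.Lo q)),
      cn q t (cn q'.1 r ξ.1) = cn q t' ξ'.1 → F q' (r, t) ξ = P0 (dbl t') ξ' := by
    intro q' t t' r ξ ξ' h
    have : t = 0 ∨ r = 1 := by
      obtain ⟨a1, a2⟩ := cn_inj (z1 q' r ξ) (D.Lo_zero ξ') h
      refine a2.imp (fun a => Subtype.ext a) (fun a => ?_)
      have := congrFun a q'.1
      rw [cn_self _ _ (z2 q' _ ξ), z2 q' _ ξ'] at this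
      refine Subtype.ext ?_
      show (r : ℝ) = 1
      linarith
    obtain ⟨ξ'', b1, b2⟩ := k2 q' t r ξ this
    rw [b2]
    exact k1 _ _ _ _ (b1.symm.trans h)
  have k4 : ∀ (q' q'' : W) (t t' r r' : I) (ξ : RR (D.Lo q'.1)) (ξ' : RR (D.Lo q''.1)),
      cn q t (cn q'.1 r ξ.1) = cn q t' (cn q''.1 r' ξ'.1) → F q' (r, t) ξ = F q'' (r', t') ξ' := by
    intro q' q'' t t' r r' ξ ξ' h
    obtain ⟨a1, a2⟩ := cn_inj (z1 q' r ξ) (z1 q'' r' ξ') h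
    by_cases hred : t = 0 ∨ r = 1
    · obtain ⟨ξ'', b1, b2⟩ := k2 q' t r ξ hred
      rw [b2]
      exact (k3 _ _ _ _ _ _ (h.symm.trans b1)).symm
    · push Not at hred
      have a3 : t = t' := Subtype.ext a1
      subst a3
      have a4 := a2.resolve_left (fun h => hred.1 (Subtype.ext h))
      by_cases hqq : q' = q''
      · subst hqq
        obtain ⟨c1, c2⟩ := cn_inj (z2 q' _ ξ) (z2 q' _ ξ') a4
        have c3 : r = r' := Subtype.ext c1
        subst c3
        rcases c2 with c2 | c2
        · have c4 : r = 0 := Subtype.ext c2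
          subst c4
          rw [f3, f3]
        · rw [Subtype.ext c2]
      · exfalso
        have := congrFun a4 q'.1
        rw [cn_self _ _ (z2 q' _ ξ), cn_other (fun h => hqq (Subtype.ext h)), z2 q' _ ξ', mul_zero] at this
        refine hred.2 (Subtype.ext ?_)
        show (r : ℝ) = 1
        linarith
  obtain ⟨E, h1, h2, h3⟩ := glue_ext e he f hf (by
    rintro (⟨t, ξ⟩ | ⟨q', ⟨r, t⟩, ξ⟩) (⟨t', ξ'⟩ | ⟨q'', ⟨r', t'⟩, ξ'⟩) h
    · exact k1 _ _ _ _ h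
    · exact (k3 _ _ _ _ _ _ h.symm).symm
    · exact k3 _ _ _ _ _ _ h
    · exact k4 _ _ _ _ _ _ _ _ h)
  have hlt : ∀ r, r < q → D.rank r ≤ m := fun r hr => by have := D.rank_lt _ _ hr; omega
  have hsub : RR (fun r => r ≤ q) ⊆ Set.range e := by
    intro x hx
    by_cases hw : ∃ q', q' < q ∧ D.rank q' = m ∧ x q' ≠ 0
    · obtain ⟨q', w1, w2, w3⟩ := hw
      obtain ⟨y0, hy0⟩ := D.Lo_ne q' w2.ge
      obtain ⟨t, y, rfl⟩ := decomp hx q (pp := fun r => r ≤ q') (fun r hr hne => by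
        have hrq := lt_of_le_of_ne (RR_p hx hr) hne
        rcases RR_comparable hx hr w3 with h | h
        · exact h
        · rcases h.eq_or_lt with h | h
          · exact h.ge
          · have h4 := D.rank_lt _ _ h
            have h5 := hlt _ hrq
            omega) ⟨y0, RR_mono (fun r hr => hr.1.le) hy0⟩
      obtain ⟨r, ξ, hξ⟩ := D.decomp1 w2 y.2
      exact ⟨Sum.inr ⟨⟨q', w1, w2⟩, (r, t), ξ⟩, by simp only [e, Sum.elim_inr]; rw [hξ]⟩
    · push Not at hw
      obtain ⟨t, ξ, rfl⟩ := decomp hx q (pp := D.Lo q) (fun r hr hne => by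
        have hrq := lt_of_le_of_ne (RR_p hx hr) hne
        refine ⟨hrq, lt_of_le_of_ne (hlt _ hrq) fun h => hr (hw _ hrq h)⟩) (D.Lo_ne q (by omega))
      exact ⟨Sum.inl (t, ξ), rfl⟩
  refine ⟨E, h1.mono hsub, fun x hx => h2 (hsub hx), fun x hx => ?_, fun q' w1 w2 x hx => ?_⟩
  · have := h3 (Sum.inl (1, ⟨x, hx⟩))
    simp only [e, f, Sum.elim_inl, Set.Icc.coe_one, cn_one, dbl_one, P0.target] at this
    exact this
  · obtain ⟨r, ξ, rfl⟩ := D.decomp1 w2 hx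
    have := h3 (Sum.inr ⟨⟨q', w1, w2⟩, (r, 1), ξ⟩)
    simp only [e, f, Sum.elim_inr, Set.Icc.coe_one, cn_one, f4] at this
    exact this

theorem Phi2_act (E1 : Q → ((Q → ℝ) → (Fin (m+1) × Λ → ℝ))) (hE1 : ∀ (g : G) q, E1 (g • q) = D.act g (E1 q))
    (g : G) (q : Q) (E : (Q → ℝ) → (Fin (m+1) × Λ → ℝ)) (h : D.Phi2 E1 q E) :
    D.Phi2 E1 (g • q) (D.act g E) := by
  obtain ⟨h1, h2, h3, h4⟩ := h
  refine ⟨D.act_contOn g h1, D.act_mapsTo g h2, D.act_Lo g h3, fun q' w1 w2 x hx => ?_⟩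
  have e1 : q' = g • (g⁻¹ • q') := (smul_inv_smul g q').symm
  rw [e1, hE1, act, act]
  congr 1
  refine h4 _ ?_ (by rw [D.rank_smul, w2]) _ (gX_mem (p' := fun r => r ≤ g⁻¹ • q') g⁻¹ D.smul_le (fun r (hr : r ≤ q') => D.smul_le g⁻¹ r q' hr) hx)
  have := D.smul_lt g⁻¹ w1
  rwa [inv_smul_smul] at this

/-- the equivariant map -/
theorem main (D : Dat G Q Λ S m) : ∃ s : (Q → ℝ) → (Fin (m+1) × Λ → ℝ), ContinuousOn s (RR fun _ => True) ∧
    Set.MapsTo s (RR fun _ => True) (YY (Fin (m+1)) Λ) ∧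
    ∀ (g : G), ∀ x ∈ RR (fun _ : Q => True), s (gX g x) = gY g (s x) := by
  classical
  obtain ⟨E1, a1, a2⟩ := D.equi_choice D.Phi1 (fun q => D.rank q = m) (fun g q h => by rw [D.rank_smul, h])
    (fun q h => D.Phi1_exists q h) (fun g q E _ h => D.Phi1_act g q E h)
  obtain ⟨E2, b1, b2⟩ := D.equi_choice (D.Phi2 E1) (fun q => D.rank q = m + 1) (fun g q h => by rw [D.rank_smul, h])
    (fun q h => D.Phi2_exists E1 a1 q h) (fun g q E _ h => D.Phi2_act E1 a2 g q E h)
  let E : Q → ((Q → ℝ) → (Fin (m+1) × Λ → ℝ)) := fun q =>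
    if D.rank q < m then D.uu else if D.rank q = m then E1 q else E2 q
  have E_lo : ∀ q, D.rank q < m → E q = D.uu := fun q h => by simp only [E, h, if_true]
  have E_md : ∀ q, D.rank q = m → E q = E1 q := fun q h => by simp [E, h]
  have E_hi : ∀ q, D.rank q = m + 1 → E q = E2 q := fun q h => by simp [E, h]
  have tri : ∀ q, D.rank q < m ∨ D.rank q = m ∨ D.rank q = m + 1 := fun q => by have := D.rank_le q; omega
  have E_act : ∀ (g : G) q, E (g • q) = D.act g (E q) := by
    intro g q
    rcases tri q with h | h | h
    · rw [E_lo q h, E_lo _ (by rwa [D.rank_smul]), act_uu]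
    · rw [E_md q h, E_md _ (by rwa [D.rank_smul]), a2]
    · rw [E_hi q h, E_hi _ (by rwa [D.rank_smul]), b2]
  have hlow : ∀ q, D.rank q < m → ∀ r, r ≤ q → D.rank r < m := by
    intro q hq r hr
    rcases hr.eq_or_lt with rfl | hr
    · exact hq
    · exact (D.rank_lt _ _ hr).trans hq
  have E_cont : ∀ q, ContinuousOn (E q) (RR fun r => r ≤ q) := by
    intro q
    rcases tri q with h | h | h
    · rw [E_lo q h]; exact (push_cont _).continuousOn
    · rw [E_md q h]; exact (a1 q h).1
    · rw [E_hi q h]; exact (b1 q h).1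
  have E_mem : ∀ q, Set.MapsTo (E q) (RR fun r => r ≤ q) (YY (Fin (m+1)) Λ) := by
    intro q
    rcases tri q with h | h | h
    · rw [E_lo q h]; exact fun x hx => D.uu_mem (hlow q h) hx
    · rw [E_md q h]; exact (a1 q h).2.1
    · rw [E_hi q h]; exact (b1 q h).2.1
  have E_compat : ∀ q q', q' ≤ q → ∀ x ∈ RR (fun r => r ≤ q'), E q x = E q' x := by
    intro q q' hq x hx
    rcases hq.eq_or_lt with rfl | hq
    · rfl
    have hr := D.rank_lt _ _ hq
    rcases tri q' with h' | h' | h'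
    · have hxL : x ∈ RR (D.Lo q) := RR_mono (fun r hr => ⟨hr.trans_lt hq, hlow _ h' r hr⟩) hx
      rw [E_lo q' h']
      rcases tri q with h | h | h
      · rw [E_lo q h]
      · rw [E_md q h]; exact (a1 q h).2.2.1 x hxL
      · rw [E_hi q h]; exact (b1 q h).2.2.1 x hxL
    · rcases tri q with h | h | h
      · omega
      · omega
      · rw [E_hi q h, E_md q' h']
        exact (b1 q h).2.2.2 q' hq h' x hx
    · have := D.rank_le q
      omega
  have hcover : ∀ x ∈ RR (fun _ : Q => True), ∃ q, x q ≠ 0 ∧ x ∈ RR (fun r => r ≤ q) := by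
    intro x hx
    have hne : (Finset.univ.filter fun q => x q ≠ 0).Nonempty := by
      by_contra hn
      rw [Finset.not_nonempty_iff_eq_empty, Finset.filter_eq_empty_iff] at hn
      have h1 := hx.2.1
      rw [Finset.sum_eq_zero (fun q hq => by simpa using hn hq)] at h1
      norm_num at h1
    obtain ⟨q, hq, hmax⟩ := Finset.exists_max_image _ D.rank hne
    simp only [Finset.mem_filter, Finset.mem_univ, true_and] at hq hmax
    refine ⟨q, hq, RR_of_supp hx hx.1 hx.2.1 (fun r hr => hr) (fun r hr _ => ?_)⟩
    rcases RR_comparable hx hr hq with h | h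
    · exact h
    · rcases h.eq_or_lt with h | h
      · exact h.ge
      · have := D.rank_lt _ _ h
        have := hmax r hr
        omega
  have hall : ∀ x ∈ RR (fun _ : Q => True), ∀ q q', x ∈ RR (fun r => r ≤ q) → x ∈ RR (fun r => r ≤ q') → E q x = E q' x := by
    intro x hx q q' hq hq'
    obtain ⟨q0, h1, h2⟩ := hcover x hx
    rw [E_compat q q0 (RR_p hq h1) x h2, E_compat q' q0 (RR_p hq' h1) x h2]
  rcases isEmpty_or_nonempty Q with hQ | hQ
  · have hemp : ∀ x, x ∉ RR (fun _ : Q => True) := by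
      intro x hx
      have h1 := hx.2.1
      simp at h1
    exact ⟨fun _ _ => 0, fun x hx => absurd hx (hemp x), fun x hx => absurd hx (hemp x), fun g x hx => absurd hx (hemp x)⟩
  choose! top t1 t2 using hcover
  have key : ∀ x ∈ RR (fun _ : Q => True), ∀ q, x ∈ RR (fun r => r ≤ q) → E (top x) x = E q x :=
    fun x hx q hq => hall x hx _ _ (t2 x hx) hq
  have hmono : ∀ q, RR (fun r => r ≤ q) ⊆ RR (fun _ : Q => True) := fun q x hx => RR_mono (fun _ _ => trivial) hx
  refine ⟨fun x => E (top x) x, ?_, fun x hx => E_mem _ (t2 x hx), fun g x hx => ?_⟩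
  · have hU : (RR fun _ : Q => True) = ⋃ q, RR (fun r => r ≤ q) := by
      ext x
      simp only [Set.mem_iUnion]
      exact ⟨fun hx => ⟨_, t2 x hx⟩, fun ⟨q, hq⟩ => hmono q hq⟩
    rw [hU]
    refine LocallyFinite.continuousOn_iUnion (locallyFinite_of_finite _) (fun q => RR_closed _) fun q => ?_
    exact (E_cont q).congr fun x hx => key x (hmono q hx) q hx
  · have hgx : gX g x ∈ RR (fun r => r ≤ g • top x) := by
      refine gX_mem g D.smul_le (fun r hr => ?_) (t2 x hx)
      exact D.smul_le g _ _ hr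
    show E (top (gX g x)) (gX g x) = gY g (E (top x) x)
    rw [key _ (hmono _ hgx) _ hgx, E_act, act, gX_inv_gX]

end Dat
end SG

end

section
namespace SG

theorem perm_cont (n : ℕ) (σ : Equiv.Perm (Fin n)) : Continuous (configPermMap n σ) := by
  unfold configPermMap
  refine Continuous.subtype_mk (continuous_pi fun i => ?_) _
  exact (continuous_apply _).comp continuous_subtype_val

theorem proj_eq {n : ℕ} {x y : ConfigSpace n} (h : configProj n x = configProj n y) :
    ∃ σ : Equiv.Perm (Fin n), configPermMap n σ x = y := Quotient.exact h

theorem proj_perm {n : ℕ} (σ : Equiv.Perm (Fin n)) (x : ConfigSpace n) :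
    configProj n (configPermMap n σ x) = configProj n x := (Quotient.sound (s := configSetoid n) ⟨σ, rfl⟩ : _ = _).symm

theorem proj_cont (n : ℕ) : Continuous (configProj n) := continuous_quot_mk

theorem proj_isOpen {n : ℕ} {U : Set (ConfigQuotient n)} (h : IsOpen (configProj n ⁻¹' U)) : IsOpen U :=
  (isQuotientMap_quot_mk.isOpen_preimage).1 h

theorem proj_open {n : ℕ} {A : Set (ConfigSpace n)} (hA : IsOpen A) : IsOpen (configProj n '' A) := by
  apply proj_isOpen
  have : configProj n ⁻¹' (configProj n '' A) = ⋃ σ : Equiv.Perm (Fin n), (configPermMap n σ) ⁻¹' A := by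
    ext x
    simp only [Set.mem_preimage, Set.mem_image, Set.mem_iUnion]
    constructor
    · rintro ⟨y, hy, h⟩
      obtain ⟨σ, rfl⟩ := proj_eq h.symm
      exact ⟨σ, hy⟩
    · rintro ⟨σ, h⟩
      exact ⟨_, h, proj_perm σ x⟩
  rw [this]
  exact isOpen_iUnion fun σ => hA.preimage (perm_cont n σ)

theorem genus_of_map {n t : ℕ} (φ : ConfigSpace n → (Fin t × Strat.Lab n → ℝ)) (hc : Continuous φ)
    (hm : ∀ f, φ f ∈ YY (Fin t) (Strat.Lab n))
    (he : ∀ (g : Equiv.Perm (Fin n)) f, φ (configPermMap n g f) = gY g (φ f)) : SchwartzGenusLE n t := by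
  classical
  let U : Fin t → Set (ConfigQuotient n) := fun c => {u | ∃ f, configProj n f = u ∧ ∃ l, φ f (c, l) ≠ 0}
  have hmove : ∀ (g : Equiv.Perm (Fin n)) f c l, φ (configPermMap n g f) (c, g • l) = φ f (c, l) := by
    intro g f c l
    rw [he]
    simp [gY]
  have hU : ∀ c f, configProj n f ∈ U c ↔ ∃ l, φ f (c, l) ≠ 0 := by
    intro c f
    constructor
    · rintro ⟨f', h1, l, h2⟩
      obtain ⟨σ, rfl⟩ := proj_eq h1
      exact ⟨σ • l, by rwa [hmove]⟩
    · exact fun h => ⟨f, rfl, h⟩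
  have hopen : ∀ c l, IsOpen {f | φ f (c, l) ≠ 0} := fun c l =>
    isOpen_ne_fun ((continuous_apply _).comp hc) continuous_const
  have huniq : ∀ f c l l', φ f (c, l) ≠ 0 → φ f (c, l') ≠ 0 → l = l' := by
    intro f c l l' h h'
    by_contra hne
    exact mul_ne_zero h h' ((hm f).2.2 c l l' hne)
  refine ⟨U, fun c => ?_, ?_, fun c => ?_⟩
  · apply proj_isOpen
    have : configProj n ⁻¹' U c = ⋃ l, {f | φ f (c, l) ≠ 0} := by
      ext f
      rw [Set.mem_preimage, hU, Set.mem_iUnion]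
      rfl
    rw [this]
    exact isOpen_iUnion fun l => hopen c l
  · refine Set.eq_univ_of_forall fun u => ?_
    obtain ⟨f, rfl⟩ := Quotient.exists_rep u
    have h1 : ∑ v, φ f v ≠ 0 := by rw [(hm f).2.1]; norm_num
    obtain ⟨⟨c, l⟩, -, h2⟩ := Finset.exists_ne_zero_of_sum_ne_zero h1
    exact Set.mem_iUnion.2 ⟨c, (hU c f).2 ⟨l, h2⟩⟩
  · letI τ : TopologicalSpace (Strat.Lab n) := ⊥
    haveI hd : DiscreteTopology (Strat.Lab n) := ⟨rfl⟩
    refine ⟨Strat.Lab n, τ, hd, ?_⟩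
    have hl : ∀ x : {x : ConfigSpace n // configProj n x ∈ U c}, ∃ l, φ x.1 (c, l) ≠ 0 := fun x => (hU c x.1).1 x.2
    choose lb hlb using hl
    let e : {x : ConfigSpace n // configProj n x ∈ U c} → ↥(U c) × Strat.Lab n := fun x => (⟨configProj n x.1, x.2⟩, lb x)
    have hlbset : ∀ l, {x | lb x = l} = (fun x : {x : ConfigSpace n // configProj n x ∈ U c} => x.1) ⁻¹' {f | φ f (c, l) ≠ 0} := by
      intro l
      ext x
      constructor
      · rintro rfl; exact hlb x
      · intro h; exact huniq _ _ _ _ (hlb x) h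
    have hlbopen : ∀ l, IsOpen {x | lb x = l} := fun l => by
      rw [hlbset]; exact (hopen c l).preimage continuous_subtype_val
    have e_cont : Continuous e := by
      refine Continuous.prodMk (((proj_cont n).comp continuous_subtype_val).subtype_mk _) ?_
      rw [continuous_discrete_rng]
      exact fun l => hlbopen l
    have e_inj : Function.Injective e := by
      intro x y h
      have h1 : configProj n x.1 = configProj n y.1 := congrArg (fun z => z.1.1) h
      have h2 : lb x = lb y := congrArg (fun z => z.2) h
      obtain ⟨σ, hσ⟩ := proj_eq h1
      have h3 : φ y.1 (c, σ • lb x) ≠ 0 := by rw [← hσ, hmove]; exact hlb x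
      have h4 : σ • lb x = lb x := by
        rw [h2]; rw [h2] at h3; exact huniq _ _ _ _ h3 (hlb y)
      have h5 := Strat.Lab.free _ _ h4
      apply Subtype.ext
      rw [← hσ, h5]
      exact Subtype.ext (by funext i; simp [configPermMap])
    have e_surj : Function.Surjective e := by
      rintro ⟨⟨u, hu⟩, l⟩
      obtain ⟨f, rfl⟩ := Quotient.exists_rep u
      obtain ⟨l0, h0⟩ := (hU c f).1 hu
      obtain ⟨σ, rfl⟩ := Strat.Lab.transitive l0 l
      have hp : configProj n (configPermMap n σ f) = configProj n f := proj_perm σ f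
      refine ⟨⟨configPermMap n σ f, by rw [hp]; exact hu⟩, Prod.ext (Subtype.ext hp) ?_⟩
      refine huniq _ _ _ _ (hlb _) ?_
      rw [hmove]; exact h0
    have e_open : IsOpenMap e := by
      intro V hV
      have hAo : ∀ l, IsOpen (Subtype.val '' (V ∩ {x | lb x = l}) : Set (ConfigSpace n)) := by
        intro l
        have hop : IsOpen {x : ConfigSpace n | configProj n x ∈ U c} := by
          have : {x : ConfigSpace n | configProj n x ∈ U c} = ⋃ l, {f | φ f (c, l) ≠ 0} := by
            ext f
            rw [Set.mem_iUnion]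
            exact hU c f
          rw [this]
          exact isOpen_iUnion fun l => hopen c l
        exact hop.isOpenMap_subtype_val _ (hV.inter (hlbopen l))
      have : e '' V = ⋃ l, ((Subtype.val ⁻¹' (configProj n '' (Subtype.val '' (V ∩ {x | lb x = l}))) : Set ↥(U c)) ×ˢ {l}) := by
        ext ⟨u, l⟩
        simp only [Set.mem_iUnion, Set.mem_prod, Set.mem_singleton_iff, Set.mem_preimage]
        constructor
        · rintro ⟨x, hx, h⟩
          have h1 : configProj n x.1 = u.1 := congrArg (fun z => z.1.1) h
          have h2 : lb x = l := congrArg (fun z => z.2) h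
          exact ⟨l, ⟨x.1, ⟨x, ⟨hx, h2⟩, rfl⟩, h1⟩, rfl⟩
        · rintro ⟨_, ⟨_, ⟨x, ⟨hx, h2⟩, rfl⟩, h1⟩, rfl⟩
          exact ⟨x, hx, Prod.ext (Subtype.ext h1) h2⟩
      rw [this]
      refine isOpen_iUnion fun l => IsOpen.prod ?_ (isOpen_discrete _)
      exact (proj_open (hAo l)).preimage continuous_subtype_val
    exact ⟨(Equiv.ofBijective e ⟨e_inj, e_surj⟩).toHomeomorphOfContinuousOpen e_cont e_open, fun x => rfl⟩

instance colAct (n : ℕ) : MulAction (Equiv.Perm (Fin n)) (Col n) where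
  smul g s := ⟨s.1 ∘ ⇑g⁻¹, by
    obtain ⟨i, j, h⟩ := s.2
    exact ⟨g i, g j, by simpa using h⟩⟩
  one_smul s := Subtype.ext (by funext i; show s.1 _ = _; simp)
  mul_smul g h s := Subtype.ext (by funext i; show s.1 ((g * h)⁻¹ i) = s.1 (h⁻¹ (g⁻¹ i)); simp [mul_inv_rev])

theorem four_le {n : ℕ} (hn : 2 ≤ n) (h : ∀ p k : ℕ, p.Prime → 1 ≤ k → n ≠ p ^ k) : 4 ≤ n := by
  by_contra hlt
  have : n = 2 ∨ n = 3 := by omega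
  rcases this with rfl | rfl
  · exact h 2 1 Nat.prime_two le_rfl (by norm_num)
  · exact h 3 1 Nat.prime_three le_rfl (by norm_num)

def theDat (k : ℕ) (hk : 2 ≤ k) (w : ℕ → ℤ) (hw : ∑ s : Col (k+2), w (colCard s.1) = 1) :
    Dat (Equiv.Perm (Fin (k+2))) (Strat (k+2)) (Strat.Lab (k+2)) (Col (k+2)) k where
  two_le := hk
  ne := ⟨(1 : Equiv.Perm (Fin (k+2)))⟩
  rank := Strat.rk
  rank_lt := fun q q' h => Strat.rk_lt h
  rank_le := fun q => Strat.rk_le (by omega) q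
  lab := Strat.slab Strat.zc
  c := fun s q => Strat.cc s.1 q
  c_le := fun s q => Strat.cc_le s.1 s.2 q
  c_le_rank := fun s q => Strat.cc_le_rank s.1 q
  sl := fun s q => Strat.slab s.1 q
  sl_eq := fun s q q' h hc => Strat.slab_eq s.1 h hc
  free := Strat.Lab.free
  smul_le := fun g q q' h => Strat.smul_le g h
  rank_smul := fun g q => Strat.cc_smul g Strat.zc q
  lab_smul := fun g q => Strat.slab_smul g Strat.zc q
  c_smul := fun g s q => Strat.cc_smul g s.1 q
  sl_smul := fun g s q => Strat.slab_smul g s.1 q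
  a := fun s => w (colCard s.1)
  a_smul := fun g s => congrArg w (colCard_comp s.1 g⁻¹)
  a_sum := hw
  lower := fun q h => by
    obtain ⟨q', h1, h2⟩ := Strat.exists_lower q (by omega)
    exact ⟨q', h1, by omega⟩

theorem genus_main (n : ℕ) (hn : 2 ≤ n) (h : ∀ p k : ℕ, p.Prime → 1 ≤ k → n ≠ p ^ k) :
    SchwartzGenusLE n (n - 1) := by
  have h4 := four_le hn h
  obtain ⟨w, hw⟩ := exists_weights n hn h
  obtain ⟨k, rfl⟩ : ∃ k, n = k + 2 := ⟨n - 2, by omega⟩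
  obtain ⟨s, s1, s2, s3⟩ := (theDat k (by omega) w hw).main
  show SchwartzGenusLE (k + 2) (k + 1)
  refine genus_of_map (fun f => s (Strat.lam f)) ?_ (fun f => s2 (Strat.lam_mem f)) (fun g f => ?_)
  · exact s1.comp_continuous Strat.lam_cont Strat.lam_mem
  · rw [← s3 g _ (Strat.lam_mem f)]
    congr 1
    funext q
    have := Strat.lam_smul g f (g⁻¹ • q)
    rw [smul_inv_smul] at this
    exact this

end SG

end

/-- **Statement 1.** If `n ≥ 2` is neither a prime power nor twice a prime power, then the
Schwartz genus of `q_n : F(ℂ,n) → F(ℂ,n)/Σ_n` is less than `n`: the base admits a cover by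
`n - 1` open sets over each of which the covering is trivial. -/
theorem schwartzGenus_lt (n : ℕ) (hn : 2 ≤ n)
    (h : ∀ p k : ℕ, p.Prime → 1 ≤ k → n ≠ p ^ k ∧ n ≠ 2 * p ^ k) :
    SchwartzGenusLE n (n - 1) := by
  exact SG.genus_main n hn fun p k hp hk => (h p k hp hk).1
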